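/- arXiv:math/0501126 — 3 statements merged into one kernel-verified Lean document; each statement's English description precedes it below -/
import Mathlib

section
/- There exist x₁ ≥ 0 and λ₁ ≥ 0, depending only on V, and a jointly smooth function f̃₄ : ℝ × ℝ → ℂ² such that: (i) for every λ ∈ ℝ, f̃₄(·,λ) is a solution of ℋf = (1+λ²)f; (ii) for all integers k, ℓ ≥ 0 there is C_{k,ℓ} with |∂_λ^ℓ ∂ₓ^k (e^(−μx) f̃₄(x,λ) − (0,1))| ≤ C_{k,ℓ} μ^(−1+k) (1+x)^ℓ e^(−γx) for all λ ∈ ℝ and all x ≥ x₁ (so in particular f̃₄(x,λ) = e^(μx)(0,1) + O((1+|λ|)^(−1) e^((μ−γ)x)) as x → ∞); and (iii) the same bounds hold for all x ≥ 0 whenever |λ| ≥ λ₁. -/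
noncomputable section

open Real MeasureTheory

/-- The matrix Schrödinger operator `ℋ` acting on `f = (f₁, f₂) : ℝ → ℂ²`:
`ℋf = (−f₁'' + f₁ + V₁f₁ + V₂f₂, f₂'' − f₂ − V₂f₁ − V₁f₂)`. -/
def matH (V₁ V₂ : ℝ → ℝ) (f : ℝ → ℂ × ℂ) (x : ℝ) : ℂ × ℂ :=
  (-(iteratedDeriv 2 (fun y => (f y).1) x) + (f x).1
      + (V₁ x : ℂ) * (f x).1 + (V₂ x : ℂ) * (f x).2,
    iteratedDeriv 2 (fun y => (f y).2) x - (f x).2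
      - (V₂ x : ℂ) * (f x).1 - (V₁ x : ℂ) * (f x).2)

/-- `f` is a (classical, twice continuously differentiable) solution of `ℋf = z f`. -/
def IsSolution (V₁ V₂ : ℝ → ℝ) (z : ℂ) (f : ℝ → ℂ × ℂ) : Prop :=
  ContDiff ℝ 2 f ∧ ∀ x : ℝ, matH V₁ V₂ f x = z • f x

/-- The potentials `V₁, V₂` are smooth, even, and exponentially decaying with rate `γ ∈ (0,1)`,
together with all derivatives. -/
def PotentialHyp (γ : ℝ) (V₁ V₂ : ℝ → ℝ) : Prop :=
  0 < γ ∧ γ < 1 ∧ ContDiff ℝ (⊤ : ℕ∞) V₁ ∧ ContDiff ℝ (⊤ : ℕ∞) V₂ ∧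
    (∀ x, V₁ (-x) = V₁ x) ∧ (∀ x, V₂ (-x) = V₂ x) ∧
    ∀ k : ℕ, ∃ C : ℝ, ∀ x : ℝ,
      |iteratedDeriv k V₁ x| + |iteratedDeriv k V₂ x| ≤ C * Real.exp (-γ * |x|)

/-- `μ(λ) = √(λ² + 2)`. -/
def mu (lam : ℝ) : ℝ := Real.sqrt (lam ^ 2 + 2)

namespace S6
open Filter Topology Set

/-! ### Elementary facts on `mu` -/

lemma mu_sq (t : ℝ) : mu t ^ 2 = t ^ 2 + 2 := by
  unfold mu; rw [Real.sq_sqrt]; positivity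

lemma mu_nonneg (t : ℝ) : 0 ≤ mu t := Real.sqrt_nonneg _

lemma mu_ge (t : ℝ) : 4 / 3 ≤ mu t := by
  unfold mu; apply Real.le_sqrt_of_sq_le; nlinarith [sq_nonneg t]

lemma mu_pos (t : ℝ) : 0 < mu t := by linarith [mu_ge t]

lemma one_le_mu (t : ℝ) : 1 ≤ mu t := by linarith [mu_ge t]

lemma abs_le_mu (t : ℝ) : |t| ≤ mu t := by
  unfold mu; apply Real.abs_le_sqrt; linarith

lemma mu_contDiff {n : WithTop ℕ∞} : ContDiff ℝ n mu := by
  unfold mu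
  apply ContDiff.sqrt
  · fun_prop
  · intro x; positivity

lemma mu_hasDerivAt (t : ℝ) : HasDerivAt mu (t * (mu t)⁻¹) t := by
  have h : HasDerivAt (fun s : ℝ => s ^ 2 + 2) (2 * t) t := by
    simpa using (hasDerivAt_pow 2 t).add_const (2 : ℝ)
  have h2 := h.sqrt (by positivity)
  have e : t * (mu t)⁻¹ = 2 * t / (2 * √(t ^ 2 + 2)) := by
    rw [mul_div_mul_left _ _ (two_ne_zero), div_eq_mul_inv]; rfl
  rw [e]; exact h2

/-! ### Symbol classes -/

variable {E F G : Type*} [NormedAddCommGroup E] [NormedSpace ℝ E]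
  [NormedAddCommGroup F] [NormedSpace ℝ F] [NormedAddCommGroup G] [NormedSpace ℝ G]

/-- `f` is `C^n` with derivatives up to order `n` bounded by multiples of `mu ^ m`. -/
def SymN (m : ℤ) (n : ℕ) (f : ℝ → E) : Prop :=
  ContDiff ℝ n f ∧ ∀ l ≤ n, ∃ C : ℝ, 0 ≤ C ∧ ∀ t, ‖iteratedDeriv l f t‖ ≤ C * mu t ^ m

/-- Symbols of order `m`. -/
def Sym (m : ℤ) (f : ℝ → E) : Prop := ∀ n, SymN m n f

lemma SymN.bound {m : ℤ} {n : ℕ} {f : ℝ → E} (h : SymN m n f) :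
    ∃ C : ℝ, 0 ≤ C ∧ ∀ t, ‖f t‖ ≤ C * mu t ^ m := by
  simpa using h.2 0 (Nat.zero_le _)

lemma Sym.bound {m : ℤ} {f : ℝ → E} (h : Sym m f) :
    ∃ C : ℝ, 0 ≤ C ∧ ∀ t, ‖f t‖ ≤ C * mu t ^ m := (h 0).bound

lemma Sym.contDiff {m : ℤ} {f : ℝ → E} (h : Sym m f) : ContDiff ℝ (⊤ : ℕ∞) f :=
  contDiff_infty.2 fun n => (h n).1

lemma Sym.hasDerivAt {m : ℤ} {f : ℝ → E} (h : Sym m f) (t : ℝ) :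
    HasDerivAt f (deriv f t) t :=
  (((h 1).1.differentiable (by norm_num)) t).hasDerivAt

lemma SymN.zero {m : ℤ} {f : ℝ → E} (hc : Continuous f)
    (hb : ∃ C : ℝ, 0 ≤ C ∧ ∀ t, ‖f t‖ ≤ C * mu t ^ m) : SymN m 0 f := by
  refine ⟨by simpa using (contDiff_zero (𝕜 := ℝ)).2 hc, ?_⟩
  intro l hl
  obtain rfl : l = 0 := by omega
  simpa using hb

lemma SymN.succ {m : ℤ} {n : ℕ} {f f' : ℝ → E}
    (hb : ∃ C : ℝ, 0 ≤ C ∧ ∀ t, ‖f t‖ ≤ C * mu t ^ m)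
    (hd : ∀ t, HasDerivAt f (f' t) t) (hf' : SymN m n f') : SymN m (n + 1) f := by
  have hdf : deriv f = f' := funext fun t => (hd t).deriv
  refine ⟨?_, ?_⟩
  · rw [Nat.cast_succ, contDiff_succ_iff_deriv]
    refine ⟨fun t => (hd t).differentiableAt, by simp, ?_⟩
    rw [hdf]; exact hf'.1
  · intro l hl
    rcases l with _ | l
    · simpa using hb
    · rw [iteratedDeriv_succ', hdf]
      exact hf'.2 l (by omega)

lemma Sym.deriv {m : ℤ} {f : ℝ → E} (h : Sym m f) : Sym m (deriv f) := by
  intro n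
  refine ⟨?_, ?_⟩
  · have := (h (n + 1)).1
    rw [Nat.cast_succ, contDiff_succ_iff_deriv] at this
    exact this.2.2
  · intro l hl
    have := (h (n + 1)).2 (l + 1) (by omega)
    rwa [iteratedDeriv_succ'] at this

lemma SymN.mono {m m' : ℤ} {n : ℕ} {f : ℝ → E} (h : SymN m n f) (hm : m ≤ m') :
    SymN m' n f := by
  refine ⟨h.1, fun l hl => ?_⟩
  obtain ⟨C, hC, hb⟩ := h.2 l hl
  refine ⟨C, hC, fun t => (hb t).trans ?_⟩
  gcongr
  exact one_le_mu t

lemma Sym.mono {m m' : ℤ} {f : ℝ → E} (h : Sym m f) (hm : m ≤ m') : Sym m' f :=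
  fun n => (h n).mono hm

lemma SymN.bilin {m m' : ℤ} {n : ℕ} (B : E →L[ℝ] F →L[ℝ] G) {f : ℝ → E} {g : ℝ → F}
    (hf : SymN m n f) (hg : SymN m' n g) : SymN (m + m') n (fun t => B (f t) (g t)) := by
  refine ⟨?_, fun l hl => ?_⟩
  · exact (B.isBoundedBilinearMap.contDiff).comp (hf.1.prodMk hg.1)
  · choose! C hC hCb using hf.2
    choose! C' hC' hCb' using hg.2
    refine ⟨‖B‖ * ∑ i ∈ Finset.range (l + 1), (l.choose i : ℝ) * C i * C' (l - i), ?_, ?_⟩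
    · refine mul_nonneg (ContinuousLinearMap.opNorm_nonneg B) ?_
      apply Finset.sum_nonneg
      intro i hi
      have := Finset.mem_range.1 hi
      have h1 := hC i (by omega)
      have h2 := hC' (l - i) (by omega)
      positivity
    · intro t
      rw [← norm_iteratedFDeriv_eq_norm_iteratedDeriv]
      refine (B.norm_iteratedFDeriv_le_of_bilinear hf.1 hg.1 t
        (n := l) (by exact_mod_cast hl)).trans ?_
      rw [mul_assoc, Finset.sum_mul]
      refine mul_le_mul_of_nonneg_left ?_ (ContinuousLinearMap.opNorm_nonneg B)
      apply Finset.sum_le_sum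
      intro i hi
      have := Finset.mem_range.1 hi
      have h1 := hCb i (by omega) t
      have h2 := hCb' (l - i) (by omega) t
      rw [norm_iteratedFDeriv_eq_norm_iteratedDeriv, norm_iteratedFDeriv_eq_norm_iteratedDeriv,
        zpow_add₀ (mu_pos t).ne']
      have := hC i (by omega)
      have := mu_pos t
      calc (l.choose i : ℝ) * ‖iteratedDeriv i f t‖ * ‖iteratedDeriv (l - i) g t‖
          ≤ (l.choose i : ℝ) * (C i * mu t ^ m) * (C' (l - i) * mu t ^ m') := by gcongr
        _ = _ := by ring

lemma Sym.bilin {m m' : ℤ} (B : E →L[ℝ] F →L[ℝ] G) {f : ℝ → E} {g : ℝ → F}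
    (hf : Sym m f) (hg : Sym m' g) : Sym (m + m') (fun t => B (f t) (g t)) :=
  fun n => (hf n).bilin B (hg n)

lemma SymN.add {m : ℤ} {n : ℕ} {f g : ℝ → E} (hf : SymN m n f) (hg : SymN m n g) :
    SymN m n (fun t => f t + g t) := by
  refine ⟨hf.1.add hg.1, fun l hl => ?_⟩
  obtain ⟨C, hC, hb⟩ := hf.2 l hl
  obtain ⟨C', hC', hb'⟩ := hg.2 l hl
  refine ⟨C + C', by positivity, fun t => ?_⟩
  rw [iteratedDeriv_fun_add (hf.1.contDiffAt.of_le (by exact_mod_cast hl))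
    (hg.1.contDiffAt.of_le (by exact_mod_cast hl)), add_mul]
  exact (norm_add_le _ _).trans (add_le_add (hb t) (hb' t))

lemma Sym.add {m : ℤ} {f g : ℝ → E} (hf : Sym m f) (hg : Sym m g) :
    Sym m (fun t => f t + g t) := fun n => (hf n).add (hg n)

lemma Sym.const (e : E) : Sym 0 (fun _ => e) := by
  intro n
  refine ⟨contDiff_const, fun l _ => ⟨‖e‖, norm_nonneg _, fun t => ?_⟩⟩
  rw [iteratedDeriv_const]
  split_ifs <;> simp

lemma Sym.clm {m : ℤ} (L : E →L[ℝ] F) {f : ℝ → E} (hf : Sym m f) :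
    Sym m (fun t => L (f t)) := by
  have := Sym.bilin (ContinuousLinearMap.id ℝ (E →L[ℝ] F)) (Sym.const L) hf
  simpa using this

lemma Sym.neg {m : ℤ} {f : ℝ → E} (hf : Sym m f) : Sym m (fun t => - f t) :=
  hf.clm (-ContinuousLinearMap.id ℝ E)

lemma Sym.sub {m : ℤ} {f g : ℝ → E} (hf : Sym m f) (hg : Sym m g) :
    Sym m (fun t => f t - g t) := by
  simpa [sub_eq_add_neg] using hf.add hg.neg

lemma Sym.prodMk {m : ℤ} {f : ℝ → E} {g : ℝ → F} (hf : Sym m f) (hg : Sym m g) :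
    Sym m (fun t => (f t, g t)) := by
  have := (hf.clm (ContinuousLinearMap.inl ℝ E F)).add (hg.clm (ContinuousLinearMap.inr ℝ E F))
  simpa using this

lemma Sym.smul {m m' : ℤ} {f : ℝ → ℝ} {g : ℝ → E} (hf : Sym m f) (hg : Sym m' g) :
    Sym (m + m') (fun t => f t • g t) :=
  hf.bilin (ContinuousLinearMap.lsmul ℝ ℝ) hg

lemma SymN.mul {A : Type*} [NormedRing A] [NormedAlgebra ℝ A] {m m' : ℤ} {n : ℕ} {f g : ℝ → A}
    (hf : SymN m n f) (hg : SymN m' n g) : SymN (m + m') n (fun t => f t * g t) :=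
  hf.bilin (ContinuousLinearMap.mul ℝ A) hg

lemma Sym.mul {A : Type*} [NormedRing A] [NormedAlgebra ℝ A] {m m' : ℤ} {f g : ℝ → A}
    (hf : Sym m f) (hg : Sym m' g) : Sym (m + m') (fun t => f t * g t) :=
  hf.bilin (ContinuousLinearMap.mul ℝ A) hg

lemma Sym.of_compact {m : ℤ} {f : ℝ → E} (hf : ContDiff ℝ (⊤ : ℕ∞) f)
    (hs : HasCompactSupport f) : Sym m f := by
  intro n
  refine ⟨hf.of_le (by exact_mod_cast le_top), fun l _ => ?_⟩
  have hc : Continuous (fun t => ‖iteratedFDeriv ℝ l f t‖ * (mu t ^ m)⁻¹) := by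
    apply Continuous.mul
    · exact (hf.continuous_iteratedFDeriv (m := l) (by exact_mod_cast le_top)).norm
    · apply Continuous.inv₀
      · exact (mu_contDiff (n := 0)).continuous.zpow₀ m (fun t => Or.inl (mu_pos t).ne')
      · intro t; exact (zpow_pos (mu_pos t) m).ne'
  have hcs : HasCompactSupport (fun t => ‖iteratedFDeriv ℝ l f t‖ * (mu t ^ m)⁻¹) :=
    ((hs.iteratedFDeriv (𝕜 := ℝ) l).norm).mul_right
  obtain ⟨C, hC⟩ := hcs.exists_bound_of_continuous hc
  refine ⟨C, (norm_nonneg _).trans (hC 0), fun t => ?_⟩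
  have h := (le_abs_self _).trans (hC t)
  rw [← norm_iteratedFDeriv_eq_norm_iteratedDeriv]
  have hp := zpow_pos (mu_pos t) m
  rwa [← div_eq_mul_inv, div_le_iff₀ hp] at h

lemma Sym.id : Sym 1 (fun t : ℝ => t) := by
  intro n
  rcases n with _ | n
  · apply SymN.zero continuous_id
    exact ⟨1, by norm_num, fun t => by simpa using abs_le_mu t⟩
  · exact SymN.succ ⟨1, by norm_num, fun t => by simpa using abs_le_mu t⟩
      (fun t => hasDerivAt_id t) (((Sym.const (1 : ℝ)).mono (by norm_num)) n)

lemma Sym.mu_inv : Sym (-1) (fun t : ℝ => (mu t)⁻¹) := by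
  have hb : ∃ C : ℝ, 0 ≤ C ∧ ∀ t, ‖(mu t)⁻¹‖ ≤ C * mu t ^ (-1 : ℤ) := by
    refine ⟨1, by norm_num, fun t => ?_⟩
    simp [abs_of_pos (mu_pos t)]
  intro n
  induction n with
  | zero =>
    apply SymN.zero _ hb
    exact (mu_contDiff (n := 0)).continuous.inv₀ (fun t => (mu_pos t).ne')
  | succ n ih =>
    apply SymN.succ hb (f' := fun t => -(t * (mu t)⁻¹ * (mu t)⁻¹ * (mu t)⁻¹))
    · intro t
      refine ((mu_hasDerivAt t).inv (mu_pos t).ne').congr_deriv ?_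
      rw [div_eq_mul_inv, pow_two, mul_inv]; ring
    · have := (((Sym.id n).mul ih).mul ih).mul ih
      have h2 := SymN.bilin (ContinuousLinearMap.id ℝ (ℝ →L[ℝ] ℝ))
        ((Sym.const (-ContinuousLinearMap.id ℝ ℝ)) n) this
      exact SymN.mono (by simpa using h2) (by norm_num)

lemma Sym.muS : Sym 1 mu := by
  have h : Sym 1 (fun t : ℝ => t * t * (mu t)⁻¹ + (mu t)⁻¹ * 2) :=
    (((Sym.id.mul Sym.id).mul Sym.mu_inv).mono (by norm_num)).add
      ((Sym.mu_inv.mul (Sym.const (2 : ℝ))).mono (by norm_num))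
  convert h using 1
  funext t
  have h1 := mu_sq t
  have := (mu_pos t).ne'
  field_simp
  linarith

lemma Sym.deriv_mu : Sym 0 (fun t : ℝ => t * (mu t)⁻¹) :=
  (Sym.id.mul Sym.mu_inv).mono (by norm_num)

/-- Riccati lemma: algebra-valued functions satisfying a resolvent identity are symbols. -/
lemma Sym.riccati {A : Type*} [NormedRing A] [NormedAlgebra ℝ A] {m : ℤ} {f g g' : ℝ → A}
    (hb : ∃ C : ℝ, 0 ≤ C ∧ ∀ t, ‖f t‖ ≤ C * mu t ^ m) (hm : m ≤ 0)
    (hfg : ∀ s t, f s - f t = f s * (g s - g t) * f t)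
    (hg : ∀ t, HasDerivAt g (g' t) t) (hg' : Sym 0 g') : Sym m f := by
  obtain ⟨C, hC, hCb⟩ := hb
  have hle : ∀ t, ‖f t‖ ≤ C := fun t => (hCb t).trans
    (mul_le_of_le_one_right hC (zpow_le_one_of_nonpos₀ (one_le_mu t) hm))
  have hcont : Continuous f := by
    rw [continuous_iff_continuousAt]
    intro t
    rw [ContinuousAt, tendsto_iff_norm_sub_tendsto_zero]
    have h0 : Tendsto (fun s => C * ‖g s - g t‖ * C) (𝓝 t) (𝓝 0) := by
      have := tendsto_iff_norm_sub_tendsto_zero.1 (hg t).continuousAt.tendsto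
      simpa using (this.const_mul C).mul_const C
    refine squeeze_zero (fun _ => norm_nonneg _) (fun s => ?_) h0
    rw [hfg]
    refine (norm_mul_le _ _).trans ?_
    gcongr
    · refine (norm_mul_le _ _).trans ?_
      gcongr
      exact hle s
    · exact hle t
  have hder : ∀ t, HasDerivAt f (f t * g' t * f t) t := by
    intro t
    rw [hasDerivAt_iff_tendsto_slope]
    have h1 := hasDerivAt_iff_tendsto_slope.1 (hg t)
    have h2 : Tendsto (fun s => f s * slope g t s * f t) (𝓝[≠] t) (𝓝 (f t * g' t * f t)) :=
      (((hcont.tendsto t).mono_left nhdsWithin_le_nhds).mul h1).mul tendsto_const_nhds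
    refine h2.congr fun s => ?_
    simp only [slope, vsub_eq_sub, hfg s t]
    simp
  intro n
  induction n with
  | zero => exact SymN.zero hcont ⟨C, hC, hCb⟩
  | succ n ih =>
    refine SymN.succ ⟨C, hC, hCb⟩ hder ?_
    exact ((ih.mul (hg' n)).mul ih).mono (by linarith)

/-- Solving `u = T u + b` with symbol data. -/
lemma Sym.solve [CompleteSpace E] {m : ℤ} {T : ℝ → E →L[ℝ] E} {b : ℝ → E} (hT : Sym 0 T)
    (hTn : ∀ t, ‖T t‖ ≤ 1 / 2) (hb : Sym m b) :
    ∃ u : ℝ → E, Sym m u ∧ ∀ t, u t = T t (u t) + b t := by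
  have hu : ∀ t, IsUnit (1 - T t) := fun t => isUnit_one_sub_of_norm_lt_one
    (by linarith [hTn t])
  set I : ℝ → (E →L[ℝ] E) := fun t => Ring.inverse (1 - T t) with hI
  have h1 : ∀ t, (1 - T t) * I t = 1 := fun t => Ring.mul_inverse_cancel _ (hu t)
  have h2 : ∀ t, I t * (1 - T t) = 1 := fun t => Ring.inverse_mul_cancel _ (hu t)
  have hIn : ∀ t, ‖I t‖ ≤ 2 := by
    intro t
    apply ContinuousLinearMap.opNorm_le_bound _ (by norm_num)
    intro x
    have h3 : I t x = T t (I t x) + x := by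
      have := congrArg (fun L : E →L[ℝ] E => L x) (h1 t)
      simp only [mul_apply_eq_comp, sub_apply,
        one_apply_eq_self] at this
      rw [← sub_eq_iff_eq_add']; exact this
    have h4 : ‖I t x‖ ≤ 1 / 2 * ‖I t x‖ + ‖x‖ := by
      calc ‖I t x‖ = ‖T t (I t x) + x‖ := by rw [← h3]
        _ ≤ ‖T t (I t x)‖ + ‖x‖ := norm_add_le _ _
        _ ≤ _ := by
          gcongr
          exact ((T t).le_opNorm _).trans (mul_le_mul_of_nonneg_right (hTn t) (norm_nonneg _))
    linarith
  have hIS : Sym 0 I := by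
    refine Sym.riccati (g := T) (g' := _root_.deriv T) ⟨2, by norm_num, by simpa using hIn⟩ le_rfl ?_
      hT.hasDerivAt hT.deriv
    intro s t
    have : T s - T t = (1 - T t) - (1 - T s) := by abel
    rw [this, mul_sub, sub_mul, mul_assoc, h1, h2, mul_one, one_mul]
  refine ⟨fun t => I t (b t), ?_, fun t => ?_⟩
  · have := Sym.bilin (ContinuousLinearMap.id ℝ (E →L[ℝ] E)) hIS hb
    simpa using this
  · have := congrArg (fun L : E →L[ℝ] E => L (b t)) (h1 t)
    simp only [mul_apply_eq_comp, sub_apply,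
        one_apply_eq_self] at this
    rw [← sub_eq_iff_eq_add']; exact this

end S6

namespace S6
open Filter Topology Set

/-! ### The resolvents of `d/dx` on bounded continuous functions -/

/-- Bounded continuous functions on the line. -/
abbrev X := BoundedContinuousFunction ℝ ℂ

/-- The bounded solution of the equation with derivative plus a times y equal to g. -/
def rFun (a : ℂ) (g : X) (x : ℝ) : ℂ :=
  Complex.exp (-a * x) * ∫ s in Iic x, Complex.exp (a * s) * g s

lemma rFun_integrable {a : ℂ} (ha : 0 < a.re) (g : X) (x : ℝ) :
    IntegrableOn (fun s : ℝ => Complex.exp (a * s) * g s) (Iic x) := by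
  apply Integrable.mul_bdd (c := ‖g‖) (integrableOn_exp_mul_complex_Iic ha x)
  · exact g.continuous.aestronglyMeasurable
  · exact ae_of_all _ (fun s => g.norm_coe_le_norm s)

lemma rFun_hasDerivAt {a : ℂ} (ha : 0 < a.re) (g : X) (x : ℝ) :
    HasDerivAt (rFun a g) (g x - a * rFun a g x) x := by
  have hcont : Continuous (fun s : ℝ => Complex.exp (a * s) * g s) := by
    have := g.continuous
    fun_prop
  have h1 : ∀ y : ℝ, ∫ s in Iic y, Complex.exp (a * s) * g s
      = (∫ s in Iic (0:ℝ), Complex.exp (a * s) * g s)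
        + ∫ s in (0:ℝ)..y, Complex.exp (a * s) * g s := by
    intro y
    rw [← intervalIntegral.integral_Iic_sub_Iic (rFun_integrable ha g 0)
      (rFun_integrable ha g y)]
    ring
  have h2 : HasDerivAt (fun y : ℝ => ∫ s in Iic y, Complex.exp (a * s) * g s)
      (Complex.exp (a * x) * g x) x := by
    rw [funext h1]
    exact (intervalIntegral.integral_hasDerivAt_right (hcont.intervalIntegrable _ _)
      (hcont.stronglyMeasurableAtFilter _ _) hcont.continuousAt).const_add _
  have h3 : HasDerivAt (fun y : ℝ => Complex.exp (-a * y)) (Complex.exp (-a * x) * (-a)) x := by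
    have : HasDerivAt (fun y : ℝ => -a * (y : ℂ)) (-a) x := by
      simpa using (Complex.ofRealCLM.hasDerivAt (x := x)).const_mul (-a)
    exact this.cexp
  refine (h3.mul h2).congr_deriv ?_
  unfold rFun
  have : Complex.exp (-a * x) * Complex.exp (a * x) = 1 := by
    rw [← Complex.exp_add]; simp
  linear_combination g x * this

lemma rFun_norm_le {a : ℂ} (ha : 0 < a.re) (g : X) (x : ℝ) :
    ‖rFun a g x‖ ≤ a.re⁻¹ * ‖g‖ := by
  unfold rFun
  have h1 : ‖∫ s in Iic x, Complex.exp (a * s) * g s‖ ≤ ∫ s in Iic x, Real.exp (a.re * s) * ‖g‖ := by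
    apply norm_integral_le_of_norm_le
    · exact (integrableOn_exp_mul_Iic ha x).mul_const _
    · refine ae_of_all _ (fun s => ?_)
      rw [norm_mul, Complex.norm_exp]
      have : (a * (s:ℂ)).re = a.re * s := by simp
      rw [this]
      gcongr
      exact g.norm_coe_le_norm s
  rw [integral_mul_const, integral_exp_mul_Iic ha] at h1
  rw [norm_mul, Complex.norm_exp]
  have e : (-a * (x:ℂ)).re = -(a.re * x) := by simp
  rw [e]
  calc _ ≤ Real.exp (-(a.re * x)) * (Real.exp (a.re * x) / a.re * ‖g‖) := by gcongr
    _ = (Real.exp (-(a.re * x)) * Real.exp (a.re * x)) * a.re⁻¹ * ‖g‖ := by ring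
    _ = _ := by rw [← Real.exp_add]; simp

/-- A bounded solution of the homogeneous first order equation vanishes. -/
lemma bdd_sol_zero {a : ℂ} (ha : 0 < a.re) (y : X)
    (hy : ∀ x, HasDerivAt y (- a * y x) x) : y = 0 := by
  have h1 : ∀ x : ℝ, HasDerivAt (fun s : ℝ => Complex.exp (a * s) * y s) 0 x := by
    intro x
    have h3 : HasDerivAt (fun y : ℝ => Complex.exp (a * y)) (Complex.exp (a * x) * a) x := by
      have : HasDerivAt (fun y : ℝ => a * (y : ℂ)) a x := by
        simpa using (Complex.ofRealCLM.hasDerivAt (x := x)).const_mul a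
      exact this.cexp
    refine (h3.mul (hy x)).congr_deriv ?_
    ring
  have h2 : ∀ s t : ℝ, Complex.exp (a * s) * y s = Complex.exp (a * t) * y t := fun s t =>
    is_const_of_deriv_eq_zero (fun x => (h1 x).differentiableAt) (fun x => (h1 x).deriv) s t
  ext x
  have hlim : Tendsto (fun s : ℝ => Complex.exp (a * s) * y s) atBot (𝓝 0) := by
    rw [tendsto_zero_iff_norm_tendsto_zero]
    have h0 : Tendsto (fun s : ℝ => Real.exp (a.re * s) * ‖y‖) atBot (𝓝 0) := by
      have : Tendsto (fun s : ℝ => a.re * s) atBot atBot :=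
        tendsto_id.const_mul_atBot ha
      simpa using (Real.tendsto_exp_atBot.comp this).mul_const ‖y‖
    refine squeeze_zero (fun _ => norm_nonneg _) (fun s => ?_) h0
    rw [norm_mul, Complex.norm_exp]
    have : (a * (s:ℂ)).re = a.re * s := by simp
    rw [this]
    gcongr
    exact y.norm_coe_le_norm s
  have h4 : Tendsto (fun s : ℝ => Complex.exp (a * s) * y s) atBot
      (𝓝 (Complex.exp (a * x) * y x)) :=
    tendsto_const_nhds.congr (fun s => h2 x s)
  have := tendsto_nhds_unique h4 hlim
  simpa using this

/-- `rFun` as a bounded operator. -/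
def Rpos (a : ℂ) (ha : 0 < a.re) : X →L[ℝ] X :=
  LinearMap.mkContinuous
    { toFun := fun g => BoundedContinuousFunction.ofNormedAddCommGroup (rFun a g)
        (continuous_iff_continuousAt.2 fun x => (rFun_hasDerivAt ha g x).continuousAt)
        (a.re⁻¹ * ‖g‖) (rFun_norm_le ha g)
      map_add' := by
        intro f g
        ext x
        simp only [BoundedContinuousFunction.coe_ofNormedAddCommGroup,
          BoundedContinuousFunction.coe_add, Pi.add_apply, rFun]
        rw [← mul_add, ← integral_add (rFun_integrable ha f x) (rFun_integrable ha g x)]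
        simp only [mul_add]
      map_smul' := by
        intro c g
        ext x
        simp only [BoundedContinuousFunction.coe_ofNormedAddCommGroup,
          BoundedContinuousFunction.coe_smul, rFun, RingHom.id_apply]
        rw [← mul_smul_comm, ← integral_smul]
        simp only [mul_smul_comm] }
    a.re⁻¹
    (fun g => BoundedContinuousFunction.norm_ofNormedAddCommGroup_le _ (by positivity)
      (rFun_norm_le ha g))

/-- The resolvent `(d/dx + a)⁻¹`, junk value `0` if `re a ≤ 0`. -/
def Rop (a : ℂ) : X →L[ℝ] X := if ha : 0 < a.re then Rpos a ha else 0

lemma Rop_norm {a : ℂ} (ha : 0 < a.re) : ‖Rop a‖ ≤ a.re⁻¹ := by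
  rw [Rop, dif_pos ha]
  exact LinearMap.mkContinuous_norm_le _ (by positivity) _

lemma Rop_hasDerivAt {a : ℂ} (ha : 0 < a.re) (g : X) (x : ℝ) :
    HasDerivAt (Rop a g) (g x - a * Rop a g x) x := by
  rw [Rop, dif_pos ha]
  exact rFun_hasDerivAt ha g x

/-- Multiplication operators. -/
abbrev Mu : X →L[ℝ] X →L[ℝ] X := ContinuousLinearMap.mul ℝ X

/-- Constant functions. -/
def cst : ℂ →L[ℝ] X :=
  LinearMap.mkContinuous
    { toFun := fun c => BoundedContinuousFunction.const ℝ c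
      map_add' := fun _ _ => rfl
      map_smul' := fun _ _ => rfl } 1
    (fun c => by rw [one_mul]; exact BoundedContinuousFunction.norm_const_le c)

@[simp] lemma cst_apply (c : ℂ) (x : ℝ) : cst c x = c := rfl

lemma Rop_resolvent {a b : ℂ} (ha : 0 < a.re) (hb : 0 < b.re) :
    Rop a - Rop b = Rop a * Mu (cst (b - a)) * Rop b := by
  ext1 g
  set y : X := Rop a g - Rop b g - Rop a (cst (b - a) * Rop b g) with hy
  have : y = 0 := by
    apply bdd_sol_zero ha
    intro x
    have h := ((Rop_hasDerivAt ha g x).sub (Rop_hasDerivAt hb g x)).sub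
      (Rop_hasDerivAt ha (cst (b - a) * Rop b g) x)
    refine h.congr_deriv ?_
    simp only [hy, BoundedContinuousFunction.coe_sub, Pi.sub_apply,
      BoundedContinuousFunction.coe_mul, Pi.mul_apply, cst_apply]
    ring
  simp only [sub_apply, mul_apply_eq_comp, ContinuousLinearMap.mul_apply']
  exact sub_eq_zero.1 this

/-- Reflection. -/
def refl : X →L[ℝ] X :=
  LinearMap.mkContinuous
    { toFun := fun g => g.compContinuous ⟨fun x : ℝ => -x, continuous_neg⟩
      map_add' := fun _ _ => rfl
      map_smul' := fun _ _ => rfl } 1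
    (fun g => by
      rw [one_mul]
      exact BoundedContinuousFunction.norm_le (norm_nonneg _) |>.2
        (fun x => g.norm_coe_le_norm (-x)))

@[simp] lemma refl_apply (g : X) (x : ℝ) : refl g x = g (-x) := rfl

lemma refl_norm : ‖refl‖ ≤ 1 := LinearMap.mkContinuous_norm_le _ (by norm_num) _

/-- `(d/dx - b)⁻¹`. -/
def Jop (b : ℂ) : X →L[ℝ] X := -(refl * Rop b * refl)

lemma Jop_norm {b : ℂ} (hb : 0 < b.re) : ‖Jop b‖ ≤ b.re⁻¹ := by
  unfold Jop
  rw [norm_neg]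
  have h0 := Rop_norm hb
  have h1 := refl_norm
  calc ‖refl * Rop b * refl‖ ≤ ‖refl‖ * ‖Rop b‖ * ‖refl‖ :=
        (norm_mul_le _ _).trans (mul_le_mul_of_nonneg_right (norm_mul_le _ _) (norm_nonneg _))
    _ ≤ 1 * b.re⁻¹ * 1 := by gcongr
    _ = _ := by ring

lemma Jop_hasDerivAt {b : ℂ} (hb : 0 < b.re) (g : X) (x : ℝ) :
    HasDerivAt (Jop b g) (g x + b * Jop b g x) x := by
  have h := (Rop_hasDerivAt hb (refl g) (-x)).scomp x (hasDerivAt_neg x)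
  have h2 := h.neg
  refine (h2.congr_deriv ?_)
  simp [Jop, mul_apply_eq_comp]
  ring

lemma Jop_resolvent {a b : ℂ} (ha : 0 < a.re) (hb : 0 < b.re) :
    Jop a - Jop b = Jop a * Mu (cst (a - b)) * Jop b := by
  have h := Rop_resolvent ha hb
  ext g x
  have h1 := congrArg (fun L : X →L[ℝ] X => L (refl g) (-x)) h
  have e : refl (cst (a - b) * (-(refl (Rop b (refl g))))) = cst (b - a) * Rop b (refl g) := by
    ext y
    simp only [refl_apply, BoundedContinuousFunction.coe_mul, Pi.mul_apply, cst_apply,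
      BoundedContinuousFunction.coe_neg, Pi.neg_apply, neg_neg]
    ring
  simp only [sub_apply, mul_apply_eq_comp, ContinuousLinearMap.mul_apply', Jop, neg_apply,
    BoundedContinuousFunction.coe_sub, Pi.sub_apply, BoundedContinuousFunction.coe_neg,
    Pi.neg_apply, refl_apply] at h1 ⊢
  rw [e, ← h1]
  ring

end S6

namespace S6
open Filter Topology Set

/-! ### Families of functions of `x` depending on `λ` -/

/-- The weighted derivative relation between two bounded functions. -/
def Dx (c : ℝ) (h h' : X) : Prop := ∀ x, HasDerivAt h (h' x + c * h x) x

/-- `h` is a symbol of order `m`, and `k` weighted `x`-derivatives are symbols of order `m + k`. -/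
def XSym (c : ℝ) : ℕ → ℤ → (ℝ → X) → Prop
  | 0, m, h => Sym m h
  | n + 1, m, h => Sym m h ∧ ∃ h', (∀ t, Dx c (h t) (h' t)) ∧ XSym c n (m + 1) h'

lemma XSym.sym {c : ℝ} {n : ℕ} {m : ℤ} {h : ℝ → X} (H : XSym c n m h) : Sym m h := by
  cases n with
  | zero => exact H
  | succ n => exact H.1

lemma XSym.mono {c : ℝ} {n : ℕ} {m m' : ℤ} {h : ℝ → X} (H : XSym c n m h) (hm : m ≤ m') :
    XSym c n m' h := by
  induction n generalizing m m' h with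
  | zero => exact Sym.mono H hm
  | succ n ih =>
    obtain ⟨h', hd, hx⟩ := H.2
    exact ⟨H.1.mono hm, h', hd, ih hx (by omega)⟩

lemma XSym.pred {c : ℝ} {n : ℕ} {m : ℤ} {h : ℝ → X} (H : XSym c (n + 1) m h) :
    XSym c n m h := by
  induction n generalizing m h with
  | zero => exact H.1
  | succ n ih =>
    obtain ⟨h', hd, hx⟩ := H.2
    exact ⟨H.1, h', hd, ih hx⟩

lemma XSym.add {c : ℝ} {n : ℕ} {m : ℤ} {f g : ℝ → X} (hf : XSym c n m f) (hg : XSym c n m g) :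
    XSym c n m (fun t => f t + g t) := by
  induction n generalizing m f g with
  | zero => exact Sym.add hf hg
  | succ n ih =>
    obtain ⟨f', hfd, hfx⟩ := hf.2
    obtain ⟨g', hgd, hgx⟩ := hg.2
    refine ⟨hf.1.add hg.1, fun t => f' t + g' t, fun t x => ?_, ih hfx hgx⟩
    refine ((hfd t x).add (hgd t x)).congr_deriv ?_
    simp only [BoundedContinuousFunction.coe_add, Pi.add_apply]
    ring

lemma XSym.mul {c d : ℝ} {n : ℕ} {m m' : ℤ} {f g : ℝ → X} (hf : XSym c n m f)
    (hg : XSym d n m' g) : XSym (c + d) n (m + m') (fun t => f t * g t) := by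
  induction n generalizing m m' f g with
  | zero => exact Sym.mul (A := X) hf hg
  | succ n ih =>
    obtain ⟨f', hfd, hfx⟩ := hf.2
    obtain ⟨g', hgd, hgx⟩ := hg.2
    refine ⟨Sym.mul (A := X) hf.1 hg.1, fun t => f' t * g t + f t * g' t, fun t x => ?_, ?_⟩
    · refine ((hfd t x).mul (hgd t x)).congr_deriv ?_
      simp only [BoundedContinuousFunction.coe_add, Pi.add_apply,
        BoundedContinuousFunction.coe_mul, Pi.mul_apply]
      push_cast
      ring
    · exact ((ih hfx hg.pred).mono (by omega)).add ((ih hf.pred hgx).mono (by omega))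

lemma XSym.zero (c : ℝ) (n : ℕ) (m : ℤ) : XSym c n m (fun _ => 0) := by
  have hs : ∀ m : ℤ, Sym m (fun _ : ℝ => (0 : X)) := fun m =>
    Sym.of_compact contDiff_const HasCompactSupport.zero
  induction n generalizing m with
  | zero => exact hs m
  | succ n ih =>
    refine ⟨hs m, fun _ => 0, fun t x => ?_, ih _⟩
    exact (hasDerivAt_const x (0 : ℂ)).congr_deriv (by simp)

lemma XSym.cst {n : ℕ} {m : ℤ} {a : ℝ → ℂ} (ha : Sym m a) : XSym 0 n m (fun t => cst (a t)) := by
  cases n with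
  | zero => exact ha.clm S6.cst
  | succ n =>
    refine ⟨ha.clm S6.cst, fun _ => 0, fun t x => ?_, XSym.zero _ _ _⟩
    exact (hasDerivAt_const x (a t)).congr_deriv (by simp)

lemma XSym.cmul {c : ℝ} {n : ℕ} {m m' : ℤ} {a : ℝ → ℂ} {f : ℝ → X} (ha : Sym m a)
    (hf : XSym c n m' f) : XSym c n (m + m') (fun t => S6.cst (a t) * f t) := by
  simpa using (XSym.cst (n := n) ha).mul hf

lemma Dx.deriv {c : ℝ} {h h' : ℝ → X} {k k' : X} {t : ℝ} (hd : ∀ t, Dx c (h t) (h' t))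
    (hk : HasDerivAt h k t) (hk' : HasDerivAt h' k' t) : Dx c k k' := by
  intro x
  have h1 := hasDerivAt_iff_tendsto_slope.1 hk
  have h2 := hasDerivAt_iff_tendsto_slope.1 hk'
  have h3 : Tendsto (fun s => slope h' t s + (S6.cst c) * slope h t s) (𝓝[≠] t)
      (𝓝 (k' + (S6.cst c) * k)) := h2.add (h1.const_mul _)
  have h4 := BoundedContinuousFunction.tendsto_iff_tendstoUniformly.1 h3
  have h5 := BoundedContinuousFunction.tendsto_iff_tendstoUniformly.1 h1
  have := hasDerivAt_of_tendstoUniformly (f := fun s x => slope h t s x) (g := fun x => k x) h4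
    (Eventually.of_forall fun s y => ?_) (fun y => h5.tendsto_at y) x
  · exact this
  · have h6 := ((hd s y).sub (hd t y)).const_smul ((s - t)⁻¹)
    refine (h6.congr_deriv ?_)
    simp only [slope, vsub_eq_sub, BoundedContinuousFunction.coe_add, Pi.add_apply,
      BoundedContinuousFunction.coe_mul, Pi.mul_apply, BoundedContinuousFunction.coe_smul,
      BoundedContinuousFunction.coe_sub, Pi.sub_apply, cst_apply, Complex.real_smul]
    ring

lemma XSym.deriv {c : ℝ} {n : ℕ} {m : ℤ} {h : ℝ → X} (H : XSym c n m h) :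
    XSym c n m (deriv h) := by
  induction n generalizing m h with
  | zero => exact Sym.deriv H
  | succ n ih =>
    obtain ⟨h', hd, hx⟩ := H.2
    exact ⟨H.1.deriv, _root_.deriv h', fun t =>
      Dx.deriv hd (H.1.hasDerivAt t) (hx.sym.hasDerivAt t), ih hx⟩

lemma Dx.unique {c : ℝ} {h h₁ h₂ : X} (H₁ : Dx c h h₁) (H₂ : Dx c h h₂) : h₁ = h₂ := by
  ext x
  exact add_right_cancel ((H₁ x).unique (H₂ x))

lemma eval_continuous {h : ℝ → X} (hc : Continuous h) :
    Continuous (fun p : ℝ × ℝ => h p.2 p.1) :=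
  (hc.comp continuous_snd).eval continuous_fst

lemma joint_contDiff_nat {c : ℝ} (n : ℕ) : ∀ {h : ℝ → X}, (∀ k, ∃ m, XSym c k m h) →
    ContDiff ℝ n (fun p : ℝ × ℝ => h p.2 p.1) := by
  induction n with
  | zero =>
    intro h H
    obtain ⟨m, hm⟩ := H 0
    exact contDiff_zero.2 (eval_continuous hm.sym.contDiff.continuous)
  | succ n ih =>
    intro h H
    obtain ⟨m, hm⟩ := H 1
    obtain ⟨h', hd, hx⟩ := hm.2
    have H' : ∀ k, ∃ m, XSym c k m h' := by
      intro k
      obtain ⟨m1, hm1⟩ := H (k + 1)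
      obtain ⟨h'', hd', hx'⟩ := hm1.2
      have : h'' = h' := funext fun t => (hd' t).unique (hd t)
      exact ⟨m1 + 1, this ▸ hx'⟩
    have H'' : ∀ k, ∃ m, XSym c k m (_root_.deriv h) := fun k => by
      obtain ⟨m1, hm1⟩ := H k
      exact ⟨m1, hm1.deriv⟩
    have c0 := ih H
    have c1 := ih H'
    have c2 := ih H''
    let f₁ : ℝ → ℝ → ℝ →L[ℝ] ℂ := fun x t =>
      ContinuousLinearMap.toSpanSingleton ℝ (h' t x + c * h t x)
    let f₂ : ℝ → ℝ → ℝ →L[ℝ] ℂ := fun x t =>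
      ContinuousLinearMap.toSpanSingleton ℝ (_root_.deriv h t x)
    have e1 : ContDiff ℝ n (fun p : ℝ × ℝ => f₁ p.1 p.2) := by
      have : ContDiff ℝ n (fun p : ℝ × ℝ => (h' p.2 p.1 + c * h p.2 p.1 : ℂ)) :=
        c1.add (contDiff_const.mul c0)
      exact (ContinuousLinearMap.toSpanSingletonCLE (𝕜 := ℝ) (E := ℂ)).contDiff.comp this
    have e2 : ContDiff ℝ n (fun p : ℝ × ℝ => f₂ p.1 p.2) :=
      (ContinuousLinearMap.toSpanSingletonCLE (𝕜 := ℝ) (E := ℂ)).contDiff.comp c2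
    have key : ∀ u : ℝ × ℝ, HasFDerivAt (fun p : ℝ × ℝ => h p.2 p.1)
        ((f₁ u.1 u.2).coprod (f₂ u.1 u.2)) u := by
      intro u
      have := hasStrictFDerivAt_uncurry_coprod (𝕜 := ℝ) (u := u) (f := fun x t => h t x)
        (f₁ := f₁) (f₂ := f₂)
        (Eventually.of_forall fun v => (hd v.2 v.1).hasFDerivAt)
        (Eventually.of_forall fun v => ?_) e1.continuous.continuousAt e2.continuous.continuousAt
      · exact this.hasFDerivAt
      · have hh := (BoundedContinuousFunction.evalCLM ℝ v.1).hasFDerivAt.comp_hasDerivAt v.2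
          (hm.sym.hasDerivAt v.2)
        exact hh.hasFDerivAt
    rw [show ((n + 1 : ℕ) : WithTop ℕ∞) = (n : WithTop ℕ∞) + 1 by norm_cast]
    rw [contDiff_succ_iff_hasFDerivAt]
    refine ⟨_, ?_, key⟩
    have : (fun u : ℝ × ℝ => (f₁ u.1 u.2).coprod (f₂ u.1 u.2)) = fun u : ℝ × ℝ =>
      (f₁ u.1 u.2).comp (ContinuousLinearMap.fst ℝ ℝ ℝ)
        + (f₂ u.1 u.2).comp (ContinuousLinearMap.snd ℝ ℝ ℝ) := by
      funext u; ext <;> simp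
    rw [this]
    exact (e1.clm_comp contDiff_const).add (e2.clm_comp contDiff_const)

lemma joint_contDiff {c : ℝ} {h : ℝ → X} (H : ∀ k, ∃ m, XSym c k m h) :
    ContDiff ℝ (⊤ : ℕ∞) (fun p : ℝ × ℝ => h p.2 p.1) :=
  contDiff_infty.2 fun n => joint_contDiff_nat n H

lemma weight_hasDerivAt {c : ℝ} {h h' : X} (H : Dx c h h') (x : ℝ) :
    HasDerivAt (fun y : ℝ => (Real.exp (-c * y) : ℂ) * h y) ((Real.exp (-c * x) : ℂ) * h' x) x := by
  have h1 : HasDerivAt (fun y : ℝ => Real.exp (-c * y)) (Real.exp (-c * x) * (-c)) x := by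
    have : HasDerivAt (fun y : ℝ => -c * y) (-c) x := by
      simpa using (hasDerivAt_id x).const_mul (-c)
    exact this.exp
  refine (h1.ofReal_comp.mul (H x)).congr_deriv ?_
  push_cast
  ring

lemma XSym.iteratedDeriv {c : ℝ} {n : ℕ} {m : ℤ} {h : ℝ → X} (H : XSym c n m h) :
    ∃ hn : ℝ → X, Sym (m + n) hn ∧ ∀ t x,
      iteratedDeriv n (fun y : ℝ => (Real.exp (-c * y) : ℂ) * h t y) x
        = (Real.exp (-c * x) : ℂ) * hn t x := by
  induction n generalizing m h with
  | zero => exact ⟨h, by simpa using H.sym, fun t x => by simp⟩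
  | succ n ih =>
    obtain ⟨h', hd, hx⟩ := H.2
    obtain ⟨hn, hs, he⟩ := ih hx
    refine ⟨hn, hs.mono (by push_cast; omega), fun t x => ?_⟩
    rw [iteratedDeriv_succ', ← he]
    congr 1
    funext y
    exact (weight_hasDerivAt (hd t) y).deriv

/-! ### Weighted coefficients -/

/-- Smooth functions with all derivatives `O(e^{-cx})`. -/
def Wt (c : ℝ) (v : ℝ → ℝ) : Prop :=
  ContDiff ℝ (⊤ : ℕ∞) v ∧ ∀ k : ℕ, ∃ C : ℝ, ∀ x, |iteratedDeriv k v x| ≤ C * Real.exp (-c * x)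

open Classical in
/-- The bounded function `e^{cx} v(x)`. -/
def wt (c : ℝ) (v : ℝ → ℝ) : X :=
  if h : Continuous v ∧ ∃ C : ℝ, ∀ x, |v x| ≤ C * Real.exp (-c * x) then
    BoundedContinuousFunction.ofNormedAddCommGroup
      (fun x : ℝ => ((Real.exp (c * x) * v x : ℝ) : ℂ))
      (by have := h.1; fun_prop) h.2.choose (by
        intro x
        have := h.2.choose_spec x
        rw [Complex.norm_real, norm_mul, Real.norm_eq_abs, Real.norm_eq_abs, abs_of_pos (Real.exp_pos _)]
        calc Real.exp (c * x) * |v x| ≤ Real.exp (c * x) * (h.2.choose * Real.exp (-c * x)) := by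
              gcongr
          _ = h.2.choose * (Real.exp (c * x) * Real.exp (-c * x)) := by ring
          _ = h.2.choose := by rw [← Real.exp_add]; simp)
  else 0

lemma wt_apply {c : ℝ} {v : ℝ → ℝ} (hv : Wt c v) (x : ℝ) :
    wt c v x = ((Real.exp (c * x) * v x : ℝ) : ℂ) := by
  have h : Continuous v ∧ ∃ C : ℝ, ∀ x, |v x| ≤ C * Real.exp (-c * x) :=
    ⟨hv.1.continuous, by simpa using hv.2 0⟩
  rw [wt, dif_pos h]
  rfl

lemma Wt.deriv {c : ℝ} {v : ℝ → ℝ} (hv : Wt c v) : Wt c (deriv v) := by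
  refine ⟨(contDiff_infty_iff_deriv.1 hv.1).2, fun k => ?_⟩
  obtain ⟨C, hC⟩ := hv.2 (k + 1)
  exact ⟨C, fun x => by simpa [iteratedDeriv_succ'] using hC x⟩

lemma wt_Dx {c : ℝ} {v : ℝ → ℝ} (hv : Wt c v) : Dx c (wt c v) (wt c (deriv v)) := by
  intro x
  have e : ⇑(wt c v) = fun x => ((Real.exp (c * x) * v x : ℝ) : ℂ) := funext (wt_apply hv)
  rw [e, wt_apply hv.deriv]
  have h1 : HasDerivAt (fun y : ℝ => Real.exp (c * y)) (Real.exp (c * x) * c) x := by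
    have : HasDerivAt (fun y : ℝ => c * y) c x := by
      simpa using (hasDerivAt_id x).const_mul c
    exact this.exp
  have h2 : HasDerivAt v (_root_.deriv v x) x :=
    ((hv.1.differentiable (by simp)) x).hasDerivAt
  refine (h1.mul h2).ofReal_comp.congr_deriv ?_
  push_cast
  ring

lemma wt_XSym {c : ℝ} {v : ℝ → ℝ} (hv : Wt c v) (n : ℕ) : XSym c n 0 (fun _ => wt c v) := by
  suffices H : ∀ n (m : ℤ), 0 ≤ m → ∀ v, Wt c v → XSym c n m (fun _ => wt c v) from
    H n 0 le_rfl v hv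
  intro n
  induction n with
  | zero => intro m hm v hv; exact (Sym.const _).mono hm
  | succ n ih =>
    intro m hm v hv
    exact ⟨(Sym.const _).mono hm, fun _ => wt c (_root_.deriv v), fun _ => wt_Dx hv,
      ih _ (by omega) _ hv.deriv⟩

lemma Wt.of_compact {c : ℝ} {v : ℝ → ℝ} (hv : ContDiff ℝ (⊤ : ℕ∞) v) (hs : HasCompactSupport v) :
    Wt c v := by
  refine ⟨hv, fun k => ?_⟩
  have hc : Continuous (fun t => ‖iteratedFDeriv ℝ k v t‖ * Real.exp (c * t)) := by
    apply Continuous.mul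
    · exact (hv.continuous_iteratedFDeriv (m := k) (by exact_mod_cast le_top)).norm
    · fun_prop
  have hcs : HasCompactSupport (fun t => ‖iteratedFDeriv ℝ k v t‖ * Real.exp (c * t)) :=
    ((hs.iteratedFDeriv (𝕜 := ℝ) k).norm).mul_right
  obtain ⟨C, hC⟩ := hcs.exists_bound_of_continuous hc
  refine ⟨C, fun t => ?_⟩
  have h := (le_abs_self _).trans (hC t)
  rw [norm_iteratedFDeriv_eq_norm_iteratedDeriv, Real.norm_eq_abs] at h
  have hp := Real.exp_pos (c * t)
  rw [neg_mul, Real.exp_neg, ← div_eq_mul_inv, le_div_iff₀ hp]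
  exact h

lemma wt_norm_le {c : ℝ} {v : ℝ → ℝ} (hv : Wt c v) {C : ℝ} (hC : 0 ≤ C)
    (hb : ∀ x, |v x| ≤ C * Real.exp (-c * x)) : ‖wt c v‖ ≤ C := by
  rw [BoundedContinuousFunction.norm_le hC]
  intro x
  rw [wt_apply hv, Complex.norm_real, norm_mul, Real.norm_eq_abs, Real.norm_eq_abs,
    abs_of_pos (Real.exp_pos _)]
  calc Real.exp (c * x) * |v x| ≤ Real.exp (c * x) * (C * Real.exp (-c * x)) := by
        gcongr
        exact hb x
    _ = C * (Real.exp (c * x) * Real.exp (-c * x)) := by ring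
    _ = C := by rw [← Real.exp_add]; simp

end S6

namespace S6
open Filter Topology Set

/-! ### The abstract fixed point construction -/

lemma Sym.comp {E F G : Type*} [NormedAddCommGroup E] [NormedSpace ℝ E]
    [NormedAddCommGroup F] [NormedSpace ℝ F] [NormedAddCommGroup G] [NormedSpace ℝ G]
    {m m' : ℤ} {S : ℝ → F →L[ℝ] G} {T : ℝ → E →L[ℝ] F} (hS : Sym m S) (hT : Sym m' T) :
    Sym (m + m') (fun t => (S t).comp (T t)) :=
  hS.bilin (ContinuousLinearMap.compL ℝ E F G) hT

lemma Sym.app {E F : Type*} [NormedAddCommGroup E] [NormedSpace ℝ E]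
    [NormedAddCommGroup F] [NormedSpace ℝ F]
    {m m' : ℤ} {S : ℝ → E →L[ℝ] F} {u : ℝ → E} (hS : Sym m S) (hu : Sym m' u) :
    Sym (m + m') (fun t => S t (u t)) :=
  hS.bilin (ContinuousLinearMap.id ℝ (E →L[ℝ] F)) hu

lemma fixed_point {m : ℤ} (hm : m ≤ 0) {A B : ℝ → X →L[ℝ] X} {Q₁ Q₂ p₁ p₂ : ℝ → X}
    (sA : Sym m A) (sB : Sym m B) (sQ₁ : Sym 0 Q₁) (sQ₂ : Sym 0 Q₂) (sp₁ : Sym 0 p₁)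
    (sp₂ : Sym 0 p₂) (nA : ∀ t, ‖A t‖ * (‖Q₁ t‖ + ‖Q₂ t‖) ≤ 1 / 2)
    (nB : ∀ t, ‖B t‖ * (‖Q₁ t‖ + ‖Q₂ t‖) ≤ 1 / 2) :
    ∃ h₁ h₂ : ℝ → X, Sym m h₁ ∧ Sym m h₂ ∧
      (∀ t, h₁ t = A t (Q₁ t * h₁ t + Q₂ t * h₂ t + p₁ t)) ∧
      (∀ t, h₂ t = B t (Q₂ t * h₁ t + Q₁ t * h₂ t + p₂ t)) ∧
      (∀ t, p₁ t = 0 → p₂ t = 0 → h₁ t = 0 ∧ h₂ t = 0) := by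
  set f : X × X →L[ℝ] X := ContinuousLinearMap.fst ℝ X X
  set s : X × X →L[ℝ] X := ContinuousLinearMap.snd ℝ X X
  set T : ℝ → (X × X →L[ℝ] X × X) := fun t =>
    (ContinuousLinearMap.inl ℝ X X).comp ((A t).comp ((Mu (Q₁ t)).comp f + (Mu (Q₂ t)).comp s)) +
    (ContinuousLinearMap.inr ℝ X X).comp ((B t).comp ((Mu (Q₂ t)).comp f + (Mu (Q₁ t)).comp s))
    with hTdef
  have hTapp : ∀ t u, T t u = (A t (Q₁ t * u.1 + Q₂ t * u.2), B t (Q₂ t * u.1 + Q₁ t * u.2)) := by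
    intro t u
    simp [hTdef, f, s]
  have sT : Sym 0 T := by
    have q1 := Sym.clm (F := X →L[ℝ] X) Mu sQ₁
    have q2 := Sym.clm (F := X →L[ℝ] X) Mu sQ₂
    have sf := Sym.const f
    have ss := Sym.const s
    have g1 := ((q1.comp sf).add (q2.comp ss))
    have g2 := ((q2.comp sf).add (q1.comp ss))
    have k1 := (Sym.const (ContinuousLinearMap.inl ℝ X X)).comp (sA.comp g1)
    have k2 := (Sym.const (ContinuousLinearMap.inr ℝ X X)).comp (sB.comp g2)
    exact (k1.add k2).mono (by omega)
  have hbd : ∀ (L : X →L[ℝ] X) (q q' : X) (u : X × X), ‖L‖ * (‖q‖ + ‖q'‖) ≤ 1 / 2 →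
      ‖L (q * u.1 + q' * u.2)‖ ≤ 1 / 2 * ‖u‖ := by
    intro L q q' u hL
    have h1 : ‖q * u.1 + q' * u.2‖ ≤ (‖q‖ + ‖q'‖) * ‖u‖ := by
      calc ‖q * u.1 + q' * u.2‖ ≤ ‖q * u.1‖ + ‖q' * u.2‖ := norm_add_le _ _
        _ ≤ ‖q‖ * ‖u.1‖ + ‖q'‖ * ‖u.2‖ := add_le_add (norm_mul_le _ _) (norm_mul_le _ _)
        _ ≤ ‖q‖ * ‖u‖ + ‖q'‖ * ‖u‖ := by
          gcongr
          · exact norm_fst_le u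
          · exact norm_snd_le u
        _ = _ := by ring
    calc ‖L (q * u.1 + q' * u.2)‖ ≤ ‖L‖ * ‖q * u.1 + q' * u.2‖ := L.le_opNorm _
      _ ≤ ‖L‖ * ((‖q‖ + ‖q'‖) * ‖u‖) := by gcongr
      _ = (‖L‖ * (‖q‖ + ‖q'‖)) * ‖u‖ := by ring
      _ ≤ _ := by gcongr
  have hTn : ∀ t, ‖T t‖ ≤ 1 / 2 := by
    intro t
    apply ContinuousLinearMap.opNorm_le_bound _ (by norm_num)
    intro u
    rw [hTapp, Prod.norm_def]
    exact max_le (hbd _ _ _ u (nA t)) (hbd _ _ _ u (by rw [add_comm]; exact nB t))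
  have sb : Sym m (fun t => (A t (p₁ t), B t (p₂ t))) :=
    ((sA.app sp₁).mono (by omega)).prodMk ((sB.app sp₂).mono (by omega))
  obtain ⟨u, su, hu⟩ := Sym.solve sT hTn sb
  refine ⟨fun t => (u t).1, fun t => (u t).2, su.clm f, su.clm s, fun t => ?_, fun t => ?_, ?_⟩
  · have := congrArg Prod.fst (hu t)
    rw [hTapp] at this
    rw [map_add]; exact this
  · have := congrArg Prod.snd (hu t)
    rw [hTapp] at this
    rw [map_add]; exact this
  · intro t e1 e2
    have h0 : u t = T t (u t) := by
      have := hu t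
      rw [e1, e2, map_zero, map_zero] at this
      exact this.trans (add_zero _)
    have h1 : ‖u t‖ ≤ 1 / 2 * ‖u t‖ := by
      calc ‖u t‖ = ‖T t (u t)‖ := by rw [← h0]
        _ ≤ ‖T t‖ * ‖u t‖ := (T t).le_opNorm _
        _ ≤ _ := mul_le_mul_of_nonneg_right (hTn t) (norm_nonneg _)
    have h2 : u t = 0 := by
      rw [← norm_le_zero_iff]; linarith
    show (u t).1 = 0 ∧ (u t).2 = 0
    rw [h2]; exact ⟨rfl, rfl⟩

/-- The second weighted derivative prescribed by the equation. -/
def rhs (a₁ a₂ : ℂ) (q q' p h h' k : X) : X :=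
  cst (-(a₁ + a₂)) * k + cst (-(a₁ * a₂)) * h + q * h + q' * h' + p

lemma two_step {c : ℝ} {A₁ A₂ : X →L[ℝ] X} {a₁ a₂ : ℂ} {q q' p h h' : X}
    (d₁ : ∀ g, Dx c (A₁ g) (g - cst a₁ * A₁ g)) (d₂ : ∀ g, Dx c (A₂ g) (g - cst a₂ * A₂ g))
    (hh : h = A₁ (A₂ (q * h + q' * h' + p))) :
    Dx c h (A₂ (q * h + q' * h' + p) - cst a₁ * h) ∧
    Dx c (A₂ (q * h + q' * h' + p) - cst a₁ * h)
      (rhs a₁ a₂ q q' p h h' (A₂ (q * h + q' * h' + p) - cst a₁ * h)) := by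
  set g := q * h + q' * h' + p with hg
  have h1 : Dx c h (A₂ g - cst a₁ * h) := by
    have := d₁ (A₂ g)
    rwa [← hh] at this
  refine ⟨h1, fun x => ?_⟩
  have h2 := (d₂ g x).sub ((h1 x).const_mul a₁)
  refine h2.congr_deriv ?_
  have e : g x = q x * h x + q' x * h' x + p x := rfl
  simp only [rhs, BoundedContinuousFunction.coe_add, Pi.add_apply,
    BoundedContinuousFunction.coe_mul, Pi.mul_apply, BoundedContinuousFunction.coe_sub,
    Pi.sub_apply, cst_apply, e]
  ring

lemma rhs_XSym {c : ℝ} {n : ℕ} {m : ℤ} (hm0 : -2 ≤ m) {a₁ a₂ : ℝ → ℂ} {q q' p h h' k : ℝ → X}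
    (sa₁ : Sym 1 a₁) (sa₂ : Sym 1 a₂) (xq : XSym 0 n 0 q) (xq' : XSym 0 n 0 q')
    (xp : XSym c n 0 p) (xh : XSym c n m h) (xh' : XSym c n m h') (xk : XSym c n (m + 1) k) :
    XSym c n (m + 1 + 1) (fun t => rhs (a₁ t) (a₂ t) (q t) (q' t) (p t) (h t) (h' t) (k t)) := by
  have e1 := XSym.cmul (sa₁.add sa₂).neg xk
  have e2 := XSym.cmul (sa₁.mul sa₂).neg xh
  have e3 := xq.mul xh
  have e4 := xq'.mul xh'
  rw [zero_add] at e3 e4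
  exact ((((e1.mono (by omega)).add (e2.mono (by omega))).add (e3.mono (by omega))).add
    (e4.mono (by omega))).add (xp.mono (by omega))

lemma step {c : ℝ} {m : ℤ} (hm : m ≤ 0) (hm0 : -2 ≤ m) {A₁ A₂ B₁ B₂ : ℝ → X →L[ℝ] X}
    {a₁ a₂ b₁ b₂ : ℝ → ℂ} {Q₁ Q₂ p₁ p₂ : ℝ → X}
    (sA : Sym m (fun t => A₁ t * A₂ t)) (sB : Sym m (fun t => B₁ t * B₂ t))
    (sA₂ : Sym (m + 1) A₂) (sB₂ : Sym (m + 1) B₂)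
    (sa₁ : Sym 1 a₁) (sa₂ : Sym 1 a₂) (sb₁ : Sym 1 b₁) (sb₂ : Sym 1 b₂)
    (dA₁ : ∀ t g, Dx c (A₁ t g) (g - cst (a₁ t) * A₁ t g))
    (dA₂ : ∀ t g, Dx c (A₂ t g) (g - cst (a₂ t) * A₂ t g))
    (dB₁ : ∀ t g, Dx c (B₁ t g) (g - cst (b₁ t) * B₁ t g))
    (dB₂ : ∀ t g, Dx c (B₂ t g) (g - cst (b₂ t) * B₂ t g))
    (xQ₁ : ∀ n, XSym 0 n 0 Q₁) (xQ₂ : ∀ n, XSym 0 n 0 Q₂)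
    (xp₁ : ∀ n, XSym c n 0 p₁) (xp₂ : ∀ n, XSym c n 0 p₂)
    (nA : ∀ t, ‖A₁ t * A₂ t‖ * (‖Q₁ t‖ + ‖Q₂ t‖) ≤ 1 / 2)
    (nB : ∀ t, ‖B₁ t * B₂ t‖ * (‖Q₁ t‖ + ‖Q₂ t‖) ≤ 1 / 2) :
    ∃ h₁ h₂ k₁ k₂ : ℝ → X, (∀ n, XSym c n m h₁) ∧ (∀ n, XSym c n m h₂) ∧
      (∀ t, Dx c (h₁ t) (k₁ t)) ∧ (∀ t, Dx c (h₂ t) (k₂ t)) ∧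
      (∀ t, Dx c (k₁ t) (rhs (a₁ t) (a₂ t) (Q₁ t) (Q₂ t) (p₁ t) (h₁ t) (h₂ t) (k₁ t))) ∧
      (∀ t, Dx c (k₂ t) (rhs (b₁ t) (b₂ t) (Q₁ t) (Q₂ t) (p₂ t) (h₂ t) (h₁ t) (k₂ t))) ∧
      (∀ t, p₁ t = 0 → p₂ t = 0 → h₁ t = 0 ∧ h₂ t = 0) := by
  obtain ⟨h₁, h₂, s₁, s₂, e₁, e₂, hz⟩ := fixed_point hm sA sB (xQ₁ 0).sym (xQ₂ 0).sym
    (xp₁ 0).sym (xp₂ 0).sym nA nB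
  set k₁ : ℝ → X := fun t =>
    A₂ t (Q₁ t * h₁ t + Q₂ t * h₂ t + p₁ t) - cst (a₁ t) * h₁ t with hk₁
  set k₂ : ℝ → X := fun t =>
    B₂ t (Q₁ t * h₂ t + Q₂ t * h₁ t + p₂ t) - cst (b₁ t) * h₂ t with hk₂
  have e₂' : ∀ t, h₂ t = (B₁ t * B₂ t) (Q₁ t * h₂ t + Q₂ t * h₁ t + p₂ t) := by
    intro t
    rw [add_comm (Q₁ t * h₂ t)]
    exact e₂ t
  have D₁ := fun t => two_step (dA₁ t) (dA₂ t) (e₁ t)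
  have D₂ := fun t => two_step (dB₁ t) (dB₂ t) (e₂' t)
  have hk : ∀ {L : ℝ → X →L[ℝ] X} {a : ℝ → ℂ} {q q' p h h' : ℝ → X}, Sym (m + 1) L → Sym 1 a →
      Sym 0 q → Sym 0 q' → Sym 0 p → Sym m h → Sym m h' →
      Sym (m + 1) (fun t => L t (q t * h t + q' t * h' t + p t) - cst (a t) * h t) := by
    intro L a q q' p h h' sL sa sq sq' sp sh sh'
    have f1 : Sym 0 (fun t => q t * h t + q' t * h' t + p t) :=
      (((sq.mul sh).mono (by omega)).add ((sq'.mul sh').mono (by omega))).add sp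
    exact ((sL.app f1).mono (by omega)).sub (((sa.clm cst).mul sh).mono (by omega))
  have sk₁ : Sym (m + 1) k₁ := hk sA₂ sa₁ (xQ₁ 0).sym (xQ₂ 0).sym (xp₁ 0).sym s₁ s₂
  have sk₂ : Sym (m + 1) k₂ := hk sB₂ sb₁ (xQ₁ 0).sym (xQ₂ 0).sym (xp₂ 0).sym s₂ s₁
  have key : ∀ n, XSym c n m h₁ ∧ XSym c n m h₂ ∧ XSym c n (m + 1) k₁ ∧ XSym c n (m + 1) k₂ := by
    intro n
    induction n with
    | zero => exact ⟨s₁, s₂, sk₁, sk₂⟩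
    | succ n ih =>
      obtain ⟨i1, i2, i3, i4⟩ := ih
      exact ⟨⟨s₁, k₁, fun t => (D₁ t).1, i3⟩, ⟨s₂, k₂, fun t => (D₂ t).1, i4⟩,
        ⟨sk₁, _, fun t => (D₁ t).2, rhs_XSym hm0 sa₁ sa₂ (xQ₁ n) (xQ₂ n) (xp₁ n) i1 i2 i3⟩,
        ⟨sk₂, _, fun t => (D₂ t).2, rhs_XSym hm0 sb₁ sb₂ (xQ₁ n) (xQ₂ n) (xp₂ n) i2 i1 i4⟩⟩
  exact ⟨h₁, h₂, k₁, k₂, fun n => (key n).1, fun n => (key n).2.1, fun t => (D₁ t).1,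
    fun t => (D₂ t).1, fun t => (D₁ t).2, fun t => (D₂ t).2, hz⟩

end S6

namespace S6
open Filter Topology Set

/-! ### The two concrete fixed point problems -/

lemma Rop_Sym {m : ℤ} (hm : m ≤ 0) {a a' : ℝ → ℂ} (ha : ∀ t, 0 < (a t).re)
    (hb : ∃ C : ℝ, 0 ≤ C ∧ ∀ t, ((a t).re)⁻¹ ≤ C * mu t ^ m)
    (hd : ∀ t, HasDerivAt a (a' t) t) (sa' : Sym 0 a') : Sym m (fun t => Rop (a t)) := by
  obtain ⟨C, hC, hCb⟩ := hb
  set L : ℂ →L[ℝ] (X →L[ℝ] X) := (Mu : X →L[ℝ] X →L[ℝ] X).comp (-cst) with hL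
  refine Sym.riccati (A := X →L[ℝ] X) (g := fun t => L (a t)) (g' := fun t => L (a' t))
    ⟨C, hC, fun t => (Rop_norm (ha t)).trans (hCb t)⟩ hm ?_ ?_ ?_
  · intro s t
    rw [Rop_resolvent (ha s) (ha t), ← map_sub]
    congr 2
    simp only [hL, ContinuousLinearMap.comp_apply, neg_apply, ← map_neg, neg_sub]
  · intro t
    exact HasFDerivAt.comp_hasDerivAt (E := X →L[ℝ] X) t
      (ContinuousLinearMap.hasFDerivAt (F := X →L[ℝ] X) L (x := a t)) (hd t)
  · exact Sym.clm (F := X →L[ℝ] X) L sa'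

lemma Jop_Sym {m : ℤ} (hm : m ≤ 0) {a a' : ℝ → ℂ} (ha : ∀ t, 0 < (a t).re)
    (hb : ∃ C : ℝ, 0 ≤ C ∧ ∀ t, ((a t).re)⁻¹ ≤ C * mu t ^ m)
    (hd : ∀ t, HasDerivAt a (a' t) t) (sa' : Sym 0 a') : Sym m (fun t => Jop (a t)) := by
  obtain ⟨C, hC, hCb⟩ := hb
  set L : ℂ →L[ℝ] (X →L[ℝ] X) := (Mu : X →L[ℝ] X →L[ℝ] X).comp cst with hL
  refine Sym.riccati (A := X →L[ℝ] X) (g := fun t => L (a t)) (g' := fun t => L (a' t))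
    ⟨C, hC, fun t => (Jop_norm (ha t)).trans (hCb t)⟩ hm ?_ ?_ ?_
  · intro s t
    rw [Jop_resolvent (ha s) (ha t), ← map_sub]
    rfl
  · intro t
    exact HasFDerivAt.comp_hasDerivAt (E := X →L[ℝ] X) t
      (ContinuousLinearMap.hasFDerivAt (F := X →L[ℝ] X) L (x := a t)) (hd t)
  · exact Sym.clm (F := X →L[ℝ] X) L sa'

lemma Rop_Dx {c : ℝ} {a : ℂ} (ha : 0 < (a - c).re) (g : X) :
    Dx c (Rop (a - c) g) (g - cst a * Rop (a - c) g) := by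
  intro x
  refine (Rop_hasDerivAt ha g x).congr_deriv ?_
  simp only [BoundedContinuousFunction.coe_sub, Pi.sub_apply, BoundedContinuousFunction.coe_mul,
    Pi.mul_apply, cst_apply]
  ring

lemma Jop_Dx {c : ℝ} {a : ℂ} (ha : 0 < (c - a).re) (g : X) :
    Dx c (Jop (c - a) g) (g - cst a * Jop (c - a) g) := by
  intro x
  refine (Jop_hasDerivAt ha g x).congr_deriv ?_
  simp only [BoundedContinuousFunction.coe_sub, Pi.sub_apply, BoundedContinuousFunction.coe_mul,
    Pi.mul_apply, cst_apply]
  ring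

lemma sym_ofReal {m : ℤ} {f : ℝ → ℝ} (hf : Sym m f) : Sym m (fun t => (f t : ℂ)) :=
  hf.clm Complex.ofRealCLM

lemma mu_inv_le (γ : ℝ) (h1 : γ < 1) (t : ℝ) : (mu t - γ)⁻¹ ≤ 4 * (mu t)⁻¹ := by
  have := mu_ge t
  rw [← div_eq_mul_inv, inv_eq_one_div, div_le_div_iff₀ (by linarith) (by linarith)]
  linarith

lemma step1 {γ : ℝ} (h0 : 0 < γ) (h1 : γ < 1) {Q₁ Q₂ p₁ p₂ : ℝ → X}
    (xQ₁ : ∀ n, XSym 0 n 0 Q₁) (xQ₂ : ∀ n, XSym 0 n 0 Q₂)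
    (xp₁ : ∀ n, XSym γ n 0 p₁) (xp₂ : ∀ n, XSym γ n 0 p₂)
    (nQ : ∀ t, (16 + 4 * γ⁻¹) * (mu t)⁻¹ * (‖Q₁ t‖ + ‖Q₂ t‖) ≤ 1 / 2) :
    ∃ h₁ h₂ k₁ k₂ : ℝ → X, (∀ n, XSym γ n (-1) h₁) ∧ (∀ n, XSym γ n (-1) h₂) ∧
      (∀ t, Dx γ (h₁ t) (k₁ t)) ∧ (∀ t, Dx γ (h₂ t) (k₂ t)) ∧
      (∀ t, Dx γ (k₁ t) (rhs (mu t + t * Complex.I) (mu t - t * Complex.I)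
        (Q₁ t) (Q₂ t) (p₁ t) (h₁ t) (h₂ t) (k₁ t))) ∧
      (∀ t, Dx γ (k₂ t) (rhs 0 (2 * mu t) (Q₁ t) (Q₂ t) (p₂ t) (h₂ t) (h₁ t) (k₂ t))) := by
  have dmu : ∀ t, HasDerivAt (fun t => (mu t : ℂ)) ((t * (mu t)⁻¹ : ℝ) : ℂ) t :=
    fun t => (mu_hasDerivAt t).ofReal_comp
  have did : ∀ t : ℝ, HasDerivAt (fun t : ℝ => (t : ℂ) * Complex.I) Complex.I t := fun t => by
    simpa using ((hasDerivAt_id t).ofReal_comp).mul_const Complex.I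
  have smu : Sym 0 (fun t : ℝ => ((t * (mu t)⁻¹ : ℝ) : ℂ)) := sym_ofReal Sym.deriv_mu
  have sI : Sym 0 (fun _ : ℝ => Complex.I) := Sym.const _
  have st : Sym 1 (fun t : ℝ => (t : ℂ) * Complex.I) :=
    ((sym_ofReal Sym.id).mul sI).mono (by norm_num)
  have sm : Sym 1 (fun t => (mu t : ℂ)) := sym_ofReal Sym.muS
  have re₁ : ∀ t, ((mu t + t * Complex.I : ℂ) - γ).re = mu t - γ := fun t => by simp
  have re₂ : ∀ t, ((mu t - t * Complex.I : ℂ) - γ).re = mu t - γ := fun t => by simp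
  have re₃ : ∀ t, ((2 * mu t : ℂ) - γ).re = 2 * mu t - γ := fun t => by simp
  have po : ∀ t, 0 < mu t - γ := fun t => by linarith [mu_ge t]
  have po' : ∀ t, 0 < 2 * mu t - γ := fun t => by linarith [mu_ge t]
  have le3 : ∀ t, (2 * mu t - γ)⁻¹ ≤ 4 * (mu t)⁻¹ := fun t =>
    (inv_anti₀ (po t) (by linarith [mu_ge t])).trans (mu_inv_le γ h1 t)
  have sA₁ : Sym (-1) (fun t : ℝ => Rop ((mu t + t * Complex.I : ℂ) - γ)) :=
    Rop_Sym (by norm_num) (fun t => by rw [re₁]; exact po t)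
      ⟨4, by norm_num, fun t => by rw [re₁, zpow_neg_one]; exact mu_inv_le γ h1 t⟩
      (fun t => ((dmu t).add (did t)).sub_const _) (smu.add sI)
  have sA₂ : Sym (-1) (fun t : ℝ => Rop ((mu t - t * Complex.I : ℂ) - γ)) :=
    Rop_Sym (by norm_num) (fun t => by rw [re₂]; exact po t)
      ⟨4, by norm_num, fun t => by rw [re₂, zpow_neg_one]; exact mu_inv_le γ h1 t⟩
      (fun t => ((dmu t).sub (did t)).sub_const _) (smu.sub sI)
  have sB₂ : Sym (-1) (fun t : ℝ => Rop ((2 * mu t : ℂ) - γ)) :=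
    Rop_Sym (by norm_num) (fun t => by rw [re₃]; exact po' t)
      ⟨4, by norm_num, fun t => by rw [re₃, zpow_neg_one]; exact le3 t⟩
      (fun t => ((dmu t).const_mul 2).sub_const _)
      (((Sym.const (2 : ℂ)).mul smu).mono (by norm_num))
  have sB₁ : Sym 0 (fun _ : ℝ => Jop ((γ : ℂ) - 0)) := Sym.const _
  have mi : ∀ t, (mu t)⁻¹ ≤ 1 := fun t => inv_le_one_of_one_le₀ (one_le_mu t)
  have mp : ∀ t, 0 < (mu t)⁻¹ := fun t => inv_pos.2 (mu_pos t)
  have gi : 0 < γ⁻¹ := inv_pos.2 h0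
  have sAA := (sA₁.comp sA₂).mono (show (-1 + -1 : ℤ) ≤ -1 by norm_num)
  have sBB := (sB₁.comp sB₂).mono (show (0 + -1 : ℤ) ≤ -1 by norm_num)
  obtain ⟨h₁, h₂, k₁, k₂, r1, r2, r3, r4, r5, r6, -⟩ := step (c := γ) (m := -1) (by norm_num)
    (by norm_num)
    (A₁ := fun t : ℝ => Rop ((mu t + t * Complex.I : ℂ) - γ))
    (A₂ := fun t : ℝ => Rop ((mu t - t * Complex.I : ℂ) - γ))
    (B₁ := fun _ : ℝ => Jop ((γ : ℂ) - 0))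
    (B₂ := fun t : ℝ => Rop ((2 * mu t : ℂ) - γ))
    (a₁ := fun t : ℝ => (mu t + t * Complex.I : ℂ)) (a₂ := fun t : ℝ => (mu t - t * Complex.I : ℂ))
    (b₁ := fun _ => 0) (b₂ := fun t => 2 * mu t)
    sAA sBB
    (sA₂.mono (by norm_num)) (sB₂.mono (by norm_num))
    (sm.add st) (sm.sub st) ((Sym.const (0 : ℂ)).mono (by norm_num))
    (((Sym.const (2 : ℂ)).mul sm).mono (by norm_num))
    (fun t g => Rop_Dx (by rw [re₁]; exact po t) g)
    (fun t g => Rop_Dx (by rw [re₂]; exact po t) g)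
    (fun t g => Jop_Dx (by simpa using h0) g)
    (fun t g => Rop_Dx (by rw [re₃]; exact po' t) g)
    xQ₁ xQ₂ xp₁ xp₂
    (fun t => by
      refine le_trans (mul_le_mul_of_nonneg_right ?_ (by positivity)) (nQ t)
      have e1 : ‖Rop ((mu t + t * Complex.I : ℂ) - γ)‖ ≤ 4 * (mu t)⁻¹ := by
        refine (Rop_norm (by rw [re₁]; exact po t)).trans ?_
        rw [re₁]; exact mu_inv_le γ h1 t
      have e2 : ‖Rop ((mu t - t * Complex.I : ℂ) - γ)‖ ≤ 4 * (mu t)⁻¹ := by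
        refine (Rop_norm (by rw [re₂]; exact po t)).trans ?_
        rw [re₂]; exact mu_inv_le γ h1 t
      refine (norm_mul_le _ _).trans ((mul_le_mul e1 e2 (norm_nonneg _) (by linarith [mp t])).trans ?_)
      have := mul_nonneg gi.le (mp t).le
      nlinarith [mi t, mp t])
    (fun t => by
      refine le_trans (mul_le_mul_of_nonneg_right ?_ (by positivity)) (nQ t)
      have e1 : ‖Jop ((γ : ℂ) - 0)‖ ≤ γ⁻¹ := by
        have := Jop_norm (b := (γ : ℂ) - 0) (by simpa using h0)
        simpa using this
      have e2 : ‖Rop ((2 * mu t : ℂ) - γ)‖ ≤ 4 * (mu t)⁻¹ := by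
        refine (Rop_norm (by rw [re₃]; exact po' t)).trans ?_
        rw [re₃]; exact le3 t
      refine (norm_mul_le _ _).trans ((mul_le_mul e1 e2 (norm_nonneg _) gi.le).trans ?_)
      nlinarith [mi t, mp t])
  exact ⟨h₁, h₂, k₁, k₂, r1, r2, r3, r4, r5, r6⟩

lemma step2 {N L : ℝ} (hL : 1 ≤ L) {ν τ : ℝ → ℝ} (cν : ContDiff ℝ (⊤ : ℕ∞) ν)
    (cτ : ContDiff ℝ (⊤ : ℕ∞) τ) (kν : HasCompactSupport ν) (kτ : HasCompactSupport τ)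
    (ν0 : ∀ t, 0 ≤ ν t) (hN : ∀ t, L ≤ N - 2 * ν t) {Q₁ Q₂ p₁ p₂ : ℝ → X}
    (xQ₁ : ∀ n, XSym 0 n 0 Q₁) (xQ₂ : ∀ n, XSym 0 n 0 Q₂)
    (xp₁ : ∀ n, XSym N n 0 p₁) (xp₂ : ∀ n, XSym N n 0 p₂)
    (nQ : ∀ t, L⁻¹ * (‖Q₁ t‖ + ‖Q₂ t‖) ≤ 1 / 2) :
    ∃ h₁ h₂ k₁ k₂ : ℝ → X, (∀ n, XSym N n 0 h₁) ∧ (∀ n, XSym N n 0 h₂) ∧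
      (∀ t, Dx N (h₁ t) (k₁ t)) ∧ (∀ t, Dx N (h₂ t) (k₂ t)) ∧
      (∀ t, Dx N (k₁ t) (rhs (ν t + τ t * Complex.I) (ν t - τ t * Complex.I)
        (Q₁ t) (Q₂ t) (p₁ t) (h₁ t) (h₂ t) (k₁ t))) ∧
      (∀ t, Dx N (k₂ t) (rhs 0 (2 * ν t) (Q₁ t) (Q₂ t) (p₂ t) (h₂ t) (h₁ t) (k₂ t))) ∧
      (∀ t, p₁ t = 0 → p₂ t = 0 → h₁ t = 0 ∧ h₂ t = 0) := by
  have Lp : 0 < L := by linarith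
  have main : ∀ {a : ℝ → ℂ}, Sym 0 a → (∀ t, L ≤ N - (a t).re) →
      Sym 0 (fun t => Jop (N - a t)) ∧ (∀ t g, Dx N (Jop (N - a t) g) (g - cst (a t) * Jop (N - a t) g))
      ∧ ∀ t, ‖Jop (N - a t)‖ ≤ L⁻¹ := by
    intro a sa ha
    have hp : ∀ t, 0 < ((N : ℂ) - a t).re := fun t => by
      have := ha t
      simp only [Complex.sub_re, Complex.ofReal_re]; linarith
    have hle : ∀ t, (((N : ℂ) - a t).re)⁻¹ ≤ L⁻¹ := fun t => by
      apply inv_anti₀ Lp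
      have := ha t
      simpa only [Complex.sub_re, Complex.ofReal_re] using this
    refine ⟨Jop_Sym le_rfl hp ⟨L⁻¹, by positivity, fun t => by simpa using hle t⟩
      (fun t => (sa.hasDerivAt t).const_sub _) sa.deriv.neg, fun t g => Jop_Dx (hp t) g,
      fun t => (Jop_norm (hp t)).trans (hle t)⟩
  have sν : Sym 0 (fun t => (ν t : ℂ)) := sym_ofReal (Sym.of_compact cν kν)
  have sτ : Sym 0 (fun t => (τ t : ℂ) * Complex.I) :=
    ((sym_ofReal (Sym.of_compact (m := 0) cτ kτ)).mul (Sym.const Complex.I)).mono (by norm_num)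
  have s2 : Sym 0 (fun t => 2 * (ν t : ℂ)) := ((Sym.const (2 : ℂ)).mul sν).mono (by norm_num)
  obtain ⟨u1, u2, u3⟩ := main (sν.add sτ) (fun t => by
    have := ν0 t; have := hN t; simp; linarith)
  obtain ⟨v1, v2, v3⟩ := main (sν.sub sτ) (fun t => by
    have := ν0 t; have := hN t; simp; linarith)
  obtain ⟨w1, w2, w3⟩ := main (Sym.const (0 : ℂ)) (fun t => by
    have := ν0 t; have := hN t; simp; linarith)
  obtain ⟨z1, z2, z3⟩ := main s2 (fun t => by
    have := ν0 t; have := hN t; simp; linarith)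
  have Li : L⁻¹ ≤ 1 := inv_le_one_of_one_le₀ hL
  have Lip : 0 < L⁻¹ := inv_pos.2 Lp
  have fin : ∀ (P R : X →L[ℝ] X) (q : ℝ), 0 ≤ q → ‖P‖ ≤ L⁻¹ → ‖R‖ ≤ L⁻¹ → L⁻¹ * q ≤ 1 / 2 →
      ‖P * R‖ * q ≤ 1 / 2 := by
    intro P R q hq hP hR h
    refine le_trans (mul_le_mul_of_nonneg_right ?_ hq) h
    refine (norm_mul_le _ _).trans ((mul_le_mul hP hR (norm_nonneg _) Lip.le).trans ?_)
    nlinarith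
  have sAA := (u1.comp v1).mono (show (0 + 0 : ℤ) ≤ 0 by norm_num)
  have sBB := (w1.comp z1).mono (show (0 + 0 : ℤ) ≤ 0 by norm_num)
  exact step (c := N) (m := 0) le_rfl (by norm_num)
    sAA sBB
    (v1.mono (by norm_num)) (z1.mono (by norm_num))
    ((sν.add sτ).mono (by norm_num)) ((sν.sub sτ).mono (by norm_num))
    ((Sym.const (0 : ℂ)).mono (by norm_num)) (s2.mono (by norm_num))
    u2 v2 w2 z2 xQ₁ xQ₂ xp₁ xp₂
    (fun t => fin _ _ _ (by positivity) (u3 t) (v3 t) (nQ t))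
    (fun t => fin _ _ _ (by positivity) (w3 t) (z3 t) (nQ t))

end S6

namespace S6
open Filter Topology Set

/-! ### Construction of the profile -/

lemma exists_bump {R : ℝ} (hR : 0 < R) : ∃ χ : ℝ → ℝ, ContDiff ℝ (⊤ : ℕ∞) χ ∧ HasCompactSupport χ ∧
    (∀ t, 0 ≤ χ t) ∧ (∀ t, χ t ≤ 1) ∧ (∀ t, |t| ≤ R → χ t = 1) ∧ (∀ t, R + 1 ≤ |t| → χ t = 0) := by
  let b : ContDiffBump (0 : ℝ) := ⟨R, R + 1, hR, by linarith⟩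
  refine ⟨b, b.contDiff, b.hasCompactSupport, fun t => b.nonneg, fun t => b.le_one, ?_, ?_⟩
  · intro t ht
    apply b.one_of_mem_closedBall
    simpa [b] using ht
  · intro t ht
    apply b.zero_of_le_dist
    simpa [b] using ht

lemma Wt.of_decay {γ c : ℝ} (hc0 : 0 ≤ c) (hc : c ≤ γ) {v : ℝ → ℝ} (hv : ContDiff ℝ (⊤ : ℕ∞) v)
    (hb : ∀ k : ℕ, ∃ C : ℝ, ∀ x, |iteratedDeriv k v x| ≤ C * Real.exp (-γ * |x|)) : Wt c v := by
  refine ⟨hv, fun k => ?_⟩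
  obtain ⟨C, hC⟩ := hb k
  refine ⟨|C|, fun x => (hC x).trans ?_⟩
  apply mul_le_mul (le_abs_self C) _ (Real.exp_pos _).le (abs_nonneg C)
  rw [Real.exp_le_exp]
  have h1 : c * x ≤ c * |x| := mul_le_mul_of_nonneg_left (le_abs_self x) hc0
  have h2 : c * |x| ≤ γ * |x| := mul_le_mul_of_nonneg_right hc (abs_nonneg x)
  linarith

/-- Cut-off coefficient. -/
def cut (c : ℝ) (v ζ χ : ℝ → ℝ) (t : ℝ) : X :=
  wt c v + cst (((-χ t : ℝ) : ℂ)) * wt c (fun x => v x * ζ x)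

lemma cut_apply {c : ℝ} {v ζ χ : ℝ → ℝ} (hv : Wt c v) (hz : Wt c (fun x => v x * ζ x)) (t x : ℝ) :
    cut c v ζ χ t x = ((Real.exp (c * x) * v x * (1 - χ t * ζ x) : ℝ) : ℂ) := by
  simp only [cut, BoundedContinuousFunction.coe_add, Pi.add_apply,
    BoundedContinuousFunction.coe_mul, Pi.mul_apply, cst_apply, wt_apply hv, wt_apply hz]
  push_cast
  ring

lemma cut_XSym {c : ℝ} {v ζ χ : ℝ → ℝ} (hv : Wt c v) (hz : Wt c (fun x => v x * ζ x))
    (hχ : Sym 0 χ) (n : ℕ) : XSym c n 0 (cut c v ζ χ) :=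
  (wt_XSym hv n).add ((XSym.cmul (sym_ofReal hχ.neg) (wt_XSym hz n)).mono (by norm_num))

lemma cut_norm {γ C₀ Λ : ℝ} (h0 : 0 < γ) (hC : 0 ≤ C₀) (hΛ : 1 ≤ Λ) {v ζ χ : ℝ → ℝ} (hv : Wt 0 v)
    (hz : Wt 0 (fun x => v x * ζ x)) (hb : ∀ x, |v x| ≤ C₀ * Real.exp (-γ * |x|))
    (ζ0 : ∀ t, 0 ≤ ζ t) (ζ1 : ∀ t, ζ t ≤ 1) (ζe : ∀ x, |x| ≤ Λ / γ → ζ x = 1)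
    (χ0 : ∀ t, 0 ≤ χ t) (χ1 : ∀ t, χ t ≤ 1) (χe : ∀ x, |x| ≤ Λ → χ x = 1) (t : ℝ) :
    (mu t)⁻¹ * ‖cut 0 v ζ χ t‖ ≤ C₀ * Λ⁻¹ := by
  have Λp : 0 < Λ := by linarith
  have mi : (mu t)⁻¹ ≤ 1 := inv_le_one_of_one_le₀ (one_le_mu t)
  have mp : 0 < (mu t)⁻¹ := inv_pos.2 (mu_pos t)
  have ap : ∀ x, ‖cut 0 v ζ χ t x‖ = |v x| * (1 - χ t * ζ x) := by
    intro x
    have : 0 ≤ 1 - χ t * ζ x := by nlinarith [ζ0 x, ζ1 x, χ0 t, χ1 t]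
    rw [cut_apply hv hz, Complex.norm_real, Real.norm_eq_abs, abs_mul, abs_of_nonneg this]
    simp
  by_cases ht : |t| ≤ Λ
  · have : ‖cut 0 v ζ χ t‖ ≤ C₀ * Λ⁻¹ := by
      rw [BoundedContinuousFunction.norm_le (by positivity)]
      intro x
      rw [ap, χe t ht]
      by_cases hx : |x| ≤ Λ / γ
      · rw [ζe x hx]; simp; positivity
      · have hx' : Λ ≤ γ * |x| := by
          have := (not_le.1 hx).le
          rw [div_le_iff₀ h0] at this; linarith
        have e1 : Real.exp (-γ * |x|) ≤ Λ⁻¹ := by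
          rw [neg_mul, Real.exp_neg]
          exact inv_anti₀ Λp (by linarith [Real.add_one_le_exp (γ * |x|)])
        calc |v x| * (1 - 1 * ζ x) ≤ |v x| * 1 :=
              mul_le_mul_of_nonneg_left (by linarith [ζ0 x]) (abs_nonneg _)
          _ ≤ C₀ * Real.exp (-γ * |x|) := by rw [mul_one]; exact hb x
          _ ≤ C₀ * Λ⁻¹ := mul_le_mul_of_nonneg_left e1 hC
    calc (mu t)⁻¹ * ‖cut 0 v ζ χ t‖ ≤ 1 * ‖cut 0 v ζ χ t‖ :=
          mul_le_mul_of_nonneg_right mi (norm_nonneg _)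
      _ ≤ _ := by rw [one_mul]; exact this
  · have h1 : ‖cut 0 v ζ χ t‖ ≤ C₀ := by
      rw [BoundedContinuousFunction.norm_le hC]
      intro x
      rw [ap]
      have e1 : Real.exp (-γ * |x|) ≤ 1 := by
        rw [Real.exp_le_one_iff]; nlinarith [abs_nonneg x]
      calc |v x| * (1 - χ t * ζ x) ≤ |v x| * 1 :=
              mul_le_mul_of_nonneg_left (by nlinarith [ζ0 x, χ0 t]) (abs_nonneg _)
          _ ≤ C₀ * Real.exp (-γ * |x|) := by rw [mul_one]; exact hb x
          _ ≤ C₀ := mul_le_of_le_one_right hC e1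
    have h2 : (mu t)⁻¹ ≤ Λ⁻¹ := inv_anti₀ Λp ((not_le.1 ht).le.trans (abs_le_mu t))
    calc (mu t)⁻¹ * ‖cut 0 v ζ χ t‖ ≤ Λ⁻¹ * C₀ := mul_le_mul h2 h1 (norm_nonneg _) (by positivity)
      _ = _ := mul_comm _ _

lemma rhs_apply (a₁ a₂ : ℂ) (q q' p h h' k : X) (x : ℝ) :
    rhs a₁ a₂ q q' p h h' k x =
      -(a₁ + a₂) * k x - (a₁ * a₂) * h x + q x * h x + q' x * h' x + p x := by
  simp only [rhs, BoundedContinuousFunction.coe_add, Pi.add_apply,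
    BoundedContinuousFunction.coe_mul, Pi.mul_apply, cst_apply]
  ring

/-- The source term of the correction problem. -/
def src (N γ : ℝ) (v v' u ζ χ : ℝ → ℝ) (h h' : ℝ → X) (t : ℝ) : X :=
  cst ((χ t : ℂ)) * (wt (N - γ) (fun x => v x * ζ x) * h t + wt (N - γ) (fun x => v' x * ζ x) * h' t
    + wt N (fun x => u x * ζ x))

/-- The profile equation at one point, from the two pieces. -/
lemma combine {γ N : ℝ} {v v' u ζ χ : ℝ → ℝ} (hu : ContDiff ℝ (⊤ : ℕ∞) u) (hv : ContDiff ℝ (⊤ : ℕ∞) v)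
    (hv' : ContDiff ℝ (⊤ : ℕ∞) v') (hζ : ContDiff ℝ (⊤ : ℕ∞) ζ) (kζ : HasCompactSupport ζ)
    (w0 : Wt 0 v) (w0' : Wt 0 v') (wγ : Wt γ u) {h h' : ℝ → X} {k q q' j : X} {a b : ℂ}
    (t x : ℝ) :
    (Real.exp (-γ * x) : ℂ) * rhs a b (cut 0 v ζ χ t) (cut 0 v' ζ χ t) (cut γ u ζ χ t)
        (h t) (h' t) k x
      + (Real.exp (-N * x) : ℂ) * rhs a b (wt 0 v) (wt 0 v') (src N γ v v' u ζ χ h h' t) q q' j x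
    = -(a + b) * ((Real.exp (-γ * x) : ℂ) * k x + (Real.exp (-N * x) : ℂ) * j x)
      - a * b * ((Real.exp (-γ * x) : ℂ) * h t x + (Real.exp (-N * x) : ℂ) * q x)
      + v x * ((Real.exp (-γ * x) : ℂ) * h t x + (Real.exp (-N * x) : ℂ) * q x)
      + v' x * ((Real.exp (-γ * x) : ℂ) * h' t x + (Real.exp (-N * x) : ℂ) * q' x) + u x := by
  have cz : ∀ c, Wt c (fun x => v x * ζ x) := fun c => Wt.of_compact (hv.mul hζ) kζ.mul_left
  have cz' : ∀ c, Wt c (fun x => v' x * ζ x) := fun c => Wt.of_compact (hv'.mul hζ) kζ.mul_left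
  have czu : ∀ c, Wt c (fun x => u x * ζ x) := fun c => Wt.of_compact (hu.mul hζ) kζ.mul_left
  rw [rhs_apply, rhs_apply, cut_apply w0 (cz 0), cut_apply w0' (cz' 0), cut_apply wγ (czu γ)]
  simp only [src, BoundedContinuousFunction.coe_add, Pi.add_apply,
    BoundedContinuousFunction.coe_mul, Pi.mul_apply, cst_apply, wt_apply w0, wt_apply w0',
    wt_apply (cz _), wt_apply (cz' _), wt_apply (czu _)]
  have e1 : Real.exp ((N - γ) * x) = Real.exp (-γ * x) * (Real.exp (-N * x))⁻¹ := by
    rw [← Real.exp_neg, ← Real.exp_add]; congr 1; ring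
  have e2 : Real.exp (N * x) = (Real.exp (-N * x))⁻¹ := by
    rw [← Real.exp_neg]; congr 1; ring
  have e3 : Real.exp (γ * x) = (Real.exp (-γ * x))⁻¹ := by
    rw [← Real.exp_neg]; congr 1; ring
  rw [e1, e2, e3]
  have n1 : (Real.exp (-γ * x) : ℂ) ≠ 0 := by exact_mod_cast (Real.exp_pos _).ne'
  have n2 : (Real.exp (-N * x) : ℂ) ≠ 0 := by exact_mod_cast (Real.exp_pos _).ne'
  generalize Real.exp (-γ * x) = E at *
  generalize Real.exp (-N * x) = F at *
  simp only [zero_mul, Real.exp_zero]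
  push_cast
  field_simp
  ring

lemma src_XSym {γ N : ℝ} {v v' u ζ χ : ℝ → ℝ} (hu : ContDiff ℝ (⊤ : ℕ∞) u)
    (hv : ContDiff ℝ (⊤ : ℕ∞) v)
    (hv' : ContDiff ℝ (⊤ : ℕ∞) v') (hζ : ContDiff ℝ (⊤ : ℕ∞) ζ) (kζ : HasCompactSupport ζ)
    (sχ : Sym 0 χ) {h h' : ℝ → X} {n : ℕ} (xh : XSym γ n (-1) h) (xh' : XSym γ n (-1) h') :
    XSym N n 0 (src N γ v v' u ζ χ h h') := by
  have cz : ∀ c, Wt c (fun x => v x * ζ x) := fun c => Wt.of_compact (hv.mul hζ) kζ.mul_left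
  have cz' : ∀ c, Wt c (fun x => v' x * ζ x) := fun c => Wt.of_compact (hv'.mul hζ) kζ.mul_left
  have czu : ∀ c, Wt c (fun x => u x * ζ x) := fun c => Wt.of_compact (hu.mul hζ) kζ.mul_left
  have e1 := ((wt_XSym (cz (N - γ)) n).mul xh).mono (show (0 + -1 : ℤ) ≤ 0 by norm_num)
  have e2 := ((wt_XSym (cz' (N - γ)) n).mul xh').mono (show (0 + -1 : ℤ) ≤ 0 by norm_num)
  rw [sub_add_cancel] at e1 e2
  exact XSym.cmul (sym_ofReal sχ) ((e1.add e2).add (wt_XSym (czu N) n))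

lemma Dx_zero (c : ℝ) : Dx c 0 0 := by
  intro x
  simpa using hasDerivAt_const x (0 : ℂ)

lemma rhs_zero (a b : ℂ) (q q' : X) : rhs a b q q' 0 0 0 0 = 0 := by
  simp [rhs]

lemma profile {γ : ℝ} {V₁ V₂ : ℝ → ℝ} (hV : PotentialHyp γ V₁ V₂) :
    ∃ N : ℝ, γ ≤ N ∧ ∃ h₁ h₂ k₁ k₂ r₁ r₂ q₁ q₂ j₁ j₂ s₁ s₂ : ℝ → X,
      (∀ n, XSym γ n (-1) h₁) ∧ (∀ n, XSym γ n (-1) h₂) ∧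
      (∀ n, XSym N n (-1) q₁) ∧ (∀ n, XSym N n (-1) q₂) ∧
      (∀ t, Dx γ (h₁ t) (k₁ t)) ∧ (∀ t, Dx γ (h₂ t) (k₂ t)) ∧
      (∀ t, Dx γ (k₁ t) (r₁ t)) ∧ (∀ t, Dx γ (k₂ t) (r₂ t)) ∧
      (∀ t, Dx N (q₁ t) (j₁ t)) ∧ (∀ t, Dx N (q₂ t) (j₂ t)) ∧
      (∀ t, Dx N (j₁ t) (s₁ t)) ∧ (∀ t, Dx N (j₂ t) (s₂ t)) ∧
      (∀ t x, (Real.exp (-γ * x) : ℂ) * r₁ t x + (Real.exp (-N * x) : ℂ) * s₁ t x =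
        -(2 * mu t) * ((Real.exp (-γ * x) : ℂ) * k₁ t x + (Real.exp (-N * x) : ℂ) * j₁ t x)
        - (mu t ^ 2 + t ^ 2) *
          ((Real.exp (-γ * x) : ℂ) * h₁ t x + (Real.exp (-N * x) : ℂ) * q₁ t x)
        + V₁ x * ((Real.exp (-γ * x) : ℂ) * h₁ t x + (Real.exp (-N * x) : ℂ) * q₁ t x)
        + V₂ x * ((Real.exp (-γ * x) : ℂ) * h₂ t x + (Real.exp (-N * x) : ℂ) * q₂ t x)
        + V₂ x) ∧
      (∀ t x, (Real.exp (-γ * x) : ℂ) * r₂ t x + (Real.exp (-N * x) : ℂ) * s₂ t x =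
        -(2 * mu t) * ((Real.exp (-γ * x) : ℂ) * k₂ t x + (Real.exp (-N * x) : ℂ) * j₂ t x)
        + V₁ x * ((Real.exp (-γ * x) : ℂ) * h₂ t x + (Real.exp (-N * x) : ℂ) * q₂ t x)
        + V₂ x * ((Real.exp (-γ * x) : ℂ) * h₁ t x + (Real.exp (-N * x) : ℂ) * q₁ t x)
        + V₁ x) := by
  obtain ⟨h0, h1, cV₁, cV₂, -, -, hb⟩ := hV
  have hb₁ : ∀ k : ℕ, ∃ C : ℝ, ∀ x, |iteratedDeriv k V₁ x| ≤ C * Real.exp (-γ * |x|) := by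
    intro k
    obtain ⟨C, hC⟩ := hb k
    exact ⟨C, fun x => by linarith [hC x, abs_nonneg (iteratedDeriv k V₂ x)]⟩
  have hb₂ : ∀ k : ℕ, ∃ C : ℝ, ∀ x, |iteratedDeriv k V₂ x| ≤ C * Real.exp (-γ * |x|) := by
    intro k
    obtain ⟨C, hC⟩ := hb k
    exact ⟨C, fun x => by linarith [hC x, abs_nonneg (iteratedDeriv k V₁ x)]⟩
  obtain ⟨C₀, hC₀, bV₁, bV₂⟩ : ∃ C₀ : ℝ, 0 ≤ C₀ ∧ (∀ x, |V₁ x| ≤ C₀ * Real.exp (-γ * |x|)) ∧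
      (∀ x, |V₂ x| ≤ C₀ * Real.exp (-γ * |x|)) := by
    obtain ⟨C, hC⟩ := hb 0
    simp only [iteratedDeriv_zero] at hC
    have hC0 : 0 ≤ C := by
      have := hC 0
      simp at this
      linarith [abs_nonneg (V₁ 0), abs_nonneg (V₂ 0)]
    exact ⟨C, hC0, fun x => by linarith [hC x, abs_nonneg (V₂ x)],
      fun x => by linarith [hC x, abs_nonneg (V₁ x)]⟩
  have w01 : Wt 0 V₁ := Wt.of_decay le_rfl h0.le cV₁ hb₁
  have w02 : Wt 0 V₂ := Wt.of_decay le_rfl h0.le cV₂ hb₂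
  have wg1 : Wt γ V₁ := Wt.of_decay h0.le le_rfl cV₁ hb₁
  have wg2 : Wt γ V₂ := Wt.of_decay h0.le le_rfl cV₂ hb₂
  set K : ℝ := 16 + 4 * γ⁻¹ with hK
  have Kp : 0 < K := by have := inv_pos.2 h0; linarith
  set Λ : ℝ := 4 * K * C₀ + 1 with hΛ
  have Λ1 : 1 ≤ Λ := by have : 0 ≤ K * C₀ := by positivity
                        linarith
  have Λp : 0 < Λ := by linarith
  obtain ⟨ζ, cζ, kζ, ζ0, ζ1, ζe, -⟩ := exists_bump (div_pos Λp h0)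
  obtain ⟨χ, cχ, kχ, χ0, χ1, χe, χz⟩ := exists_bump Λp
  obtain ⟨χ', cχ', kχ', χ0', χ1', χe', -⟩ := exists_bump (show 0 < Λ + 1 by linarith)
  have hχ' : ∀ t, χ t ≠ 0 → χ' t = 1 := by
    intro t ht
    apply χe'
    by_contra hh
    exact ht (χz t (not_le.1 hh).le)
  have sχ : Sym 0 χ := Sym.of_compact cχ kχ
  have cz1 : ∀ c, Wt c (fun x => V₁ x * ζ x) := fun c => Wt.of_compact (cV₁.mul cζ) kζ.mul_left
  have cz2 : ∀ c, Wt c (fun x => V₂ x * ζ x) := fun c => Wt.of_compact (cV₂.mul cζ) kζ.mul_left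
  -- step 1
  obtain ⟨h₁, h₂, k₁, k₂, xh₁, xh₂, dh₁, dh₂, dk₁, dk₂⟩ := step1 h0 h1
    (cut_XSym w01 (cz1 0) sχ) (cut_XSym w02 (cz2 0) sχ)
    (cut_XSym wg2 (cz2 γ) sχ) (cut_XSym wg1 (cz1 γ) sχ) (by
      intro t
      have e1 := cut_norm h0 hC₀ Λ1 w01 (cz1 0) bV₁ ζ0 ζ1 ζe χ0 χ1 χe t
      have e2 := cut_norm h0 hC₀ Λ1 w02 (cz2 0) bV₂ ζ0 ζ1 ζe χ0 χ1 χe t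
      have e3 : K * (C₀ * Λ⁻¹ + C₀ * Λ⁻¹) ≤ 1 / 2 := by
        rw [← add_mul, ← mul_assoc, ← div_eq_mul_inv, div_le_iff₀ Λp]
        linarith
      calc K * (mu t)⁻¹ * (‖cut 0 V₁ ζ χ t‖ + ‖cut 0 V₂ ζ χ t‖)
          = K * ((mu t)⁻¹ * ‖cut 0 V₁ ζ χ t‖ + (mu t)⁻¹ * ‖cut 0 V₂ ζ χ t‖) := by ring
        _ ≤ K * (C₀ * Λ⁻¹ + C₀ * Λ⁻¹) := mul_le_mul_of_nonneg_left (add_le_add e1 e2) Kp.le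
        _ ≤ _ := e3)
  -- step 2
  have cmu : ContDiff ℝ (⊤ : ℕ∞) mu := mu_contDiff
  have cν : ContDiff ℝ (⊤ : ℕ∞) (fun t => χ' t * mu t) := cχ'.mul cmu
  have cτ : ContDiff ℝ (⊤ : ℕ∞) (fun t => χ' t * t) := cχ'.mul contDiff_id
  have kν : HasCompactSupport (fun t => χ' t * mu t) := kχ'.mul_right
  have kτ : HasCompactSupport (fun t => χ' t * t) := kχ'.mul_right
  obtain ⟨M, hM⟩ := kν.exists_bound_of_continuous cν.continuous
  have hM' : ∀ t, χ' t * mu t ≤ M := fun t => (le_abs_self _).trans (hM t)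
  have M0 : 0 ≤ M := (norm_nonneg _).trans (hM 0)
  set L : ℝ := 4 * C₀ + 1 with hL
  set N : ℝ := 2 * M + L with hN
  have ex : ∀ x : ℝ, Real.exp (-γ * |x|) ≤ 1 := by
    intro x
    rw [Real.exp_le_one_iff]; nlinarith [abs_nonneg x]
  have n1 : ‖wt 0 V₁‖ ≤ C₀ := wt_norm_le w01 hC₀ (fun x => by
    simpa using (bV₁ x).trans (mul_le_of_le_one_right hC₀ (ex x)))
  have n2 : ‖wt 0 V₂‖ ≤ C₀ := wt_norm_le w02 hC₀ (fun x => by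
    simpa using (bV₂ x).trans (mul_le_of_le_one_right hC₀ (ex x)))
  obtain ⟨q₁, q₂, j₁, j₂, xq₁, xq₂, dq₁, dq₂, dj₁, dj₂, hz⟩ :=
    step2 (N := N) (L := L) (by linarith) cν cτ kν kτ
    (fun t => mul_nonneg (χ0' t) (mu_nonneg t)) (fun t => by linarith [hM' t])
    (wt_XSym w01) (wt_XSym w02)
    (fun n => src_XSym (N := N) cV₂ cV₁ cV₂ cζ kζ sχ (xh₁ n) (xh₂ n))
    (fun n => src_XSym (N := N) cV₁ cV₁ cV₂ cζ kζ sχ (xh₂ n) (xh₁ n))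
    (by
      intro t
      have : 0 < L := by linarith
      rw [inv_mul_le_iff₀ this]
      linarith)
  have hzero : ∀ t, χ t = 0 → q₁ t = 0 ∧ q₂ t = 0 := fun t ht =>
    hz t (by simp [src, ht]) (by simp [src, ht])
  have dj₁' : ∀ t, Dx N (j₁ t) (rhs (mu t + t * Complex.I) (mu t - t * Complex.I)
      (wt 0 V₁) (wt 0 V₂) (src N γ V₁ V₂ V₂ ζ χ h₁ h₂ t) (q₁ t) (q₂ t) (j₁ t)) := by
    intro t
    by_cases ht : χ t = 0
    · have e0 : src N γ V₁ V₂ V₂ ζ χ h₁ h₂ t = 0 := by simp [src, ht]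
      obtain ⟨e1, e2⟩ := hzero t ht
      have e3 : j₁ t = 0 := Dx.unique (h := 0) (by have := dq₁ t; rwa [e1] at this) (Dx_zero N)
      rw [e0, e1, e2, e3, rhs_zero]
      exact Dx_zero N
    · have := dj₁ t
      simp only [hχ' t ht, one_mul] at this
      exact this
  have dj₂' : ∀ t, Dx N (j₂ t) (rhs 0 (2 * mu t)
      (wt 0 V₁) (wt 0 V₂) (src N γ V₁ V₂ V₁ ζ χ h₂ h₁ t) (q₂ t) (q₁ t) (j₂ t)) := by
    intro t
    by_cases ht : χ t = 0
    · have e0 : src N γ V₁ V₂ V₁ ζ χ h₂ h₁ t = 0 := by simp [src, ht]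
      obtain ⟨e1, e2⟩ := hzero t ht
      have e3 : j₂ t = 0 := Dx.unique (h := 0) (by have := dq₂ t; rwa [e2] at this) (Dx_zero N)
      rw [e0, e1, e2, e3, rhs_zero]
      exact Dx_zero N
    · have := dj₂ t
      simp only [hχ' t ht, one_mul] at this
      exact this
  have up : ∀ q : ℝ → X, (∀ n, XSym N n 0 q) → (∀ t, χ t = 0 → q t = 0) →
      ∀ n, XSym N n (-1) q := by
    intro q xq hq n
    have e1 := XSym.cmul (sym_ofReal (Sym.of_compact (m := -1) cχ' kχ')) (xq n)
    have e2 : (fun t => cst ((χ' t : ℝ) : ℂ) * q t) = q := by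
      funext t
      by_cases ht : χ t = 0
      · rw [hq t ht, mul_zero]
      · rw [hχ' t ht]; ext x; simp
    rw [e2] at e1
    exact e1.mono (by norm_num)
  refine ⟨N, by linarith, h₁, h₂, k₁, k₂, _, _, q₁, q₂, j₁, j₂, _, _, xh₁, xh₂,
    up _ xq₁ (fun t ht => (hzero t ht).1), up _ xq₂ (fun t ht => (hzero t ht).2), dh₁, dh₂,
    dk₁, dk₂, dq₁, dq₂, dj₁', dj₂', ?_, ?_⟩
  · intro t x
    rw [combine cV₂ cV₁ cV₂ cζ kζ w01 w02 wg2]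
    have : (mu t + t * Complex.I : ℂ) * (mu t - t * Complex.I) = mu t ^ 2 + t ^ 2 := by
      ring_nf; rw [Complex.I_sq]; ring
    rw [this]
    ring
  · intro t x
    rw [combine cV₁ cV₁ cV₂ cζ kζ w01 w02 wg1]
    ring

end S6

namespace S6
open Filter Topology Set

/-! ### Final assembly -/

lemma iteratedDeriv_clm {E F : Type*} [NormedAddCommGroup E] [NormedSpace ℝ E]
    [NormedAddCommGroup F] [NormedSpace ℝ F] (L : E →L[ℝ] F) (n : ℕ) {f : ℝ → E}
    (hf : ContDiff ℝ (⊤ : ℕ∞) f) (x : ℝ) :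
    iteratedDeriv n (fun y => L (f y)) x = L (iteratedDeriv n f x) := by
  induction n generalizing f with
  | zero => simp
  | succ n ih =>
    rw [iteratedDeriv_succ', iteratedDeriv_succ', ← ih (contDiff_infty_iff_deriv.1 hf).2]
    congr 1
    funext y
    exact (L.hasFDerivAt.comp_hasDerivAt y
      ((hf.differentiable (by simp)) y).hasDerivAt).deriv

/-- `e^{-cx} h(x)` as a continuous linear function of `h`. -/
def ev (c x : ℝ) : X →L[ℝ] ℂ := Real.exp (-c * x) • BoundedContinuousFunction.evalCLM ℝ x

lemma ev_apply (c x : ℝ) (h : X) : ev c x h = (Real.exp (-c * x) : ℂ) * h x := by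
  simp [ev]

lemma ev_norm_le {γ c x : ℝ} (hc : γ ≤ c) (hx : 0 ≤ x) (h : X) :
    ‖ev c x h‖ ≤ Real.exp (-γ * x) * ‖h‖ := by
  rw [ev_apply, norm_mul, Complex.norm_real, Real.norm_eq_abs, abs_of_pos (Real.exp_pos _)]
  apply mul_le_mul _ (h.norm_coe_le_norm x) (norm_nonneg _) (Real.exp_pos _).le
  rw [Real.exp_le_exp]
  nlinarith

lemma weighted_contDiff {c : ℝ} {m : ℤ} {h : ℝ → X} (H : ∀ n, XSym c n m h) (t : ℝ) :
    ContDiff ℝ (⊤ : ℕ∞) (fun y : ℝ => (Real.exp (-c * y) : ℂ) * h t y) := by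
  have h1 : ContDiff ℝ (⊤ : ℕ∞) (fun y : ℝ => (Real.exp (-c * y) : ℂ)) :=
    Complex.ofRealCLM.contDiff.comp (Real.contDiff_exp.comp (contDiff_const.mul contDiff_id))
  have h2 : ContDiff ℝ (⊤ : ℕ∞) (fun y : ℝ => h t y) :=
    (joint_contDiff (fun n => ⟨m, H n⟩)).comp (contDiff_id.prodMk contDiff_const)
  exact h1.mul h2

/-- One component, differentiated in both variables. -/
lemma term_bound {γ c : ℝ} (hc : γ ≤ c) {m : ℤ} {h : ℝ → X} (H : ∀ n, XSym c n m h) (k l : ℕ)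
    (J : ℂ →L[ℝ] ℂ × ℂ) (hJ : ∀ z, ‖J z‖ ≤ ‖z‖) : ∃ C : ℝ, 0 ≤ C ∧ ∃ G : ℝ → ℝ → ℂ × ℂ,
      (∀ t x, iteratedDeriv k (fun y : ℝ => J ((Real.exp (-c * y) : ℂ) * h t y)) x = G t x) ∧
      (∀ x, ContDiff ℝ (⊤ : ℕ∞) (fun t => G t x)) ∧
      ∀ t x, 0 ≤ x → ‖iteratedDeriv l (fun s => G s x) t‖
        ≤ C * mu t ^ (m + k) * Real.exp (-γ * x) := by
  obtain ⟨hn, sn, he⟩ := (H k).iteratedDeriv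
  obtain ⟨C, hC, hb⟩ := (sn l).2 l le_rfl
  refine ⟨C, hC, fun t x => (J.comp (ev c x)) (hn t), ?_, ?_, ?_⟩
  · intro t x
    rw [iteratedDeriv_clm J k (weighted_contDiff H t), he, ← ev_apply]
    rfl
  · intro x
    exact (sn.clm (J.comp (ev c x))).contDiff
  · intro t x hx
    rw [iteratedDeriv_clm (J.comp (ev c x)) l sn.contDiff]
    refine (hJ _).trans ((ev_norm_le hc hx _).trans ?_)
    rw [mul_comm]
    exact mul_le_mul_of_nonneg_right (hb t) (Real.exp_pos _).le

lemma iteratedDeriv_four {E : Type*} [NormedAddCommGroup E] [NormedSpace ℝ E] {f₁ f₂ f₃ f₄ : ℝ → E}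
    (n : ℕ) (c₁ : ContDiff ℝ (⊤ : ℕ∞) f₁) (c₂ : ContDiff ℝ (⊤ : ℕ∞) f₂)
    (c₃ : ContDiff ℝ (⊤ : ℕ∞) f₃) (c₄ : ContDiff ℝ (⊤ : ℕ∞) f₄) (x : ℝ) :
    iteratedDeriv n (fun y => f₁ y + f₂ y + f₃ y + f₄ y) x =
      iteratedDeriv n f₁ x + iteratedDeriv n f₂ x + iteratedDeriv n f₃ x + iteratedDeriv n f₄ x := by
  have g : ∀ {f : ℝ → E}, ContDiff ℝ (⊤ : ℕ∞) f → ContDiffAt ℝ n f x := fun h =>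
    (h.of_le (by exact_mod_cast le_top)).contDiffAt
  rw [iteratedDeriv_fun_add (g ((c₁.add c₂).add c₃)) (g c₄),
    iteratedDeriv_fun_add (g (c₁.add c₂)) (g c₃), iteratedDeriv_fun_add (g c₁) (g c₂)]

lemma second_deriv (m : ℝ) {W W' W'' : ℝ → ℂ} (h1 : ∀ x, HasDerivAt W (W' x) x)
    (h2 : ∀ x, HasDerivAt W' (W'' x) x) (x : ℝ) :
    iteratedDeriv 2 (fun y : ℝ => (Real.exp (m * y) : ℂ) * W y) x =
      (Real.exp (m * x) : ℂ) * (W'' x + 2 * m * W' x + m ^ 2 * W x) := by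
  have he : ∀ x : ℝ, HasDerivAt (fun y : ℝ => (Real.exp (m * y) : ℂ))
      ((Real.exp (m * x) * m : ℝ) : ℂ) x := by
    intro x
    have : HasDerivAt (fun y : ℝ => m * y) m x := by
      simpa using (hasDerivAt_id x).const_mul m
    exact this.exp.ofReal_comp
  have d1 : deriv (fun y : ℝ => (Real.exp (m * y) : ℂ) * W y) =
      fun y : ℝ => (Real.exp (m * y) : ℂ) * (m * W y + W' y) := by
    funext y
    refine ((he y).mul (h1 y)).deriv.trans ?_
    push_cast; ring
  rw [iteratedDeriv_succ, iteratedDeriv_one, d1]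
  refine ((he x).mul (((h1 x).const_mul (m : ℂ)).add (h2 x))).deriv.trans ?_
  push_cast
  simp only [Pi.add_apply]
  ring

end S6

theorem stmt_6 (γ : ℝ) (V₁ V₂ : ℝ → ℝ) (hV : PotentialHyp γ V₁ V₂) :
    ∃ x1 lam1 : ℝ, 0 ≤ x1 ∧ 0 ≤ lam1 ∧
      ∃ f₄t : ℝ → ℝ → ℂ × ℂ,
        ContDiff ℝ (⊤ : ℕ∞) (fun p : ℝ × ℝ => f₄t p.1 p.2) ∧
        (∀ lam : ℝ, IsSolution V₁ V₂ (((1 + lam ^ 2 : ℝ) : ℂ)) (fun x => f₄t x lam)) ∧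
        (∀ k l : ℕ, ∃ C : ℝ,
          (∀ lam x : ℝ, x1 ≤ x →
            ‖iteratedDeriv l
                (fun m : ℝ => iteratedDeriv k
                  (fun y : ℝ => Real.exp (-(mu m) * y) • f₄t y m
                    - ((0 : ℂ), (1 : ℂ))) x) lam‖
              ≤ C * mu lam ^ ((k : ℝ) - 1) * (1 + x) ^ l * Real.exp (-γ * x)) ∧
          (∀ lam x : ℝ, lam1 ≤ |lam| → 0 ≤ x →
            ‖iteratedDeriv l
                (fun m : ℝ => iteratedDeriv k
                  (fun y : ℝ => Real.exp (-(mu m) * y) • f₄t y m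
                    - ((0 : ℂ), (1 : ℂ))) x) lam‖
              ≤ C * mu lam ^ ((k : ℝ) - 1) * (1 + x) ^ l * Real.exp (-γ * x))) := by
  obtain ⟨N, hN, h₁, h₂, k₁, k₂, r₁, r₂, q₁, q₂, j₁, j₂, s₁, s₂, xh₁, xh₂, xq₁, xq₂, dh₁, dh₂,
    dk₁, dk₂, dq₁, dq₂, dj₁, dj₂, eq₁, eq₂⟩ := S6.profile hV
  set W : (ℝ → S6.X) → (ℝ → S6.X) → ℝ → ℝ → ℂ := fun h q t y =>
    (Real.exp (-γ * y) : ℂ) * h t y + (Real.exp (-N * y) : ℂ) * q t y with hW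
  have dW : ∀ {h k q j : ℝ → S6.X}, (∀ t, S6.Dx γ (h t) (k t)) → (∀ t, S6.Dx N (q t) (j t)) →
      ∀ t x, HasDerivAt (W h q t) (W k j t x) x := fun a b t x =>
    (S6.weight_hasDerivAt (a t) x).add (S6.weight_hasDerivAt (b t) x)
  set f : ℝ → ℝ → ℂ × ℂ := fun x t =>
    ((Real.exp (mu t * x) : ℂ) * W h₁ q₁ t x, (Real.exp (mu t * x) : ℂ) * (W h₂ q₂ t x + 1)) with hf
  have cexp : ContDiff ℝ (⊤ : ℕ∞) (fun p : ℝ × ℝ => (Real.exp (mu p.2 * p.1) : ℂ)) :=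
    Complex.ofRealCLM.contDiff.comp (Real.contDiff_exp.comp
      ((S6.mu_contDiff.comp contDiff_snd).mul contDiff_fst))
  have cexp' : ∀ c : ℝ, ContDiff ℝ (⊤ : ℕ∞) (fun p : ℝ × ℝ => (Real.exp (-c * p.1) : ℂ)) :=
    fun c => Complex.ofRealCLM.contDiff.comp (Real.contDiff_exp.comp
      (contDiff_const.mul contDiff_fst))
  have cW : ∀ {h q : ℝ → S6.X}, (∀ n, S6.XSym γ n (-1) h) → (∀ n, S6.XSym N n (-1) q) →
      ContDiff ℝ (⊤ : ℕ∞) (fun p : ℝ × ℝ => W h q p.2 p.1) := fun a b =>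
    ((cexp' γ).mul (S6.joint_contDiff fun n => ⟨_, a n⟩)).add
      ((cexp' N).mul (S6.joint_contDiff fun n => ⟨_, b n⟩))
  have cf : ContDiff ℝ (⊤ : ℕ∞) (fun p : ℝ × ℝ => f p.1 p.2) :=
    (cexp.mul (cW xh₁ xq₁)).prodMk (cexp.mul ((cW xh₂ xq₂).add contDiff_const))
  have hsol : ∀ lam : ℝ, IsSolution V₁ V₂ (((1 + lam ^ 2 : ℝ) : ℂ)) (fun x => f x lam) := by
    intro t
    refine ⟨?_, fun x => ?_⟩
    · have : ContDiff ℝ (⊤ : ℕ∞) (fun x => f x t) := cf.comp (contDiff_id.prodMk contDiff_const)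
      exact contDiff_infty.1 this 2
    · have D1 := S6.second_deriv (mu t) (dW dh₁ dq₁ t) (dW dk₁ dj₁ t) x
      have D2 := S6.second_deriv (mu t) (W := fun y => W h₂ q₂ t y + 1)
        (fun y => (dW dh₂ dq₂ t y).add_const 1) (dW dk₂ dj₂ t) x
      have E1 : W r₁ s₁ t x = -(2 * mu t) * W k₁ j₁ t x - (mu t ^ 2 + t ^ 2) * W h₁ q₁ t x
        + V₁ x * W h₁ q₁ t x + V₂ x * W h₂ q₂ t x + V₂ x := eq₁ t x
      have E2 : W r₂ s₂ t x = -(2 * mu t) * W k₂ j₂ t x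
        + V₁ x * W h₂ q₂ t x + V₂ x * W h₁ q₁ t x + V₁ x := eq₂ t x
      have M2 : (mu t : ℂ) ^ 2 = t ^ 2 + 2 := by exact_mod_cast S6.mu_sq t
      rw [E1] at D1
      rw [E2] at D2
      unfold matH
      simp only [hf]
      rw [D1, D2, M2]
      refine Prod.ext ?_ ?_
      · simp only [Prod.smul_fst, smul_eq_mul]
        push_cast; ring
      · simp only [Prod.smul_snd, smul_eq_mul]
        push_cast; ring
  have hest : ∀ k l : ℕ, ∃ C : ℝ, ∀ lam x : ℝ, 0 ≤ x →
      ‖iteratedDeriv l (fun m : ℝ => iteratedDeriv k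
        (fun y : ℝ => Real.exp (-(mu m) * y) • f y m - ((0 : ℂ), (1 : ℂ))) x) lam‖
      ≤ C * mu lam ^ ((k : ℝ) - 1) * (1 + x) ^ l * Real.exp (-γ * x) := by
    intro k l
    set I₁ : ℂ →L[ℝ] ℂ × ℂ := ContinuousLinearMap.inl ℝ ℂ ℂ with hI₁
    set I₂ : ℂ →L[ℝ] ℂ × ℂ := ContinuousLinearMap.inr ℝ ℂ ℂ with hI₂
    have nI₁ : ∀ z, ‖I₁ z‖ ≤ ‖z‖ := fun z => by simp [hI₁, Prod.norm_def]
    have nI₂ : ∀ z, ‖I₂ z‖ ≤ ‖z‖ := fun z => by simp [hI₂, Prod.norm_def]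
    obtain ⟨C₁, p₁, G₁, e₁, c₁, b₁⟩ := S6.term_bound le_rfl xh₁ k l I₁ nI₁
    obtain ⟨C₂, p₂, G₂, e₂, c₂, b₂⟩ := S6.term_bound hN xq₁ k l I₁ nI₁
    obtain ⟨C₃, p₃, G₃, e₃, c₃, b₃⟩ := S6.term_bound le_rfl xh₂ k l I₂ nI₂
    obtain ⟨C₄, p₄, G₄, e₄, c₄, b₄⟩ := S6.term_bound hN xq₂ k l I₂ nI₂
    refine ⟨C₁ + C₂ + C₃ + C₄, fun t x hx => ?_⟩
    have key : (fun m : ℝ => iteratedDeriv k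
        (fun y : ℝ => Real.exp (-(mu m) * y) • f y m - ((0 : ℂ), (1 : ℂ))) x)
        = fun m => G₁ m x + G₂ m x + G₃ m x + G₄ m x := by
      funext m
      have : (fun y : ℝ => Real.exp (-(mu m) * y) • f y m - ((0 : ℂ), (1 : ℂ))) = fun y : ℝ =>
          I₁ ((Real.exp (-γ * y) : ℂ) * h₁ m y) + I₁ ((Real.exp (-N * y) : ℂ) * q₁ m y)
          + I₂ ((Real.exp (-γ * y) : ℂ) * h₂ m y) + I₂ ((Real.exp (-N * y) : ℂ) * q₂ m y) := by
        funext y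
        have ee : (Real.exp (-(mu m) * y) : ℂ) * (Real.exp (mu m * y) : ℂ) = 1 := by
          rw [← Complex.ofReal_mul, ← Real.exp_add]; simp
        refine Prod.ext ?_ ?_
        · simp only [hf, hW, hI₁, hI₂, Prod.fst_sub, Prod.fst_add, Prod.smul_fst,
            Complex.real_smul, ContinuousLinearMap.inl_apply, ContinuousLinearMap.inr_apply]
          rw [← mul_assoc, ee]; ring
        · simp only [hf, hW, hI₁, hI₂, Prod.snd_sub, Prod.snd_add, Prod.smul_snd,
            Complex.real_smul, ContinuousLinearMap.inl_apply, ContinuousLinearMap.inr_apply]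
          rw [← mul_assoc, ee]; ring
      rw [this]
      refine (S6.iteratedDeriv_four k (I₁.contDiff.comp (S6.weighted_contDiff xh₁ m))
        (I₁.contDiff.comp (S6.weighted_contDiff xq₁ m))
        (I₂.contDiff.comp (S6.weighted_contDiff xh₂ m))
        (I₂.contDiff.comp (S6.weighted_contDiff xq₂ m)) x).trans ?_
      have u₁ := e₁ m x
      have u₂ := e₂ m x
      have u₃ := e₃ m x
      have u₄ := e₄ m x
      rw [← u₁, ← u₂, ← u₃, ← u₄]
      rfl
    rw [key, S6.iteratedDeriv_four l (c₁ x) (c₂ x) (c₃ x) (c₄ x)]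
    have hpow : mu t ^ ((k : ℝ) - 1) = mu t ^ ((-1 : ℤ) + k) := by
      rw [← Real.rpow_intCast]; congr 1; push_cast; ring
    have h1x : 1 ≤ (1 + x) ^ l := one_le_pow₀ (by linarith)
    have hm : 0 ≤ mu t ^ ((-1 : ℤ) + k) := zpow_nonneg (S6.mu_nonneg t) _
    have hpos : 0 ≤ (C₁ + C₂ + C₃ + C₄) * mu t ^ ((-1 : ℤ) + k) := by positivity
    rw [hpow]
    calc _ ≤ C₁ * mu t ^ ((-1 : ℤ) + k) * Real.exp (-γ * x)
          + C₂ * mu t ^ ((-1 : ℤ) + k) * Real.exp (-γ * x)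
          + C₃ * mu t ^ ((-1 : ℤ) + k) * Real.exp (-γ * x)
          + C₄ * mu t ^ ((-1 : ℤ) + k) * Real.exp (-γ * x) :=
          norm_add₄_le.trans (add_le_add (add_le_add (add_le_add (b₁ t x hx) (b₂ t x hx))
            (b₃ t x hx)) (b₄ t x hx))
      _ = (C₁ + C₂ + C₃ + C₄) * mu t ^ ((-1 : ℤ) + k) * 1 * Real.exp (-γ * x) := by ring
      _ ≤ _ := by gcongr
  refine ⟨0, 0, le_rfl, le_rfl, f, cf, hsol, fun k l => ?_⟩
  obtain ⟨C, hC⟩ := hest k l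
  exact ⟨C, fun lam x hx => hC lam x hx, fun lam x _ hx => hC lam x hx⟩
end
end

section
/- Let λ ≠ 0, adopt the Jost/matrix-solution setup of the context, and assume in addition that f₃(·,λ) and f̃₄(·,λ) are invariant under componentwise complex conjugation. With A = A(λ), B = B(λ) the unique matrices satisfying F₁ = G₁A + G₂B, the following relations hold (A* denotes the conjugate transpose): (i) −2iλp = −2iλ A*pA − 2μ A*qB + 2μ B*qA + 2iλ B*pB; (ii) Aᵀ(2iλp − 2μq)B = Bᵀ(2iλp − 2μq)A; (iii) 2μ A*q − 2iλ B*p = 2μ qA + 2iλ pB. -/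
noncomputable section

open Real MeasureTheory Matrix

/-- Componentwise complex conjugation of a `ℂ²`-valued function. -/
def conj2 (f : ℝ → ℂ × ℂ) : ℝ → ℂ × ℂ :=
  fun x => (starRingEnd ℂ (f x).1, starRingEnd ℂ (f x).2)

/-- The (bilinear, unconjugated) Wronskian
`W[f,g](x) = f₁'g₁ + f₂'g₂ − f₁g₁' − f₂g₂'`. -/
def Wr (f g : ℝ → ℂ × ℂ) (x : ℝ) : ℂ :=
  deriv (fun y => (f y).1) x * (g x).1 + deriv (fun y => (f y).2) x * (g x).2
    - (f x).1 * deriv (fun y => (g y).1) x - (f x).2 * deriv (fun y => (g y).2) x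

/-- The Jost-type asymptotics of `f₁(·,λ), f₃(·,λ), f̃₄(·,λ)` for a fixed `λ`. -/
def JostAsymp (γ lam : ℝ) (f₁ f₃ f₄t : ℝ → ℂ × ℂ) : Prop :=
  ∃ x0 C : ℝ, 0 ≤ x0 ∧ 0 < C ∧ ∀ j : ℕ, j ≤ 1 → ∀ x : ℝ, x0 ≤ x →
    ‖iteratedDeriv j
        (fun y : ℝ => Complex.exp (-Complex.I * (lam : ℂ) * (y : ℂ)) • f₁ y
          - ((1 : ℂ), (0 : ℂ))) x‖
      ≤ C * mu lam ^ ((j : ℝ) - 1) * Real.exp (-γ * x) ∧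
    ‖iteratedDeriv j
        (fun y : ℝ => Real.exp (mu lam * y) • f₃ y - ((0 : ℂ), (1 : ℂ))) x‖
      ≤ C * mu lam ^ ((j : ℝ) - 1) * Real.exp (-γ * x) ∧
    ‖iteratedDeriv j
        (fun y : ℝ => Real.exp (-(mu lam) * y) • f₄t y - ((0 : ℂ), (1 : ℂ))) x‖
      ≤ C * mu lam ^ ((j : ℝ) - 1) * Real.exp (-γ * x)

/-- Entrywise derivative of a matrix-valued function. -/
def mderiv (F : ℝ → Matrix (Fin 2) (Fin 2) ℂ) (x : ℝ) : Matrix (Fin 2) (Fin 2) ℂ :=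
  Matrix.of fun i j => deriv (fun y => F y i j) x

/-- The matrix Wronskian `𝒲[F,G](x) = F'(x)ᵀ G(x) − F(x)ᵀ G'(x)`. -/
def mWr (F G : ℝ → Matrix (Fin 2) (Fin 2) ℂ) (x : ℝ) : Matrix (Fin 2) (Fin 2) ℂ :=
  (mderiv F x)ᵀ * G x - (F x)ᵀ * mderiv G x

/-- The 2×2 matrix-valued function with columns `u` and `v`. -/
def matOf (u v : ℝ → ℂ × ℂ) (x : ℝ) : Matrix (Fin 2) (Fin 2) ℂ :=
  !![(u x).1, (v x).1; (u x).2, (v x).2]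

/-- `p = diag(1,0)`. -/
def pmat : Matrix (Fin 2) (Fin 2) ℂ := !![1, 0; 0, 0]

/-- `q = diag(0,1)`. -/
def qmat : Matrix (Fin 2) (Fin 2) ℂ := !![0, 0; 0, 1]

/-- `f₄ := f̃₄ − c₁ f₁ − c₂ f₂` where `f₂ = conj2 f₁`. -/
def f4def (f₁ f₄t : ℝ → ℂ × ℂ) (c₁ c₂ : ℂ) : ℝ → ℂ × ℂ :=
  fun y => f₄t y - c₁ • f₁ y - c₂ • conj2 f₁ y

/-- componentwise derivative -/
def dd (f : ℝ → ℂ × ℂ) : ℝ → ℂ × ℂ :=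
  fun x => (deriv (fun y => (f y).1) x, deriv (fun y => (f y).2) x)

/-- first-order-system form of being a solution, with derivative data -/
def Sol (V₁ V₂ : ℝ → ℝ) (z : ℝ) (f : ℝ → ℂ × ℂ) : Prop :=
  ∀ x, HasDerivAt (fun y => (f y).1) (dd f x).1 x ∧ HasDerivAt (fun y => (f y).2) (dd f x).2 x ∧
    HasDerivAt (fun y => (dd f y).1) ((1 + V₁ x - z) * (f x).1 + V₂ x * (f x).2) x ∧
    HasDerivAt (fun y => (dd f y).2) ((1 + V₁ x + z) * (f x).2 + V₂ x * (f x).1) x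

lemma sol_of (V₁ V₂ : ℝ → ℝ) (z : ℝ) (f : ℝ → ℂ × ℂ) (h : IsSolution V₁ V₂ (z : ℂ) f) :
    Sol V₁ V₂ z f := by
  obtain ⟨hc, he⟩ := h
  have c1 : ContDiff ℝ 2 (fun y => (f y).1) := hc.fst
  have c2 : ContDiff ℝ 2 (fun y => (f y).2) := hc.snd
  have d1 : ContDiff ℝ 1 (deriv (fun y => (f y).1)) :=
    ((contDiff_succ_iff_deriv (n := 1)).1 (by simpa [one_add_one_eq_two] using c1)).2.2
  have d2 : ContDiff ℝ 1 (deriv (fun y => (f y).2)) :=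
    ((contDiff_succ_iff_deriv (n := 1)).1 (by simpa [one_add_one_eq_two] using c2)).2.2
  intro x
  have e := he x
  simp only [matH, Prod.ext_iff, Prod.smul_fst, Prod.smul_snd, smul_eq_mul,
    iteratedDeriv_succ, iteratedDeriv_zero] at e
  refine ⟨(c1.differentiable (by norm_num) x).hasDerivAt,
    (c2.differentiable (by norm_num) x).hasDerivAt, ?_, ?_⟩
  · exact (d1.differentiable (by norm_num) x).hasDerivAt.congr_deriv (by linear_combination -e.1)
  · exact (d2.differentiable (by norm_num) x).hasDerivAt.congr_deriv (by linear_combination e.2)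

lemma hasDerivAt_conj {u : ℝ → ℂ} {u' : ℂ} {x : ℝ} (h : HasDerivAt u u' x) :
    HasDerivAt (fun y => starRingEnd ℂ (u y)) (starRingEnd ℂ u') x := by
  simpa using h.star

lemma dd_conj {V₁ V₂ : ℝ → ℝ} {z : ℝ} {f : ℝ → ℂ × ℂ} (h : Sol V₁ V₂ z f) :
    dd (conj2 f) = conj2 (dd f) := by
  funext x
  obtain ⟨a, b, -, -⟩ := h x
  ext1
  · exact (hasDerivAt_conj a).deriv
  · exact (hasDerivAt_conj b).deriv

lemma Sol.conj {V₁ V₂ : ℝ → ℝ} {z : ℝ} {f : ℝ → ℂ × ℂ} (h : Sol V₁ V₂ z f) :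
    Sol V₁ V₂ z (conj2 f) := by
  intro x
  rw [dd_conj h]
  obtain ⟨a, b, c, d⟩ := h x
  refine ⟨hasDerivAt_conj a, hasDerivAt_conj b, ?_, ?_⟩
  · exact (hasDerivAt_conj c).congr_deriv (by simp [conj2])
  · exact (hasDerivAt_conj d).congr_deriv (by simp [conj2])

lemma Wr_eq (f g : ℝ → ℂ × ℂ) (x : ℝ) : Wr f g x =
    (dd f x).1 * (g x).1 + (dd f x).2 * (g x).2 - (f x).1 * (dd g x).1 - (f x).2 * (dd g x).2 := rfl

lemma Wr_const {V₁ V₂ : ℝ → ℝ} {z : ℝ} {f g : ℝ → ℂ × ℂ} (hf : Sol V₁ V₂ z f)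
    (hg : Sol V₁ V₂ z g) (x y : ℝ) : Wr f g x = Wr f g y := by
  have key : ∀ x, HasDerivAt (Wr f g) 0 x := by
    intro x
    obtain ⟨a, b, c, d⟩ := hf x
    obtain ⟨a', b', c', d'⟩ := hg x
    have := (((c.mul a').add (d.mul b')).sub (a.mul c')).sub (b.mul d')
    exact this.congr_deriv (by ring)
  exact is_const_of_deriv_eq_zero (fun x => (key x).differentiableAt) (fun x => (key x).deriv) x y

lemma Wr_anti (f g : ℝ → ℂ × ℂ) (x : ℝ) : Wr f g x = - Wr g f x := by
  simp only [Wr_eq]; ring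

lemma Wr_conj {V₁ V₂ : ℝ → ℝ} {z : ℝ} {f g : ℝ → ℂ × ℂ} (hf : Sol V₁ V₂ z f)
    (hg : Sol V₁ V₂ z g) (x : ℝ) : Wr (conj2 f) (conj2 g) x = starRingEnd ℂ (Wr f g x) := by
  simp only [Wr_eq, dd_conj hf, dd_conj hg, conj2]
  simp

lemma conj2_conj2 (f : ℝ → ℂ × ℂ) : conj2 (conj2 f) = f := by
  funext x; simp [conj2]

open Filter Topology in
/-- Jost-type asymptotics -/
def JL (a : ℂ) (v : ℂ × ℂ) (f : ℝ → ℂ × ℂ) : Prop :=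
  Tendsto (fun x : ℝ => Complex.exp (-a * x) * (f x).1) atTop (𝓝 v.1) ∧
  Tendsto (fun x : ℝ => Complex.exp (-a * x) * (f x).2) atTop (𝓝 v.2) ∧
  Tendsto (fun x : ℝ => Complex.exp (-a * x) * (dd f x).1) atTop (𝓝 (a * v.1)) ∧
  Tendsto (fun x : ℝ => Complex.exp (-a * x) * (dd f x).2) atTop (𝓝 (a * v.2))

open Filter Topology in
lemma JL_of {V₁ V₂ : ℝ → ℝ} {z : ℝ} {f : ℝ → ℂ × ℂ} (hf : Sol V₁ V₂ z f) (a : ℂ) (v : ℂ × ℂ)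
    (γ x0 C0 C1 : ℝ) (hγ : 0 < γ)
    (h0 : ∀ x, x0 ≤ x → ‖Complex.exp (-a * x) • f x - v‖ ≤ C0 * Real.exp (-γ * x))
    (h1 : ∀ x, x0 ≤ x → ‖deriv (fun y : ℝ => Complex.exp (-a * y) • f y - v) x‖
      ≤ C1 * Real.exp (-γ * x)) : JL a v f := by
  have hexp : ∀ C : ℝ, Tendsto (fun x : ℝ => C * Real.exp (-γ * x)) atTop (𝓝 0) := by
    intro C
    have : Tendsto (fun x : ℝ => Real.exp (-γ * x)) atTop (𝓝 0) :=
      Real.tendsto_exp_atBot.comp (tendsto_id.const_mul_atTop_of_neg (by linarith))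
    simpa using this.const_mul C
  have t0 : Tendsto (fun x : ℝ => Complex.exp (-a * x) • f x - v) atTop (𝓝 0) :=
    squeeze_zero_norm' ((eventually_ge_atTop x0).mono h0) (hexp C0)
  have t1 : Tendsto (fun x : ℝ => deriv (fun y : ℝ => Complex.exp (-a * y) • f y - v) x)
      atTop (𝓝 0) :=
    squeeze_zero_norm' ((eventually_ge_atTop x0).mono h1) (hexp C1)
  have hd : ∀ x : ℝ, deriv (fun y : ℝ => Complex.exp (-a * y) • f y - v) x =
      (Complex.exp (-a * x) * (dd f x).1 - a * (Complex.exp (-a * x) * (f x).1),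
       Complex.exp (-a * x) * (dd f x).2 - a * (Complex.exp (-a * x) * (f x).2)) := by
    intro x
    obtain ⟨p, q, -, -⟩ := hf x
    have he : HasDerivAt (fun y : ℝ => Complex.exp (-a * y)) (Complex.exp (-a * x) * (-a)) x := by
      have : HasDerivAt (fun y : ℝ => -a * (y : ℂ)) (-a) x := by
        simpa using (Complex.ofRealCLM.hasDerivAt (x := x)).const_mul (-a)
      exact this.cexp
    have := ((he.mul p).sub_const v.1).prodMk ((he.mul q).sub_const v.2)
    apply HasDerivAt.deriv
    exact this.congr_deriv (by ext1 <;> simp <;> ring)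
  simp only [hd] at t1
  have a1 : Tendsto (fun x : ℝ => Complex.exp (-a * x) * (f x).1) atTop (𝓝 v.1) := by
    simpa using ((continuous_fst.tendsto _).comp t0).add_const v.1
  have a2 : Tendsto (fun x : ℝ => Complex.exp (-a * x) * (f x).2) atTop (𝓝 v.2) := by
    simpa using ((continuous_snd.tendsto _).comp t0).add_const v.2
  refine ⟨a1, a2, ?_, ?_⟩
  · simpa using ((continuous_fst.tendsto _).comp t1).add (a1.const_mul a)
  · simpa using ((continuous_snd.tendsto _).comp t1).add (a2.const_mul a)

lemma JL.conj {V₁ V₂ : ℝ → ℝ} {z : ℝ} {f : ℝ → ℂ × ℂ} (hf : Sol V₁ V₂ z f) {a : ℂ} {v : ℂ × ℂ}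
    (h : JL a v f) :
    JL (starRingEnd ℂ a) (starRingEnd ℂ v.1, starRingEnd ℂ v.2) (conj2 f) := by
  obtain ⟨p, q, r, s⟩ := h
  have C := fun w : ℂ => Complex.continuous_conj.tendsto w
  rw [JL, dd_conj hf]
  refine ⟨?_, ?_, ?_, ?_⟩
  · convert (C _).comp p using 2; simp [conj2, ← Complex.exp_conj]
  · convert (C _).comp q using 2; simp [conj2, ← Complex.exp_conj]
  · convert (C _).comp r using 2 <;> simp [conj2, ← Complex.exp_conj]
  · convert (C _).comp s using 2 <;> simp [conj2, ← Complex.exp_conj]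

open Filter Topology in
lemma JL_W {f g : ℝ → ℂ × ℂ} {a b : ℂ} {v w : ℂ × ℂ} (hf : JL a v f) (hg : JL b w g) :
    Tendsto (fun x : ℝ => Complex.exp (-(a + b) * x) * Wr f g x) atTop
      (𝓝 ((a - b) * (v.1 * w.1 + v.2 * w.2))) := by
  obtain ⟨p, q, r, s⟩ := hf
  obtain ⟨p', q', r', s'⟩ := hg
  convert (((r.mul p').add (s.mul q')).sub (p.mul r')).sub (q.mul s') using 2
  · rename_i x
    rw [Wr_eq, show -(a + b) * (x : ℂ) = -a * x + -b * x by ring, Complex.exp_add]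
    ring
  · ring

open Filter Topology in
lemma JL_W_eq {V₁ V₂ : ℝ → ℝ} {z : ℝ} {f g : ℝ → ℂ × ℂ} {a b : ℂ} {v w : ℂ × ℂ}
    (sf : Sol V₁ V₂ z f) (sg : Sol V₁ V₂ z g) (hf : JL a v f) (hg : JL b w g)
    (hab : a + b = 0) : Wr f g 0 = (a - b) * (v.1 * w.1 + v.2 * w.2) := by
  have := JL_W hf hg
  simp only [hab, neg_zero, zero_mul, Complex.exp_zero, one_mul, Wr_const sf sg _ 0] at this
  exact tendsto_nhds_unique tendsto_const_nhds this

open Filter Topology in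
lemma JL_W_zero {V₁ V₂ : ℝ → ℝ} {z : ℝ} {f g : ℝ → ℂ × ℂ} {a b : ℂ} {v w : ℂ × ℂ}
    (sf : Sol V₁ V₂ z f) (sg : Sol V₁ V₂ z g) (hf : JL a v f) (hg : JL b w g)
    (hab : (a + b).re < 0) : Wr f g 0 = 0 := by
  have h := JL_W hf hg
  simp only [Wr_const sf sg _ 0] at h
  have he : Tendsto (fun x : ℝ => Complex.exp ((a + b) * x)) atTop (𝓝 0) := by
    rw [tendsto_zero_iff_norm_tendsto_zero]
    simp only [Complex.norm_exp, Complex.mul_re, Complex.ofReal_re, Complex.ofReal_im, mul_zero,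
      sub_zero]
    exact Real.tendsto_exp_atBot.comp (tendsto_id.const_mul_atTop_of_neg hab)
  have := he.mul h
  simp only [← mul_assoc, ← Complex.exp_add] at this
  simp only [← add_mul, add_neg_cancel, zero_mul, Complex.exp_zero, one_mul] at this
  exact tendsto_nhds_unique tendsto_const_nhds this

lemma mat_W (f g h k : ℝ → ℂ × ℂ) (x : ℝ) :
    (matOf (dd f) (dd g) x)ᵀ * matOf h k x - (matOf f g x)ᵀ * matOf (dd h) (dd k) x =
      !![Wr f h x, Wr f k x; Wr g h x, Wr g k x] := by
  ext i j
  fin_cases i <;> fin_cases j <;>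
    simp [matOf, Matrix.mul_apply, Fin.sum_univ_two, Wr_eq] <;> ring

lemma mat_conj (f g : ℝ → ℂ × ℂ) (x : ℝ) :
    (matOf f g x)ᴴ = (matOf (conj2 f) (conj2 g) x)ᵀ := by
  ext i j
  fin_cases i <;> fin_cases j <;> simp [matOf, conj2]

lemma ring_one {R : Type*} [Ring R] (U U' Y Y' T T' S S' A B At Bt : R)
    (hU : U = Y * A + U * B) (hU' : U' = -(Y' * A + U' * B))
    (hT : T = At * S + Bt * T) (hT' : T' = -(At * S' + Bt * T')) :
    T' * U - T * U' = -(At * (S' * Y - S * Y') * A + At * (S' * U - S * U') * B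
      + Bt * (T' * Y - T * Y') * A + Bt * (T' * U - T * U') * B) := by
  calc T' * U - T * U' = (-(At * S' + Bt * T')) * (Y * A + U * B)
        - (At * S + Bt * T) * (-(Y' * A + U' * B)) := by
        rw [← hU, ← hU', ← hT, ← hT']
    _ = _ := by noncomm_ring

lemma ring_two {R : Type*} [Ring R] (U U' Y Y' T T' S S' A B At Bt : R)
    (hU : U = Y * A + U * B) (hU' : U' = -(Y' * A + U' * B))
    (hT : T = At * S + Bt * T) (hT' : T' = -(At * S' + Bt * T')) :
    -(At * (S' * U - S * U') + Bt * (T' * U - T * U')) =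
      (T' * Y - T * Y') * A + (T' * U - T * U') * B := by
  calc _ = (-(At * S' + Bt * T')) * U + (At * S + Bt * T) * U' := by noncomm_ring
    _ = T' * (Y * A + U * B) - T * (-(-(Y' * A + U' * B))) := by
      rw [← hU, ← hU', ← hT, ← hT']; noncomm_ring
    _ = _ := by noncomm_ring

lemma Sol.f4 {V₁ V₂ : ℝ → ℝ} {z : ℝ} {f g : ℝ → ℂ × ℂ} (hf : Sol V₁ V₂ z f)
    (hg : Sol V₁ V₂ z g) (c d : ℂ) :
    dd (f4def f g c d) = f4def (dd f) (dd g) c d ∧ Sol V₁ V₂ z (f4def f g c d) := by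
  have hd : dd (f4def f g c d) = f4def (dd f) (dd g) c d := by
    funext x
    obtain ⟨a1, b1, -, -⟩ := hf x
    obtain ⟨a2, b2, -, -⟩ := hf.conj x
    obtain ⟨a3, b3, -, -⟩ := hg x
    rw [dd_conj hf] at a2 b2
    ext1
    · exact ((a3.sub (a1.const_mul c)).sub (a2.const_mul d)).deriv
    · exact ((b3.sub (b1.const_mul c)).sub (b2.const_mul d)).deriv
  refine ⟨hd, fun x => ?_⟩
  rw [hd]
  obtain ⟨a1, b1, p1, q1⟩ := hf x
  obtain ⟨a2, b2, p2, q2⟩ := hf.conj x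
  obtain ⟨a3, b3, p3, q3⟩ := hg x
  rw [dd_conj hf] at a2 b2 p2 q2
  refine ⟨((a3.sub (a1.const_mul c)).sub (a2.const_mul d)),
    ((b3.sub (b1.const_mul c)).sub (b2.const_mul d)), ?_, ?_⟩
  · exact ((p3.sub (p1.const_mul c)).sub (p2.const_mul d)).congr_deriv
      (by simp [f4def]; ring)
  · exact ((q3.sub (q1.const_mul c)).sub (q2.const_mul d)).congr_deriv
      (by simp [f4def]; ring)

lemma Wr_f4 {V₁ V₂ : ℝ → ℝ} {z : ℝ} {f g : ℝ → ℂ × ℂ} (hf : Sol V₁ V₂ z f)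
    (hg : Sol V₁ V₂ z g) (c d : ℂ) (h : ℝ → ℂ × ℂ) (x : ℝ) :
    Wr h (f4def f g c d) x = Wr h g x - c * Wr h f x - d * Wr h (conj2 f) x := by
  simp only [Wr_eq, (hf.f4 hg c d).1, dd_conj hf]
  simp [f4def]; ring

theorem stmt_10 (γ : ℝ) (V₁ V₂ : ℝ → ℝ) (hV : PotentialHyp γ V₁ V₂)
    (lam : ℝ) (hlam : lam ≠ 0) (f₁ f₃ f₄t : ℝ → ℂ × ℂ)
    (h1 : IsSolution V₁ V₂ (((1 + lam ^ 2 : ℝ) : ℂ)) f₁)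
    (h3 : IsSolution V₁ V₂ (((1 + lam ^ 2 : ℝ) : ℂ)) f₃)
    (h4t : IsSolution V₁ V₂ (((1 + lam ^ 2 : ℝ) : ℂ)) f₄t)
    (hJost : JostAsymp γ lam f₁ f₃ f₄t)
    (hconj3 : conj2 f₃ = f₃) (hconj4 : conj2 f₄t = f₄t)
    (c₁ c₂ : ℂ)
    (hc1 : ∀ x : ℝ, Wr f₁ (f4def f₁ f₄t c₁ c₂) x = 0)
    (hc2 : ∀ x : ℝ, Wr (conj2 f₁) (f4def f₁ f₄t c₁ c₂) x = 0)
    (A B : Matrix (Fin 2) (Fin 2) ℂ)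
    (hAB : ∀ x : ℝ,
      matOf f₁ f₃ x
        = matOf (conj2 f₁) (f4def f₁ f₄t c₁ c₂) (-x) * A + matOf f₁ f₃ (-x) * B) :
    (-(2 * Complex.I * (lam : ℂ))) • pmat
        = (-(2 * Complex.I * (lam : ℂ))) • (Aᴴ * pmat * A)
          - (2 * ((mu lam : ℝ) : ℂ)) • (Aᴴ * qmat * B)
          + (2 * ((mu lam : ℝ) : ℂ)) • (Bᴴ * qmat * A)
          + (2 * Complex.I * (lam : ℂ)) • (Bᴴ * pmat * B) ∧
    Aᵀ * ((2 * Complex.I * (lam : ℂ)) • pmat - (2 * ((mu lam : ℝ) : ℂ)) • qmat) * B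
        = Bᵀ * ((2 * Complex.I * (lam : ℂ)) • pmat - (2 * ((mu lam : ℝ) : ℂ)) • qmat) * A ∧
    (2 * ((mu lam : ℝ) : ℂ)) • (Aᴴ * qmat) - (2 * Complex.I * (lam : ℂ)) • (Bᴴ * pmat)
        = (2 * ((mu lam : ℝ) : ℂ)) • (qmat * A) + (2 * Complex.I * (lam : ℂ)) • (pmat * B) := by
  obtain ⟨hγ, -, -⟩ := hV
  obtain ⟨x0, C, hx0, hC, hJ⟩ := hJost
  have s1 := sol_of _ _ _ _ h1
  have s3 := sol_of _ _ _ _ h3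
  have s4t := sol_of _ _ _ _ h4t
  have hmu : 0 < mu lam := Real.sqrt_pos.2 (by positivity)
  have J1 : JL (Complex.I * lam) (1, 0) f₁ := by
    refine JL_of s1 _ _ γ x0 (C * mu lam ^ (((0 : ℕ) : ℝ) - 1)) (C * mu lam ^ (((1 : ℕ) : ℝ) - 1)) hγ (fun x hx => ?_) (fun x hx => ?_)
    · simpa using (hJ 0 (by norm_num) x hx).1
    · simpa [iteratedDeriv_one] using (hJ 1 le_rfl x hx).1
  have J3 : JL (-(mu lam : ℂ)) (0, 1) f₃ := by
    have e : ∀ y : ℝ, Complex.exp (-(-(mu lam : ℂ)) * y) • f₃ y = Real.exp (mu lam * y) • f₃ y := by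
      intro y; rw [← Complex.coe_smul]; simp
    refine JL_of s3 _ _ γ x0 (C * mu lam ^ (((0 : ℕ) : ℝ) - 1)) (C * mu lam ^ (((1 : ℕ) : ℝ) - 1)) hγ (fun x hx => ?_) (fun x hx => ?_)
    · rw [e]; simpa using (hJ 0 (by norm_num) x hx).2.1
    · simp only [e]; simpa [iteratedDeriv_one] using (hJ 1 le_rfl x hx).2.1
  have J4 : JL (mu lam : ℂ) (0, 1) f₄t := by
    have e : ∀ y : ℝ, Complex.exp (-(mu lam : ℂ) * y) • f₄t y
        = Real.exp (-(mu lam) * y) • f₄t y := by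
      intro y; rw [← Complex.coe_smul]; simp
    refine JL_of s4t _ _ γ x0 (C * mu lam ^ (((0 : ℕ) : ℝ) - 1)) (C * mu lam ^ (((1 : ℕ) : ℝ) - 1)) hγ (fun x hx => ?_) (fun x hx => ?_)
    · rw [e]; simpa using (hJ 0 (by norm_num) x hx).2.2
    · simp only [e]; simpa [iteratedDeriv_one] using (hJ 1 le_rfl x hx).2.2
  have J2 := J1.conj s1
  have s2 := s1.conj
  have w12 : Wr f₁ (conj2 f₁) 0 = 2 * Complex.I * lam := by
    rw [JL_W_eq s1 s2 J1 J2 (by simp)]; simp; ring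
  have w13 : Wr f₁ f₃ 0 = 0 := JL_W_zero s1 s3 J1 J3 (by simpa using hmu)
  have w23 : Wr (conj2 f₁) f₃ 0 = 0 := JL_W_zero s2 s3 J2 J3 (by simpa using hmu)
  have w34t : Wr f₃ f₄t 0 = -(2 * (mu lam : ℂ)) := by
    rw [JL_W_eq s3 s4t J3 J4 (by simp)]; simp; ring
  have self : ∀ f : ℝ → ℂ × ℂ, Wr f f 0 = 0 := fun f => by rw [Wr_eq]; ring
  obtain ⟨d4, s4⟩ := s1.f4 s4t c₁ c₂
  have w21 : Wr (conj2 f₁) f₁ 0 = -(2 * Complex.I * lam) := by rw [Wr_anti, w12]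
  have w31 : Wr f₃ f₁ 0 = 0 := by rw [Wr_anti, w13, neg_zero]
  have w32 : Wr f₃ (conj2 f₁) 0 = 0 := by rw [Wr_anti, w23, neg_zero]
  have w14 := hc1 0
  have w24 := hc2 0
  have w34 : Wr f₃ (f4def f₁ f₄t c₁ c₂) 0 = -(2 * (mu lam : ℂ)) := by
    rw [Wr_f4 s1 s4t, w31, w32, w34t]; ring
  -- reality of f₄
  have hcc : c₁ = starRingEnd ℂ c₂ := by
    have e1 := w14
    have e2 := w24
    rw [Wr_f4 s1 s4t, self, w12] at e1
    rw [Wr_f4 s1 s4t, self, w21] at e2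
    have e3 := Wr_conj s1 s4t 0
    rw [hconj4] at e3
    have e4 : Wr f₁ f₄t 0 = c₂ * (2 * Complex.I * lam) := by linear_combination e1
    rw [e4] at e3
    simp only [map_mul, Complex.conj_I, Complex.conj_ofReal, map_ofNat] at e3
    have hne : 2 * Complex.I * (lam : ℂ) ≠ 0 := by simp [hlam]
    apply mul_right_cancel₀ hne
    linear_combination e2 - e3
  have hconjf4 : conj2 (f4def f₁ f₄t c₁ c₂) = f4def f₁ f₄t c₁ c₂ := by
    funext x
    have e := congrFun hconj4 x
    rw [hcc]
    simp only [conj2, Prod.ext_iff] at e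
    simp only [conj2, f4def, Prod.ext_iff, Prod.fst_sub, Prod.snd_sub, Prod.smul_fst,
      Prod.smul_snd, smul_eq_mul, map_sub, map_mul, Complex.conj_conj, e.1, e.2]
    constructor <;> ring
  have hAB0 := hAB 0
  rw [neg_zero] at hAB0
  set f₄ := f4def f₁ f₄t c₁ c₂ with hf4
  have w41 : Wr f₄ f₁ 0 = 0 := by rw [Wr_anti, w14, neg_zero]
  have w42 : Wr f₄ (conj2 f₁) 0 = 0 := by rw [Wr_anti, w24, neg_zero]
  have w43 : Wr f₄ f₃ 0 = 2 * (mu lam : ℂ) := by rw [Wr_anti, w34, neg_neg]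
  have hAB1 : matOf (dd f₁) (dd f₃) 0 =
      -(matOf (dd (conj2 f₁)) (dd f₄) 0 * A + matOf (dd f₁) (dd f₃) 0 * B) := by
    have neg : ∀ {u : ℝ → ℂ} {u' : ℂ}, HasDerivAt u u' 0 →
        HasDerivAt (fun y : ℝ => u (-y)) (-u') 0 := by
      intro u u' h
      have h' : HasDerivAt u u' (-0) := by simpa using h
      exact (h'.scomp (0 : ℝ) (hasDerivAt_neg (0 : ℝ))).congr_deriv (by simp)
    obtain ⟨a1, b1, -, -⟩ := s1 0
    obtain ⟨a2, b2, -, -⟩ := s2 0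
    obtain ⟨a3, b3, -, -⟩ := s3 0
    obtain ⟨a4, b4, -, -⟩ := s4 0
    have fstf : ∀ (j : Fin 2), HasDerivAt (fun y => matOf f₁ f₃ y 0 j)
        (-(dd (conj2 f₁) 0).1 * A 0 j + -(dd f₄ 0).1 * A 1 j +
          (-(dd f₁ 0).1 * B 0 j + -(dd f₃ 0).1 * B 1 j)) 0 := by
      intro j
      have hfun : (fun y => matOf f₁ f₃ y 0 j) = fun y : ℝ =>
          ((conj2 f₁ (-y)).1 * A 0 j + (f₄ (-y)).1 * A 1 j) +
          ((f₁ (-y)).1 * B 0 j + (f₃ (-y)).1 * B 1 j) := by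
        funext y
        rw [hAB y, Matrix.add_apply, Matrix.mul_apply, Matrix.mul_apply, Fin.sum_univ_two,
          Fin.sum_univ_two]
        rfl
      rw [hfun]
      exact ((((neg a2).mul_const (A 0 j)).add ((neg a4).mul_const (A 1 j))).add
        (((neg a1).mul_const (B 0 j)).add ((neg a3).mul_const (B 1 j))))
    have sndf : ∀ (j : Fin 2), HasDerivAt (fun y => matOf f₁ f₃ y 1 j)
        (-(dd (conj2 f₁) 0).2 * A 0 j + -(dd f₄ 0).2 * A 1 j +
          (-(dd f₁ 0).2 * B 0 j + -(dd f₃ 0).2 * B 1 j)) 0 := by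
      intro j
      have hfun : (fun y => matOf f₁ f₃ y 1 j) = fun y : ℝ =>
          ((conj2 f₁ (-y)).2 * A 0 j + (f₄ (-y)).2 * A 1 j) +
          ((f₁ (-y)).2 * B 0 j + (f₃ (-y)).2 * B 1 j) := by
        funext y
        rw [hAB y, Matrix.add_apply, Matrix.mul_apply, Matrix.mul_apply, Fin.sum_univ_two,
          Fin.sum_univ_two]
        rfl
      rw [hfun]
      exact ((((neg b2).mul_const (A 0 j)).add ((neg b4).mul_const (A 1 j))).add
        (((neg b1).mul_const (B 0 j)).add ((neg b3).mul_const (B 1 j))))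
    have e00 := a1.unique (fstf 0)
    have e01 := a3.unique (fstf 1)
    have e10 := b1.unique (sndf 0)
    have e11 := b3.unique (sndf 1)
    have hm : ∀ i j, (-(matOf (dd (conj2 f₁)) (dd f₄) 0 * A + matOf (dd f₁) (dd f₃) 0 * B)) i j =
        -((matOf (dd (conj2 f₁)) (dd f₄) 0 i 0 * A 0 j + matOf (dd (conj2 f₁)) (dd f₄) 0 i 1 * A 1 j)
        + (matOf (dd f₁) (dd f₃) 0 i 0 * B 0 j + matOf (dd f₁) (dd f₃) 0 i 1 * B 1 j)) := by
      intro i j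
      rw [Matrix.neg_apply, Matrix.add_apply, Matrix.mul_apply, Matrix.mul_apply, Fin.sum_univ_two,
          Fin.sum_univ_two]
    ext i j
    rw [hm]
    fin_cases i <;> fin_cases j
    · simp [matOf]; linear_combination e00
    · simp [matOf]; linear_combination e01
    · simp [matOf]; linear_combination e10
    · simp [matOf]; linear_combination e11
  have hT := congrArg Matrix.transpose hAB0
  have hT' := congrArg Matrix.transpose hAB1
  have hH := congrArg Matrix.conjTranspose hAB0
  have hH' := congrArg Matrix.conjTranspose hAB1
  rw [Matrix.transpose_add, Matrix.transpose_mul, Matrix.transpose_mul] at hT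
  rw [Matrix.transpose_neg, Matrix.transpose_add, Matrix.transpose_mul, Matrix.transpose_mul] at hT'
  rw [Matrix.conjTranspose_add, Matrix.conjTranspose_mul, Matrix.conjTranspose_mul] at hH
  rw [Matrix.conjTranspose_neg, Matrix.conjTranspose_add, Matrix.conjTranspose_mul,
    Matrix.conjTranspose_mul] at hH'
  have R1 := ring_one _ _ _ _ _ _ _ _ A B _ _ hAB0 hAB1 hH hH'
  have R2 := ring_one _ _ _ _ _ _ _ _ A B _ _ hAB0 hAB1 hT hT'
  have R3 := ring_two _ _ _ _ _ _ _ _ A B _ _ hAB0 hAB1 hH hH'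
  simp only [mat_conj, ← dd_conj s1, ← dd_conj s2, ← dd_conj s3, ← dd_conj s4, conj2_conj2, hconj3,
    hconjf4, mat_W, self, w12, w13, w14, w21, w23, w24, w31, w32, w34, w41, w42, w43] at R1 R2 R3
  have m1 : !![-(2 * Complex.I * (lam : ℂ)), 0; 0, 0] = (-(2 * Complex.I * (lam : ℂ))) • pmat := by
    ext i j; fin_cases i <;> fin_cases j <;> simp [pmat]
  have m2 : !![2 * Complex.I * (lam : ℂ), 0; 0, 0] = (2 * Complex.I * (lam : ℂ)) • pmat := by
    ext i j; fin_cases i <;> fin_cases j <;> simp [pmat]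
  have m3 : !![0, 0; 0, 2 * (mu lam : ℂ)] = (2 * (mu lam : ℂ)) • qmat := by
    ext i j; fin_cases i <;> fin_cases j <;> simp [qmat]
  have m4 : !![0, 0; 0, -(2 * (mu lam : ℂ))] = -((2 * (mu lam : ℂ)) • qmat) := by
    ext i j; fin_cases i <;> fin_cases j <;> simp [qmat]
  have m5 : !![2 * Complex.I * (lam : ℂ), 0; 0, -(2 * (mu lam : ℂ))] =
      (2 * Complex.I * (lam : ℂ)) • pmat - (2 * (mu lam : ℂ)) • qmat := by
    ext i j; fin_cases i <;> fin_cases j <;> simp [pmat, qmat]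
  have m6 : !![-(2 * Complex.I * (lam : ℂ)), 0; 0, 2 * (mu lam : ℂ)] =
      -((2 * Complex.I * (lam : ℂ)) • pmat - (2 * (mu lam : ℂ)) • qmat) := by
    ext i j; fin_cases i <;> fin_cases j <;> simp [pmat, qmat]
  have m0 : !![(0 : ℂ), 0; 0, 0] = 0 := by
    ext i j; fin_cases i <;> fin_cases j <;> simp
  simp only [m0, m1, m2, m3, m4, m5, m6] at R1 R2 R3
  refine ⟨?_, ?_, ?_⟩
  · rw [R1]
    simp only [Matrix.mul_smul, Matrix.smul_mul, neg_smul, Matrix.mul_neg, Matrix.neg_mul]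
    abel
  · rw [← sub_eq_zero]
    have R2' := neg_eq_zero.1 R2.symm
    simp only [Matrix.mul_zero, Matrix.zero_mul, Matrix.mul_neg, Matrix.neg_mul] at R2'
    rw [← neg_eq_zero, ← R2']
    abel
  · simp only [Matrix.mul_smul, Matrix.smul_mul, neg_smul, Matrix.mul_neg, Matrix.neg_mul] at R3
    rw [← sub_eq_zero] at R3 ⊢
    rw [← neg_eq_zero, ← R3]
    abel
end
end

section
/- Adopt the Jost setup of the context at λ = 0 (so μ = √2), and set F₁(x) := (f₁(x,0), f₃(x,0)) and G₂(x) := (f₁(−x,0), f₃(−x,0)). Then E = 1 is a resonance or an eigenvalue of ℋ — that is, there exists a nonzero bounded twice continuously differentiable solution f of ℋf = f (either f ∈ L², an eigenfunction, or f ∈ L^∞ ∖ L², a resonance) — if and only if det 𝒲[F₁, G₂] = 0. -/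
noncomputable section

open Real MeasureTheory Matrix

open Filter Topology

/-- Right-hand side of the first-order system in the variables `(u, v, u', v')`. -/
def rhsF (V₁ V₂ : ℝ → ℝ) (x : ℝ) (y : Fin 4 → ℂ) : Fin 4 → ℂ :=
  ![y 2, y 3, (V₁ x : ℂ) * y 0 + (V₂ x : ℂ) * y 1,
    2 * y 1 + (V₂ x : ℂ) * y 0 + (V₁ x : ℂ) * y 1]

/-- Solutions of the first-order system. -/
def SolF (V₁ V₂ : ℝ → ℝ) (Y : ℝ → Fin 4 → ℂ) : Prop :=
  ∀ x, HasDerivAt Y (rhsF V₁ V₂ x (Y x)) x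

/-- The symplectic form. -/
def om (a b : Fin 4 → ℂ) : ℂ := a 2 * b 0 + a 3 * b 1 - a 0 * b 2 - a 1 * b 3

/-- The 1-jet of `f`. -/
def jetF (f : ℝ → ℂ × ℂ) (x : ℝ) : Fin 4 → ℂ :=
  ![(f x).1, (f x).2, deriv (fun y => (f y).1) x, deriv (fun y => (f y).2) x]

/-- Reflection of jets. -/
def refl4 (Y : ℝ → Fin 4 → ℂ) (x : ℝ) : Fin 4 → ℂ :=
  ![Y (-x) 0, Y (-x) 1, -Y (-x) 2, -Y (-x) 3]

lemma SolF.d {V₁ V₂ : ℝ → ℝ} {Y : ℝ → Fin 4 → ℂ} (h : SolF V₁ V₂ Y) (x : ℝ) (i : Fin 4) :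
    HasDerivAt (fun x => Y x i) (rhsF V₁ V₂ x (Y x) i) x :=
  hasDerivAt_pi.1 (h x) i

lemma SolF.comb {V₁ V₂ : ℝ → ℝ} {Y Z : ℝ → Fin 4 → ℂ} (h : SolF V₁ V₂ Y) (k : SolF V₁ V₂ Z)
    (s t : ℂ) : SolF V₁ V₂ (fun x => s • Y x + t • Z x) := by
  intro x
  refine (((h x).const_smul s).add ((k x).const_smul t)).congr_deriv ?_
  ext i
  fin_cases i <;> simp [rhsF] <;> ring

lemma SolF.refl {V₁ V₂ : ℝ → ℝ} {Y : ℝ → Fin 4 → ℂ} (h : SolF V₁ V₂ Y)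
    (e1 : ∀ x, V₁ (-x) = V₁ x) (e2 : ∀ x, V₂ (-x) = V₂ x) : SolF V₁ V₂ (refl4 Y) := by
  intro x
  rw [hasDerivAt_pi]
  have key : ∀ i, HasDerivAt (fun x => Y (-x) i) (-(rhsF V₁ V₂ (-x) (Y (-x)) i)) x := by
    intro i
    have := (h.d (-x) i).scomp x (hasDerivAt_neg x)
    simpa [Function.comp_def] using this
  intro i
  fin_cases i
  · simpa [rhsF, refl4] using key 0
  · simpa [rhsF, refl4] using key 1
  · refine (key 2).neg.congr_deriv ?_
    simp [rhsF, refl4, e1, e2]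
  · refine (key 3).neg.congr_deriv ?_
    simp [rhsF, refl4, e1, e2]

lemma refl4_refl4 (Y : ℝ → Fin 4 → ℂ) : refl4 (refl4 Y) = Y := by
  ext x i
  fin_cases i <;> simp [refl4]

lemma om_const {V₁ V₂ : ℝ → ℝ} {Y Z : ℝ → Fin 4 → ℂ} (h : SolF V₁ V₂ Y) (k : SolF V₁ V₂ Z)
    (x y : ℝ) : om (Y x) (Z x) = om (Y y) (Z y) := by
  have hd : ∀ x, HasDerivAt (fun x => om (Y x) (Z x)) 0 x := by
    intro x
    refine (((((h.d x 2).mul (k.d x 0)).add ((h.d x 3).mul (k.d x 1))).sub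
      ((h.d x 0).mul (k.d x 2))).sub ((h.d x 1).mul (k.d x 3))).congr_deriv ?_
    simp [rhsF]
    ring
  exact is_const_of_deriv_eq_zero (fun x => (hd x).differentiableAt) (fun x => (hd x).deriv) x y

lemma rhsF_bound {V₁ V₂ : ℝ → ℝ} {M : ℝ} (x : ℝ) (hM : |V₁ x| + |V₂ x| ≤ M) (y : Fin 4 → ℂ) :
    ‖rhsF V₁ V₂ x y‖ ≤ (2 + M) * ‖y‖ := by
  have h1 := abs_nonneg (V₁ x)
  have h2 := abs_nonneg (V₂ x)
  have hy := norm_nonneg y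
  have hi : ∀ i, ‖y i‖ ≤ ‖y‖ := norm_le_pi_norm y
  have hp : ∀ i, |V₁ x| * ‖y i‖ ≤ |V₁ x| * ‖y‖ := fun i => mul_le_mul_of_nonneg_left (hi i) h1
  have hq : ∀ i, |V₂ x| * ‖y i‖ ≤ |V₂ x| * ‖y‖ := fun i => mul_le_mul_of_nonneg_left (hi i) h2
  have hr : (|V₁ x| + |V₂ x|) * ‖y‖ ≤ M * ‖y‖ := mul_le_mul_of_nonneg_right hM hy
  have hM0 : 0 ≤ M * ‖y‖ := mul_nonneg (by linarith) hy
  rw [pi_norm_le_iff_of_nonneg (by nlinarith)]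
  intro i
  fin_cases i
  · have := hi 2
    simp only [rhsF]
    show ‖y 2‖ ≤ _
    linarith
  · have := hi 3
    show ‖y 3‖ ≤ _
    linarith
  · show ‖(V₁ x : ℂ) * y 0 + (V₂ x : ℂ) * y 1‖ ≤ _
    refine (norm_add_le _ _).trans ?_
    rw [norm_mul, norm_mul, Complex.norm_real, Complex.norm_real, Real.norm_eq_abs,
      Real.norm_eq_abs]
    linarith [hp 0, hq 1]
  · show ‖2 * y 1 + (V₂ x : ℂ) * y 0 + (V₁ x : ℂ) * y 1‖ ≤ _
    refine (norm_add₃_le).trans ?_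
    rw [norm_mul, norm_mul, norm_mul, Complex.norm_real, Complex.norm_real, Real.norm_eq_abs,
      Real.norm_eq_abs]
    have : ‖(2 : ℂ)‖ = 2 := by simp
    rw [this]
    linarith [hp 1, hq 0, hi 1]

lemma SolF.unique {V₁ V₂ : ℝ → ℝ} {M : ℝ} (hM : ∀ x, |V₁ x| + |V₂ x| ≤ M)
    {Y Z : ℝ → Fin 4 → ℂ} (h : SolF V₁ V₂ Y) (k : SolF V₁ V₂ Z) (x : ℝ) (e : Y x = Z x) :
    Y = Z := by
  have hM0 : 0 ≤ M := le_trans (by positivity) (hM 0)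
  refine ODE_solution_unique_univ (v := rhsF V₁ V₂) (s := fun _ => Set.univ)
    (K := Real.toNNReal (2 + M)) (t₀ := x) ?_ (fun t => ⟨h t, trivial⟩) (fun t => ⟨k t, trivial⟩) e
  intro t
  refine (LipschitzWith.of_dist_le_mul ?_).lipschitzOnWith
  intro a b
  rw [dist_eq_norm, dist_eq_norm, Real.coe_toNNReal _ (by linarith)]
  have : rhsF V₁ V₂ t a - rhsF V₁ V₂ t b = rhsF V₁ V₂ t (a - b) := by
    ext i
    fin_cases i <;> simp [rhsF] <;> ring
  rw [this]
  exact rhsF_bound t (hM t) _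

lemma zero_solF (V₁ V₂ : ℝ → ℝ) : SolF V₁ V₂ (fun _ => 0) := by
  intro x
  refine (hasDerivAt_const x (0 : Fin 4 → ℂ)).congr_deriv ?_
  ext i
  fin_cases i <;> simp [rhsF]

lemma lagr (a b z : Fin 4 → ℂ) (hab : om a b = 0) (haz : om a z = 0) (hbz : om b z = 0)
    (ind : ∀ s t : ℂ, s • a + t • b = 0 → s = 0 ∧ t = 0) : ∃ s t : ℂ, z = s • a + t • b := by
  by_cases hli : LinearIndependent ℂ ![a, b, z]
  · exfalso
    let M : Matrix (Fin 3) (Fin 4) ℂ := Matrix.of ![a, b, z]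
    let J : Matrix (Fin 4) (Fin 4) ℂ := !![0, 0, 1, 0; 0, 0, 0, 1; -1, 0, 0, 0; 0, -1, 0, 0]
    have hJ : IsUnit J.det := by
      have : J * (-J) = 1 := by
        ext i j
        fin_cases i <;> fin_cases j <;> simp [J, Matrix.mul_apply, Fin.sum_univ_four]
      exact Matrix.isUnit_det_of_right_inverse this
    have hr : M.rank = 3 := by
      have := LinearIndependent.rank_matrix (M := M) hli
      simpa using this
    have h0 : M * (J * Mᵀ) = 0 := by
      simp only [om] at hab haz hbz
      ext i j
      fin_cases i <;> fin_cases j <;>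
        simp only [M, J, Matrix.mul_apply, Fin.sum_univ_four, Matrix.transpose_apply] <;>
        simp [-Matrix.cons_mul] <;> clear hr hJ hli ind <;> grind
    have h1 := Matrix.rank_add_rank_le_card_of_mul_eq_zero h0
    rw [Matrix.rank_mul_eq_right_of_isUnit_det _ _ hJ, Matrix.rank_transpose, hr] at h1
    simp at h1
  · obtain ⟨g, hg, i, hi⟩ := Fintype.not_linearIndependent_iff.1 hli
    simp [Fin.sum_univ_three] at hg
    by_cases h2 : g 2 = 0
    · rw [h2] at hg
      obtain ⟨p, q⟩ := ind (g 0) (g 1) (by simpa using hg)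
      exfalso
      apply hi
      fin_cases i <;> assumption
    · refine ⟨-(g 0) / g 2, -(g 1) / g 2, ?_⟩
      ext j
      have := congrFun hg j
      simp at this ⊢
      field_simp
      linear_combination this

lemma lagr_sol {V₁ V₂ : ℝ → ℝ} {M : ℝ} (hM : ∀ x, |V₁ x| + |V₂ x| ≤ M)
    {A B Z : ℝ → Fin 4 → ℂ} (hA : SolF V₁ V₂ A) (hB : SolF V₁ V₂ B) (hZ : SolF V₁ V₂ Z)
    (hAB : ∀ x, om (A x) (B x) = 0)
    (ind : ∀ s t : ℂ, (∀ x, s • A x + t • B x = 0) → s = 0 ∧ t = 0) (x : ℝ)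
    (hAZ : om (A x) (Z x) = 0) (hBZ : om (B x) (Z x) = 0) :
    ∃ s t : ℂ, ∀ y, Z y = s • A y + t • B y := by
  obtain ⟨s, t, h⟩ := lagr (A x) (B x) (Z x) (hAB x) hAZ hBZ (by
    intro s t h
    apply ind s t
    intro y
    exact congrFun ((hA.comb hB s t).unique hM (zero_solF V₁ V₂) x h) y)
  exact ⟨s, t, fun y => congrFun (hZ.unique hM (hA.comb hB s t) x h) y⟩

lemma landau {u p r : ℝ → ℂ} (hu : ∀ x, HasDerivAt u (p x) x) (hp : ∀ x, HasDerivAt p (r x) x)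
    {B M : ℝ} (hB : ∀ x, ‖u x‖ ≤ B) (hM : ∀ x, ‖r x‖ ≤ M) (x : ℝ) : ‖p x‖ ≤ 2 * B + M := by
  have hM0 : 0 ≤ M := (norm_nonneg _).trans (hM 0)
  have h1 : ∀ t ∈ Set.Icc x (x + 1), ‖p t - p x‖ ≤ M := by
    intro t ht
    have := norm_image_sub_le_of_norm_deriv_le_segment' (f := p) (f' := r) (a := x) (b := x + 1)
      (fun y _ => (hp y).hasDerivWithinAt) (fun y _ => hM y) t ht
    nlinarith [ht.1, ht.2]
  have h2 := norm_image_sub_le_of_norm_deriv_le_segment' (f := fun t => u t - p x * (t : ℂ))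
      (f' := fun t => p t - p x) (a := x) (b := x + 1) (C := M)
      (fun y _ => by
        have h3 : HasDerivAt (fun t : ℝ => p x * (t : ℂ)) (p x * 1) y :=
          (Complex.ofRealCLM.hasDerivAt (x := y)).const_mul (p x)
        rw [mul_one] at h3
        exact ((hu y).sub h3).hasDerivWithinAt)
      (fun y hy => h1 y ⟨hy.1, hy.2.le⟩) (x + 1) ⟨by linarith, le_refl _⟩
  have e : p x = u (x + 1) - u x -
      (u (x + 1) - p x * ((x + 1 : ℝ) : ℂ) - (u x - p x * (x : ℂ))) := by
    push_cast; ring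
  have h4 : ‖p x‖ ≤ ‖u (x + 1) - u x‖ +
      ‖u (x + 1) - p x * ((x + 1 : ℝ) : ℂ) - (u x - p x * (x : ℂ))‖ := by
    conv_lhs => rw [e]
    exact norm_sub_le _ _
  have h5 := norm_sub_le (u (x + 1)) (u x)
  have h6 := hB x
  have h7 := hB (x + 1)
  have h8 : M * (x + 1 - x) = M := by ring
  rw [h8] at h2
  linarith

lemma deriv_lim_zero {u p : ℝ → ℂ} (hu : ∀ x, HasDerivAt u (p x) x) {B : ℝ}
    (hB : ∀ x, ‖u x‖ ≤ B) {c : ℂ} (hc : Tendsto p atTop (𝓝 c)) : c = 0 := by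
  by_contra hne
  have hpos : 0 < ‖c‖ := norm_pos_iff.2 hne
  have hB0 : 0 ≤ B := (norm_nonneg _).trans (hB 0)
  obtain ⟨N, hN⟩ := Metric.tendsto_atTop.1 hc (‖c‖ / 2) (by linarith)
  set L : ℝ := 4 * B / ‖c‖ + 1 with hL
  have hL1 : 0 ≤ L := by positivity
  have h2 := norm_image_sub_le_of_norm_deriv_le_segment' (f := fun t => u t - c * (t : ℂ))
      (f' := fun t => p t - c) (a := N) (b := N + L) (C := ‖c‖ / 2)
      (fun y _ => by
        have h3 : HasDerivAt (fun t : ℝ => c * (t : ℂ)) (c * 1) y :=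
          (Complex.ofRealCLM.hasDerivAt (x := y)).const_mul c
        rw [mul_one] at h3
        exact ((hu y).sub h3).hasDerivWithinAt)
      (fun y hy => by
        have := hN y hy.1
        rw [dist_eq_norm] at this
        exact this.le) (N + L) ⟨by linarith, le_refl _⟩
  have e : c * (L : ℂ) = u (N + L) - u N -
      (u (N + L) - c * ((N + L : ℝ) : ℂ) - (u N - c * (N : ℂ))) := by
    push_cast; ring
  have h4 : ‖c * (L : ℂ)‖ ≤ ‖u (N + L) - u N‖ +
      ‖u (N + L) - c * ((N + L : ℝ) : ℂ) - (u N - c * (N : ℂ))‖ := by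
    conv_lhs => rw [e]
    exact norm_sub_le _ _
  rw [norm_mul, Complex.norm_real, Real.norm_eq_abs, abs_of_nonneg hL1] at h4
  have h5 := norm_sub_le (u (N + L)) (u N)
  have h6 := hB N
  have h7 := hB (N + L)
  have h8 : ‖c‖ * L = 4 * B + ‖c‖ := by rw [hL]; field_simp
  have h9 : ‖c‖ / 2 * (N + L - N) = (4 * B + ‖c‖) / 2 := by rw [← h8]; ring
  rw [h9] at h2
  linarith

lemma iterDeriv_two (f : ℝ → ℂ) (x : ℝ) : iteratedDeriv 2 f x = deriv (deriv f) x := by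
  rw [iteratedDeriv_succ, iteratedDeriv_one]

lemma solF_of_sol {V₁ V₂ : ℝ → ℝ} {f : ℝ → ℂ × ℂ} (h : IsSolution V₁ V₂ 1 f) :
    SolF V₁ V₂ (jetF f) := by
  obtain ⟨hc, he⟩ := h
  have hd : ∀ u : ℝ → ℂ, ContDiff ℝ 2 u → (∀ x, HasDerivAt u (deriv u x) x) ∧
      ∀ x, HasDerivAt (deriv u) (iteratedDeriv 2 u x) x := by
    intro u hu
    refine ⟨fun x => (hu.differentiable (by norm_num) x).hasDerivAt, fun x => ?_⟩
    rw [iterDeriv_two]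
    have h2 : ContDiff ℝ (1 + 1) u := by
      rw [one_add_one_eq_two]; exact hu
    exact ((contDiff_succ_iff_deriv.1 h2).2.2.differentiable (by norm_num) x).hasDerivAt
  obtain ⟨a1, a2⟩ := hd _ hc.fst
  obtain ⟨b1, b2⟩ := hd _ hc.snd
  intro x
  rw [hasDerivAt_pi]
  have hx := he x
  simp only [matH, one_smul, Prod.ext_iff] at hx
  obtain ⟨x1, x2⟩ := hx
  intro i
  fin_cases i
  · exact a1 x
  · exact b1 x
  · refine (a2 x).congr_deriv ?_
    simp [rhsF, jetF]
    linear_combination -x1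
  · refine (b2 x).congr_deriv ?_
    simp [rhsF, jetF]
    linear_combination x2

lemma sol_of_solF {V₁ V₂ : ℝ → ℝ} (c1 : Continuous V₁) (c2 : Continuous V₂)
    {Y : ℝ → Fin 4 → ℂ} (h : SolF V₁ V₂ Y) : IsSolution V₁ V₂ 1 (fun x => (Y x 0, Y x 1)) := by
  have hYc : ∀ i, Continuous (fun x => Y x i) := fun i =>
    continuous_iff_continuousAt.2 fun x => (h.d x i).continuousAt
  have hd0 : deriv (fun x => Y x 0) = fun x => Y x 2 := funext fun x => (h.d x 0).deriv
  have hd1 : deriv (fun x => Y x 1) = fun x => Y x 3 := funext fun x => (h.d x 1).deriv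
  have hd2 : deriv (fun x => Y x 2) = fun x => rhsF V₁ V₂ x (Y x) 2 :=
    funext fun x => (h.d x 2).deriv
  have hd3 : deriv (fun x => Y x 3) = fun x => rhsF V₁ V₂ x (Y x) 3 :=
    funext fun x => (h.d x 3).deriv
  have h0 := hYc 0
  have h1 := hYc 1
  constructor
  · have k2 : ContDiff ℝ 1 (fun x => Y x 2) := by
      rw [contDiff_one_iff_deriv]
      refine ⟨fun x => (h.d x 2).differentiableAt, ?_⟩
      rw [hd2]
      simp only [rhsF, Matrix.cons_val]
      fun_prop
    have k3 : ContDiff ℝ 1 (fun x => Y x 3) := by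
      rw [contDiff_one_iff_deriv]
      refine ⟨fun x => (h.d x 3).differentiableAt, ?_⟩
      rw [hd3]
      simp only [rhsF, Matrix.cons_val]
      fun_prop
    refine ContDiff.prodMk ?_ ?_
    · rw [← one_add_one_eq_two, contDiff_succ_iff_deriv, hd0]
      exact ⟨fun x => (h.d x 0).differentiableAt, by simp, k2⟩
    · rw [← one_add_one_eq_two, contDiff_succ_iff_deriv, hd1]
      exact ⟨fun x => (h.d x 1).differentiableAt, by simp, k3⟩
  · intro x
    simp only [matH, iterDeriv_two, hd0, hd1, hd2, hd3, one_smul, Prod.ext_iff]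
    simp only [rhsF, Matrix.cons_val]
    constructor <;> ring

lemma mWr_entries (f₁ f₃ : ℝ → ℂ × ℂ) (x : ℝ) :
    mWr (matOf f₁ f₃) (fun y => matOf f₁ f₃ (-y)) x =
      !![om (jetF f₁ x) (refl4 (jetF f₁) x), om (jetF f₁ x) (refl4 (jetF f₃) x);
         om (jetF f₃ x) (refl4 (jetF f₁) x), om (jetF f₃ x) (refl4 (jetF f₃) x)] := by
  have hn : ∀ u : ℝ → ℂ, deriv (fun y => u (-y)) x = -deriv u (-x) := fun u => deriv_comp_neg u x
  have a1 := hn (fun y => (f₁ y).1)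
  have a2 := hn (fun y => (f₁ y).2)
  have a3 := hn (fun y => (f₃ y).1)
  have a4 := hn (fun y => (f₃ y).2)
  ext i j
  fin_cases i <;> fin_cases j <;>
    simp [mWr, mderiv, matOf, Matrix.mul_apply, Fin.sum_univ_two, om, jetF, refl4,
      a1, a2, a3, a4] <;> ring

lemma jet_tendsto {f : ℝ → ℂ × ℂ} (hf : ContDiff ℝ 2 f) {a b : ℂ × ℂ}
    (ha : Tendsto f atTop (𝓝 a)) (hb : Tendsto (deriv f) atTop (𝓝 b)) :
    Tendsto (jetF f) atTop (𝓝 ![a.1, a.2, b.1, b.2]) := by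
  have hd : ∀ x, HasDerivAt f (deriv f x) x := fun x =>
    (hf.differentiable (by norm_num) x).hasDerivAt
  have h1 : deriv (fun y => (f y).1) = fun x => (deriv f x).1 := by
    funext x
    exact ((ContinuousLinearMap.fst ℝ ℂ ℂ).hasFDerivAt.comp_hasDerivAt x (hd x)).deriv
  have h2 : deriv (fun y => (f y).2) = fun x => (deriv f x).2 := by
    funext x
    exact ((ContinuousLinearMap.snd ℝ ℂ ℂ).hasFDerivAt.comp_hasDerivAt x (hd x)).deriv
  rw [tendsto_pi_nhds]
  intro i
  fin_cases i
  · exact (continuous_fst.tendsto _).comp ha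
  · exact (continuous_snd.tendsto _).comp ha
  · show Tendsto (fun x => deriv (fun y => (f y).1) x) atTop (𝓝 b.1)
    rw [h1]
    exact (continuous_fst.tendsto _).comp hb
  · show Tendsto (fun x => deriv (fun y => (f y).2) x) atTop (𝓝 b.2)
    rw [h2]
    exact (continuous_snd.tendsto _).comp hb

lemma tendsto_of_exp_bound {E : Type*} [NormedAddCommGroup E] {γ C x0 : ℝ} (hγ : 0 < γ)
    {g : ℝ → E} (h : ∀ x, x0 ≤ x → ‖g x‖ ≤ C * Real.exp (-γ * x)) :
    Tendsto g atTop (𝓝 0) := by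
  have he : Tendsto (fun x : ℝ => C * Real.exp (-γ * x)) atTop (𝓝 0) := by
    have h1 : Tendsto (fun x : ℝ => -γ * x) atTop atBot :=
      tendsto_id.const_mul_atTop_of_neg (by linarith)
    simpa using (Real.tendsto_exp_atBot.comp h1).const_mul C
  refine squeeze_zero_norm' ?_ he
  filter_upwards [eventually_ge_atTop x0] with x hx using h x hx

lemma f1_tendsto {γ C x0 : ℝ} (hγ : 0 < γ) {f : ℝ → ℂ × ℂ} (hf : ContDiff ℝ 2 f)
    (h : ∀ j : ℕ, j ≤ 1 → ∀ x : ℝ, x0 ≤ x →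
      ‖iteratedDeriv j (fun y : ℝ => f y - ((1 : ℂ), (0 : ℂ))) x‖ ≤ C * Real.exp (-γ * x)) :
    Tendsto (jetF f) atTop (𝓝 ![1, 0, 0, 0]) := by
  have h0 := tendsto_of_exp_bound hγ (h 0 (by norm_num))
  have h1 := tendsto_of_exp_bound hγ (h 1 le_rfl)
  rw [iteratedDeriv_zero] at h0
  rw [iteratedDeriv_one] at h1
  have h1' : Tendsto (deriv f) atTop (𝓝 0) := by
    refine h1.congr fun x => ?_
    rw [deriv_sub_const]
  have h0' : Tendsto f atTop (𝓝 ((1 : ℂ), (0 : ℂ))) := by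
    simpa using h0.add_const ((1 : ℂ), (0 : ℂ))
  simpa using jet_tendsto hf h0' h1'

lemma f3_tendsto {γ C x0 : ℝ} (hγ : 0 < γ) {f : ℝ → ℂ × ℂ} (hf : ContDiff ℝ 2 f)
    (h : ∀ j : ℕ, j ≤ 1 → ∀ x : ℝ, x0 ≤ x →
      ‖iteratedDeriv j
          (fun y : ℝ => Real.exp (Real.sqrt 2 * y) • f y - ((0 : ℂ), (1 : ℂ))) x‖
        ≤ C * Real.exp (-γ * x)) :
    Tendsto (jetF f) atTop (𝓝 0) ∧ ∃ x, jetF f x ≠ 0 := by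
  have h0 := tendsto_of_exp_bound hγ (h 0 (by norm_num))
  have h1 := tendsto_of_exp_bound hγ (h 1 le_rfl)
  rw [iteratedDeriv_zero] at h0
  rw [iteratedDeriv_one] at h1
  have hd : ∀ x, HasDerivAt f (deriv f x) x := fun x =>
    (hf.differentiable (by norm_num) x).hasDerivAt
  have hg : Tendsto (fun y : ℝ => Real.exp (Real.sqrt 2 * y) • f y) atTop
      (𝓝 ((0 : ℂ), (1 : ℂ))) := by
    simpa using h0.add_const ((0 : ℂ), (1 : ℂ))
  have hexp : Tendsto (fun y : ℝ => Real.exp (-(Real.sqrt 2 * y))) atTop (𝓝 0) := by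
    have h2 : Tendsto (fun x : ℝ => Real.sqrt 2 * x) atTop atTop :=
      tendsto_id.const_mul_atTop (by positivity)
    exact Real.tendsto_exp_neg_atTop_nhds_zero.comp h2
  have hcancel : ∀ y : ℝ, Real.exp (-(Real.sqrt 2 * y)) * Real.exp (Real.sqrt 2 * y) = 1 := by
    intro y
    rw [← Real.exp_add]; simp
  have hf0 : Tendsto f atTop (𝓝 0) := by
    have := hexp.smul hg
    rw [zero_smul] at this
    refine this.congr fun x => ?_
    rw [smul_smul, hcancel, one_smul]
  have hf1 : Tendsto (deriv f) atTop (𝓝 0) := by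
    have := hexp.smul (h1.sub (hg.const_smul (Real.sqrt 2)))
    rw [zero_smul] at this
    refine this.congr fun x => ?_
    have he : HasDerivAt (fun y : ℝ => Real.exp (Real.sqrt 2 * y))
        (Real.exp (Real.sqrt 2 * x) * (Real.sqrt 2 * 1)) x :=
      ((hasDerivAt_id x).const_mul (Real.sqrt 2)).exp
    have hm := ((he.smul (hd x)).sub_const ((0 : ℂ), (1 : ℂ))).deriv
    have hm' : deriv (fun y : ℝ => Real.exp (Real.sqrt 2 * y) • f y - ((0 : ℂ), (1 : ℂ))) x =
      Real.exp (Real.sqrt 2 * x) • deriv f x +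
        (Real.exp (Real.sqrt 2 * x) * (Real.sqrt 2 * 1)) • f x := hm
    rw [hm', mul_one, mul_comm (Real.exp (Real.sqrt 2 * x)) (Real.sqrt 2), mul_smul,
      add_sub_cancel_right, smul_smul, hcancel, one_smul]
  refine ⟨?_, ?_⟩
  · have := jet_tendsto hf hf0 hf1
    refine this.trans (le_of_eq ?_)
    congr 1
    ext i
    fin_cases i <;> simp
  · by_contra hcon
    push Not at hcon
    have hz : ∀ x, f x = 0 := fun x => Prod.ext (congrFun (hcon x) 0) (congrFun (hcon x) 1)
    simp only [hz, smul_zero] at hg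
    have := tendsto_nhds_unique hg tendsto_const_nhds
    simp [Prod.ext_iff] at this

lemma om_norm_le (a b : Fin 4 → ℂ) : ‖om a b‖ ≤ 4 * ‖a‖ * ‖b‖ := by
  have h : ∀ i j, ‖a i * b j‖ ≤ ‖a‖ * ‖b‖ := fun i j => by
    rw [norm_mul]
    exact mul_le_mul (norm_le_pi_norm a i) (norm_le_pi_norm b j) (norm_nonneg _) (norm_nonneg _)
  have h1 := norm_sub_le (a 2 * b 0 + a 3 * b 1 - a 0 * b 2) (a 1 * b 3)
  have h2 := norm_sub_le (a 2 * b 0 + a 3 * b 1) (a 0 * b 2)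
  have h3 := norm_add_le (a 2 * b 0) (a 3 * b 1)
  show ‖a 2 * b 0 + a 3 * b 1 - a 0 * b 2 - a 1 * b 3‖ ≤ _
  linarith [h 2 0, h 3 1, h 0 2, h 1 3]

lemma om_tendsto {A Y : ℝ → Fin 4 → ℂ} {a : Fin 4 → ℂ} (hA : Tendsto A atTop (𝓝 a)) {K : ℝ}
    (hY : ∀ x, ‖Y x‖ ≤ K) : Tendsto (fun x => om (A x) (Y x) - om a (Y x)) atTop (𝓝 0) := by
  have h1 : Tendsto (fun x => 4 * ‖A x - a‖ * K) atTop (𝓝 0) := by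
    have : Tendsto (fun x => A x - a) atTop (𝓝 0) := by simpa using hA.sub_const a
    simpa using (this.norm.const_mul 4).mul_const K
  refine squeeze_zero_norm (fun x => ?_) h1
  have e : om (A x) (Y x) - om a (Y x) = om (A x - a) (Y x) := by
    simp [om]; ring
  rw [e]
  exact (om_norm_le _ _).trans (mul_le_mul_of_nonneg_left (hY x) (by positivity))

lemma bounded_om {V₁ V₂ : ℝ → ℝ} {M : ℝ} (hM : ∀ x, |V₁ x| + |V₂ x| ≤ M)
    {A B Y : ℝ → Fin 4 → ℂ} (hA : SolF V₁ V₂ A) (hB : SolF V₁ V₂ B) (hY : SolF V₁ V₂ Y)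
    (tA : Tendsto A atTop (𝓝 ![1, 0, 0, 0])) (tB : Tendsto B atTop (𝓝 0)) {K : ℝ}
    (h0 : ∀ x, ‖Y x 0‖ ≤ K) (h1 : ∀ x, ‖Y x 1‖ ≤ K) (x : ℝ) :
    om (A x) (Y x) = 0 ∧ om (B x) (Y x) = 0 := by
  have hK0 : 0 ≤ K := (norm_nonneg _).trans (h0 0)
  have hM0 : 0 ≤ M := le_trans (by positivity) (hM 0)
  -- truncated vector gives the bound on the second derivatives
  have hr : ∀ x, ‖rhsF V₁ V₂ x ![Y x 0, Y x 1, 0, 0]‖ ≤ (2 + M) * K := by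
    intro x
    refine (rhsF_bound x (hM x) _).trans (mul_le_mul_of_nonneg_left ?_ (by linarith))
    rw [pi_norm_le_iff_of_nonneg hK0]
    intro i
    fin_cases i
    · exact h0 x
    · exact h1 x
    · simpa using hK0
    · simpa using hK0
  have h2 := landau (fun x => hY.d x 0) (fun x => hY.d x 2) h0
    (fun x => (norm_le_pi_norm (rhsF V₁ V₂ x ![Y x 0, Y x 1, 0, 0]) 2).trans (hr x))
  have h3 := landau (fun x => hY.d x 1) (fun x => hY.d x 3) h1
    (fun x => (norm_le_pi_norm (rhsF V₁ V₂ x ![Y x 0, Y x 1, 0, 0]) 3).trans (hr x))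
  have hp : 0 ≤ (2 + M) * K := by positivity
  have hb : ∀ x, ‖Y x‖ ≤ 2 * K + (2 + M) * K := by
    intro x
    rw [pi_norm_le_iff_of_nonneg (by linarith)]
    intro i
    fin_cases i
    · exact (h0 x).trans (by linarith)
    · exact (h1 x).trans (by linarith)
    · exact h2 x
    · exact h3 x
  constructor
  · have t := om_tendsto tA hb
    have t2 : Tendsto (fun x => Y x 2) atTop (𝓝 (-(om (A x) (Y x)))) := by
      have t3 := t.add_const (-(om (A x) (Y x)))
      rw [zero_add] at t3
      refine t3.congr fun y => ?_
      rw [om_const hA hY y x]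
      simp [om]
      ring
    have := deriv_lim_zero (fun x => hY.d x 0) h0 t2
    simpa using this
  · have t := om_tendsto tB hb
    have t2 : Tendsto (fun _ : ℝ => om (B x) (Y x)) atTop (𝓝 0) := by
      refine t.congr fun y => ?_
      rw [om_const hB hY y x]
      simp [om]
    exact tendsto_nhds_unique tendsto_const_nhds t2

lemma bdd_Ici {Y : ℝ → Fin 4 → ℂ} (hc : Continuous Y) {l : Fin 4 → ℂ}
    (ht : Tendsto Y atTop (𝓝 l)) : ∃ K, ∀ x, 0 ≤ x → ‖Y x‖ ≤ K := by
  have h1 : ∀ᶠ x in atTop, ‖Y x‖ < ‖l‖ + 1 :=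
    ht.norm.eventually_lt_const (by linarith)
  obtain ⟨N, hN⟩ := eventually_atTop.1 h1
  obtain ⟨K, hK⟩ := (isCompact_Icc (a := (0 : ℝ)) (b := N)).exists_bound_of_continuousOn
    hc.continuousOn
  refine ⟨max K (‖l‖ + 1), fun x hx => ?_⟩
  rcases le_total x N with h | h
  · exact (hK x ⟨hx, h⟩).trans (le_max_left _ _)
  · exact (hN x h).le.trans (le_max_right _ _)

lemma SolF.cont {V₁ V₂ : ℝ → ℝ} {Y : ℝ → Fin 4 → ℂ} (h : SolF V₁ V₂ Y) : Continuous Y :=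
  continuous_iff_continuousAt.2 fun x => (h x).continuousAt

lemma om_comb (a b c : Fin 4 → ℂ) (s t : ℂ) : om a (s • b + t • c) = s * om a b + t * om a c := by
  simp [om]; ring

lemma refl4_comb (A B : ℝ → Fin 4 → ℂ) (s t : ℂ) (x : ℝ) :
    refl4 (fun y => s • A y + t • B y) x = s • refl4 A x + t • refl4 B x := by
  ext i
  fin_cases i <;> simp [refl4] <;> ring

theorem stmt_13 (γ : ℝ) (V₁ V₂ : ℝ → ℝ) (hV : PotentialHyp γ V₁ V₂)
    (f₁ f₃ : ℝ → ℂ × ℂ)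
    (h1 : IsSolution V₁ V₂ 1 f₁) (h3 : IsSolution V₁ V₂ 1 f₃)
    (hasymp : ∃ x0 C : ℝ, 0 ≤ x0 ∧ 0 < C ∧ ∀ j : ℕ, j ≤ 1 → ∀ x : ℝ, x0 ≤ x →
      ‖iteratedDeriv j (fun y : ℝ => f₁ y - ((1 : ℂ), (0 : ℂ))) x‖ ≤ C * Real.exp (-γ * x) ∧
      ‖iteratedDeriv j
          (fun y : ℝ => Real.exp (Real.sqrt 2 * y) • f₃ y - ((0 : ℂ), (1 : ℂ))) x‖
        ≤ C * Real.exp (-γ * x)) :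
    (∃ f : ℝ → ℂ × ℂ, f ≠ 0 ∧ IsSolution V₁ V₂ 1 f ∧ ∃ B : ℝ, ∀ x : ℝ, ‖f x‖ ≤ B) ↔
      ∀ x : ℝ, (mWr (matOf f₁ f₃) (fun y => matOf f₁ f₃ (-y)) x).det = 0 := by
  obtain ⟨hγ, -, s1, s2, e1, e2, hdec⟩ := hV
  obtain ⟨M, hM⟩ : ∃ M, ∀ x, |V₁ x| + |V₂ x| ≤ M := by
    obtain ⟨C, hC⟩ := hdec 0
    refine ⟨C, fun x => ?_⟩
    have h := hC x
    simp only [iteratedDeriv_zero] at h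
    have hC0 : 0 ≤ C := by
      by_contra hneg
      have h2 : C * Real.exp (-γ * |x|) < 0 :=
        mul_neg_of_neg_of_pos (not_le.1 hneg) (Real.exp_pos _)
      have h3 := abs_nonneg (V₁ x)
      have h4 := abs_nonneg (V₂ x)
      linarith
    have h5 : Real.exp (-γ * |x|) ≤ 1 := by
      rw [Real.exp_le_one_iff]
      nlinarith [abs_nonneg x]
    nlinarith
  obtain ⟨x0, C, -, -, hx⟩ := hasymp
  have tA := f1_tendsto hγ h1.1 (fun j hj x hx0 => (hx j hj x hx0).1)
  obtain ⟨tB, y0, hy0⟩ := f3_tendsto hγ h3.1 (fun j hj x hx0 => (hx j hj x hx0).2)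
  have sA := solF_of_sol h1
  have sB := solF_of_sol h3
  simp only [mWr_entries, Matrix.det_fin_two_of]
  generalize jetF f₁ = A at *
  generalize jetF f₃ = B at *
  have ind : ∀ s t : ℂ, (∀ x, s • A x + t • B x = 0) → s = 0 ∧ t = 0 := by
    intro s t h
    have hs : s = 0 := by
      have l := (tA.const_smul s).add (tB.const_smul t)
      simp only [h] at l
      have := congrFun (tendsto_nhds_unique l tendsto_const_nhds) 0
      simpa using this
    refine ⟨hs, ?_⟩
    have := h y0
    rw [hs, zero_smul, zero_add, smul_eq_zero] at this
    exact this.resolve_right hy0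
  have hAB : ∀ x, om (A x) (B x) = 0 := by
    have t : Tendsto (fun x => om (A x) (B x)) atTop (𝓝 0) := by
      have l := ((tA.norm.const_mul 4).mul tB.norm)
      rw [norm_zero, mul_zero] at l
      exact squeeze_zero_norm (fun x => om_norm_le _ _) l
    intro x
    have t2 : Tendsto (fun _ : ℝ => om (A x) (B x)) atTop (𝓝 0) :=
      t.congr fun y => om_const sA sB y x
    exact tendsto_nhds_unique tendsto_const_nhds t2
  constructor
  · rintro ⟨f, hf0, hf, K, hK⟩ x
    have sY := solF_of_sol hf
    have k0 : ∀ x, ‖jetF f x 0‖ ≤ K := fun x => (norm_fst_le (f x)).trans (hK x)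
    have k1 : ∀ x, ‖jetF f x 1‖ ≤ K := fun x => (norm_snd_le (f x)).trans (hK x)
    have sR := sY.refl e1 e2
    have oY := bounded_om hM sA sB sY tA tB k0 k1 x
    have oR := bounded_om hM sA sB sR tA tB (fun x => k0 (-x)) (fun x => k1 (-x)) 0
    obtain ⟨s, t, hst⟩ := lagr_sol hM sA sB sR hAB ind 0 oR.1 oR.2
    have hY : jetF f x = s • refl4 A x + t • refl4 B x := by
      rw [← refl4_comb, ← refl4_refl4 (jetF f), show refl4 (jetF f) = _ from funext hst]
    rw [hY, om_comb, om_comb] at oY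
    obtain ⟨p, q⟩ := oY
    have hne : s ≠ 0 ∨ t ≠ 0 := by
      by_contra hcon
      push Not at hcon
      apply hf0
      funext z
      have hz := hst (-z)
      rw [hcon.1, hcon.2] at hz
      have z0 := congrFun hz 0
      have z1 := congrFun hz 1
      simp [refl4, jetF] at z0 z1
      exact Prod.ext z0 z1
    rcases hne with h | h
    · apply mul_left_cancel₀ h
      linear_combination om (B x) (refl4 B x) * p - om (A x) (refl4 B x) * q
    · apply mul_left_cancel₀ h
      linear_combination om (A x) (refl4 A x) * q - om (B x) (refl4 A x) * p
  · intro hdet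
    have hd := hdet 0
    obtain ⟨s, t, hne, p, q⟩ : ∃ s t : ℂ, (s ≠ 0 ∨ t ≠ 0) ∧
        s * om (A 0) (refl4 A 0) + t * om (A 0) (refl4 B 0) = 0 ∧
        s * om (B 0) (refl4 A 0) + t * om (B 0) (refl4 B 0) = 0 := by
      generalize om (A 0) (refl4 A 0) = a at *
      generalize om (A 0) (refl4 B 0) = b at *
      generalize om (B 0) (refl4 A 0) = c at *
      generalize om (B 0) (refl4 B 0) = d at *
      by_cases ha : a = 0 ∧ b = 0
      · by_cases hc : c = 0 ∧ d = 0
        · exact ⟨1, 0, by simp, by simp [ha], by simp [hc]⟩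
        · refine ⟨d, -c, ?_, by simp [ha], by ring⟩
          by_contra hcon
          push Not at hcon
          exact hc ⟨by simpa using hcon.2, hcon.1⟩
      · refine ⟨b, -a, ?_, by ring, by linear_combination -hd⟩
        by_contra hcon
        push Not at hcon
        exact ha ⟨by simpa using hcon.2, hcon.1⟩
    have rA := sA.refl e1 e2
    have rB := sB.refl e1 e2
    have sZ := rA.comb rB s t
    obtain ⟨a, b, hab⟩ := lagr_sol hM sA sB sZ hAB ind 0 (by rw [om_comb]; exact p)
      (by rw [om_comb]; exact q)
    have hab' : ∀ y, s • refl4 A y + t • refl4 B y = a • A y + b • B y := hab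
    have sW := sA.comb sB a b
    obtain ⟨K1, hK1⟩ := bdd_Ici sW.cont ((tA.const_smul a).add (tB.const_smul b))
    obtain ⟨K2, hK2⟩ := bdd_Ici (sA.comb sB s t).cont ((tA.const_smul s).add (tB.const_smul t))
    refine ⟨fun x => ((a • A x + b • B x) 0, (a • A x + b • B x) 1), ?_,
      sol_of_solF s1.continuous s2.continuous sW, max K1 K2, ?_⟩
    · intro h0
      have z : ∀ x, (fun i => (a • A x + b • B x) i) 0 = 0 ∧
          (fun i => (a • A x + b • B x) i) 1 = 0 := by
        intro x
        have := congrFun h0 x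
        exact ⟨congrArg Prod.fst this, congrArg Prod.snd this⟩
      have z2 : ∀ x, (a • A x + b • B x) 2 = 0 := fun x =>
        (sW.d x 0).unique ((hasDerivAt_const x (0 : ℂ)).congr_of_eventuallyEq
          (Eventually.of_forall fun y => (z y).1))
      have z3 : ∀ x, (a • A x + b • B x) 3 = 0 := fun x =>
        (sW.d x 1).unique ((hasDerivAt_const x (0 : ℂ)).congr_of_eventuallyEq
          (Eventually.of_forall fun y => (z y).2))
      have zz : ∀ x, s • A x + t • B x = 0 := by
        intro x
        have h4 : (fun y => s • A y + t • B y) = refl4 (fun y => a • A y + b • B y) := by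
          rw [← refl4_refl4 (fun y => s • A y + t • B y)]
          congr 1
          funext y
          rw [refl4_comb, hab']
        have h5 := congrFun h4 x
        rw [show s • A x + t • B x = _ from h5]
        ext i
        fin_cases i
        · exact (z (-x)).1
        · exact (z (-x)).2
        · show -((a • A (-x) + b • B (-x)) 2) = 0
          rw [z2, neg_zero]
        · show -((a • A (-x) + b • B (-x)) 3) = 0
          rw [z3, neg_zero]
      have := ind s t zz
      tauto
    · intro x
      have key : ∀ i : Fin 4, i = 0 ∨ i = 1 → ‖(a • A x + b • B x) i‖ ≤ max K1 K2 := by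
        intro i hi
        rcases le_total 0 x with h | h
        · exact ((norm_le_pi_norm _ i).trans (hK1 x h)).trans (le_max_left _ _)
        · rw [← hab' x, ← refl4_comb]
          refine le_trans ?_ ((hK2 (-x) (by linarith)).trans (le_max_right _ _))
          rcases hi with rfl | rfl
          · exact norm_le_pi_norm (s • A (-x) + t • B (-x)) 0
          · exact norm_le_pi_norm (s • A (-x) + t • B (-x)) 1
      exact max_le (key 0 (Or.inl rfl)) (key 1 (Or.inr rfl))
end
end
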